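/- arXiv:2508.12521 — 3 statements merged into one kernel-verified Lean document; each statement's English description precedes it below -/
import Mathlib

section
/- For n ≥ 1, the family of images in DR_n of the monomials ∏_{i=1}^n x_{σ_i}^{d_i(P)} y_{σ_i}^{a_i}, as P = (π, σ) ranges over all parking functions of semilength n (with a the area sequence of π and d(P) the dinv sequence of P), forms a ℂ-vector-space basis of DR_n. -/
open MvPolynomial

/-- The area sequence of a Dyck path of semilength `n`: a tuple
`a : Fin n → ℕ` with first entry zero and `a (i+1) ≤ a i + 1`. -/
def IsDyckArea {n : ℕ} (a : Fin n → ℕ) : Prop :=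
  (∀ i : Fin n, (i : ℕ) = 0 → a i = 0) ∧
  (∀ i j : Fin n, (j : ℕ) = (i : ℕ) + 1 → a j ≤ a i + 1)

/-- A parking function of semilength `n`: a Dyck path (given by its area
sequence `a`) together with a labelling permutation `σ` whose labels increase
up each vertical wall (`σ i < σ j` whenever `j = i + 1` and `a j = a i + 1`). -/
def IsParking {n : ℕ} (a : Fin n → ℕ) (σ : Equiv.Perm (Fin n)) : Prop :=
  IsDyckArea a ∧
    ∀ i j : Fin n, (j : ℕ) = (i : ℕ) + 1 → a j = a i + 1 → σ i < σ j

/-- The dinv sequence of a parking function `(a, σ)`: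
`d i = #{ j > i | (a i = a j ∧ σ i < σ j) ∨ (a i = a j + 1 ∧ σ i > σ j) }`. -/
def dinvPark {n : ℕ} (a : Fin n → ℕ) (σ : Equiv.Perm (Fin n)) (i : Fin n) : ℕ :=
  (Finset.univ.filter (fun j : Fin n => i < j ∧
    ((a i = a j ∧ σ i < σ j) ∨ (a i = a j + 1 ∧ σ j < σ i)))).card

/-- The ideal of `ℂ[x_1,…,x_n,y_1,…,y_n]` (with `x i = X (Sum.inl i)` and
`y i = X (Sum.inr i)`) generated by all polynomials invariant under the
diagonal `S_n`-action and with zero constant term.  The diagonal coinvariant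
ring `DR_n` is the quotient by this ideal. -/
noncomputable def invIdeal (n : ℕ) : Ideal (MvPolynomial (Fin n ⊕ Fin n) ℂ) :=
  Ideal.span {f | (∀ σ : Equiv.Perm (Fin n), rename (Sum.map σ σ) f = f) ∧
    constantCoeff f = 0}

/-- The monomial `∏ i, x_{σ i}^{d_i(P)} y_{σ i}^{a_i}` attached to a parking
function `P = (a, σ)`. -/
noncomputable def parkMonomial {n : ℕ} (a : Fin n → ℕ) (σ : Equiv.Perm (Fin n)) :
    MvPolynomial (Fin n ⊕ Fin n) ℂ :=
  ∏ i : Fin n,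
    (X (Sum.inl (σ i)) : MvPolynomial (Fin n ⊕ Fin n) ℂ) ^ dinvPark a σ i *
      (X (Sum.inr (σ i)) : MvPolynomial (Fin n ⊕ Fin n) ℂ) ^ a i


namespace PM
set_option linter.unusedSectionVars false

section Box
variable {ι : Type*} [Fintype ι] [DecidableEq ι] (e : ι → ℤ) (N : ℤ)

/-- the attack window below `k` -/
def Wd (A : Finset ι) (k : ι) : Finset ι := A.filter fun l => e k - N < e l ∧ e l < e k

def Ud (A : Finset ι) (k : ι) : Finset ι := A.filter fun m => e k ≤ e m

def zz (θ : ℤ) (k : ι) : ℕ := if e k < θ then 1 else 0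

noncomputable def ff (A : Finset ι) (θ : ℤ) (k : ι) : MvPolynomial ι ℂ :=
  ∑ m ∈ Ud e A k, X m ^ zz e θ k * ∏ l ∈ Wd e N A k, (X m - X l)

def ww (A : Finset ι) (θ : ℤ) (k : ι) : ℕ := (Wd e N A k).card + zz e θ k

theorem box_aux (he : Function.Injective e) (K : Ideal (MvPolynomial ι ℂ))
    (A : Finset ι) (θ : ℤ) (hf : ∀ k ∈ A, ff e N A θ k ∈ K) :
    ∀ (c : ℕ) (j : ι), j ∈ A → (Ud e A j).card = c → (∀ k ∈ A, e j < e k → θ ≤ e k) →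
      ∀ r : Polynomial (MvPolynomial ι ℂ),
        ∑ m ∈ (Ud e A j).erase j,
          ((X m - X j) * ∏ l ∈ Wd e N A j, (X m - X l)) * r.eval (X m) ∈ K := by
  intro c
  induction c using Nat.strong_induction_on with
  | _ c ih =>
  intro j hj hc habove r
  rcases Finset.eq_empty_or_nonempty ((Ud e A j).erase j) with h0 | h0
  · rw [h0]; simp
  obtain ⟨k, hk, hkmin⟩ := Finset.exists_min_image ((Ud e A j).erase j) e h0
  have hk' := hk
  simp only [Finset.mem_erase, Ud, Finset.mem_filter] at hk
  obtain ⟨hkj, hkA, hjk⟩ := hk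
  have hlt : e j < e k := lt_of_le_of_ne hjk (fun h => hkj (he h).symm)
  have hU : (Ud e A j).erase j = Ud e A k := by
    ext m
    constructor
    · intro hm
      have := hkmin m hm
      simp only [Finset.mem_erase, Ud, Finset.mem_filter] at hm ⊢
      exact ⟨hm.2.1, this⟩
    · intro hm
      simp only [Finset.mem_erase, Ud, Finset.mem_filter] at hm ⊢
      refine ⟨?_, hm.1, by omega⟩
      rintro rfl; omega
  have hjW : j ∉ Wd e N A j := by simp [Wd]
  have hW : Wd e N A k ⊆ insert j (Wd e N A j) := by
    intro l hl
    simp only [Wd, Finset.mem_filter, Finset.mem_insert] at hl ⊢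
    by_cases hlj : l = j
    · exact Or.inl hlj
    · right
      refine ⟨hl.1, by omega, ?_⟩
      by_contra hcon
      have := hkmin l (by simp only [Finset.mem_erase, Ud, Finset.mem_filter]; exact ⟨hlj, hl.1, by omega⟩)
      omega
  have hkj' : j ∈ Ud e A j := by simp [Ud, hj]
  have hcard : (Ud e A k).card < c := by
    rw [← hU, ← hc]; exact Finset.card_erase_lt_of_mem hkj'
  set r2 : Polynomial (MvPolynomial ι ℂ) :=
    (∏ l ∈ insert j (Wd e N A j) \ Wd e N A k, (Polynomial.X - Polynomial.C (X l))) * r with hr2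
  have hsum : ∑ m ∈ (Ud e A j).erase j,
          ((X m - X j) * ∏ l ∈ Wd e N A j, (X m - X l)) * r.eval (X m)
        = ∑ m ∈ Ud e A k, (∏ l ∈ Wd e N A k, (X m - X l)) * r2.eval (X m) := by
    rw [hU]
    refine Finset.sum_congr rfl fun m _ => ?_
    rw [← Finset.prod_insert hjW (f := fun l => (X m - X l : MvPolynomial ι ℂ)),
      ← Finset.prod_sdiff hW, hr2, Polynomial.eval_mul, Polynomial.eval_prod]
    simp only [Polynomial.eval_sub, Polynomial.eval_X, Polynomial.eval_C]
    ring
  obtain ⟨r3, hr3⟩ := Polynomial.X_sub_C_dvd_sub_C_eval (a := (X k : MvPolynomial ι ℂ)) (p := r2)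
  have hr3' : ∀ m : ι, r2.eval (X m) = r2.eval (X k) + (X m - X k) * r3.eval (X m) := by
    intro m
    have := congrArg (Polynomial.eval (X m : MvPolynomial ι ℂ)) hr3
    simp only [Polynomial.eval_sub, Polynomial.eval_C, Polynomial.eval_mul, Polynomial.eval_X] at this
    linear_combination this
  have hkU : k ∈ Ud e A k := by simp [Ud, hkA]
  have hz : zz e θ k = 0 := by
    have := habove k hkA hlt
    simp only [zz]; rw [if_neg (by omega)]
  have hfin : ∑ m ∈ Ud e A k, (∏ l ∈ Wd e N A k, (X m - X l)) * r2.eval (X m)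
      = r2.eval (X k) * ff e N A θ k + ∑ m ∈ (Ud e A k).erase k,
          ((X m - X k) * ∏ l ∈ Wd e N A k, (X m - X l)) * r3.eval (X m) := by
    have h1 : ∑ m ∈ (Ud e A k).erase k,
          ((X m - X k) * ∏ l ∈ Wd e N A k, (X m - X l)) * r3.eval (X m)
        = ∑ m ∈ (Ud e A k), ((X m - X k) * ∏ l ∈ Wd e N A k, (X m - X l)) * r3.eval (X m) := by
      apply Finset.sum_subset (Finset.erase_subset _ _)
      intro x hx hx2
      have : x = k := by
        by_contra hne; exact hx2 (Finset.mem_erase.2 ⟨hne, hx⟩)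
      subst this; simp
    rw [h1, ff, hz, Finset.mul_sum, ← Finset.sum_add_distrib]
    refine Finset.sum_congr rfl fun m _ => ?_
    rw [hr3' m]; ring
  rw [hsum, hfin]
  refine K.add_mem (K.mul_mem_left _ (hf k hkA)) ?_
  exact ih _ hcard k hkA rfl (fun k' hk' h => habove k' hk' (by omega)) r3

theorem mem_of_no_vars (K : Ideal (MvPolynomial ι ℂ)) (hX : ∀ i, X i ∈ K) (p : MvPolynomial ι ℂ) :
    p - C (constantCoeff p) ∈ K := by
  induction p using MvPolynomial.induction_on with
  | C a => simp
  | add p q hp hq =>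
    have := K.add_mem hp hq
    convert this using 1
    simp only [map_add]; ring
  | mul_X p i hp => simpa using K.mul_mem_left p (hX i)

theorem box (he : Function.Injective e) (hN : 0 ≤ N) :
    ∀ (a c : ℕ) (A : Finset ι) (θ : ℤ) (K : Ideal (MvPolynomial ι ℂ)),
      A.card = a → (A.filter fun k => e k < θ).card = c →
      (∀ k ∈ A, ff e N A θ k ∈ K) → (∀ i, i ∉ A → X i ∈ K) →
      ∀ p : MvPolynomial ι ℂ, ∃ q ∈ K, p - q ∈ Submodule.span ℂ
        {f | ∃ α : ι → ℕ, (∀ i, i ∉ A → α i = 0) ∧ (∀ i ∈ A, α i < ww e N A θ i) ∧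
          f = ∏ i, X i ^ α i} := by
  intro a
  induction a using Nat.strong_induction_on with
  | _ a iha =>
  intro c
  induction c using Nat.strong_induction_on with
  | _ c ihc =>
  intro A θ K hA hc hf hX p
  rcases Finset.eq_empty_or_nonempty (A.filter fun k => e k < θ) with h0 | h0
  · rcases Finset.eq_empty_or_nonempty A with hA0 | hA0
    · subst hA0
      refine ⟨p - C (constantCoeff p), mem_of_no_vars K (fun i => hX i (by simp)) p, ?_⟩
      rw [sub_sub_cancel]
      have : C (constantCoeff p) = (constantCoeff p) • (1 : MvPolynomial ι ℂ) := by
        rw [← MvPolynomial.C_mul', mul_one]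
      rw [this]
      refine Submodule.smul_mem _ _ (Submodule.subset_span ⟨fun _ => 0, by simp, by simp, by simp⟩)
    · obtain ⟨j, hj, hjmin⟩ := Finset.exists_min_image A e hA0
      have h1 : ff e N A θ j = C (A.card : ℂ) := by
        have hU : Ud e A j = A := by
          ext m; simp only [Ud, Finset.mem_filter, and_iff_left_iff_imp]; exact hjmin m
        have hW : Wd e N A j = ∅ := by
          ext m; simp only [Wd, Finset.mem_filter, Finset.notMem_empty, iff_false]
          rintro ⟨h, _, h'⟩
          have := hjmin m h; omega
        have hz : zz e θ j = 0 := by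
          have : j ∉ A.filter fun k => e k < θ := by rw [h0]; simp
          simp only [Finset.mem_filter, not_and] at this
          simp [zz, this hj]
        simp [ff, hU, hW, hz]
      have h2 := hf j hj
      rw [h1] at h2
      have hne : (A.card : ℂ) ≠ 0 := by
        exact_mod_cast (Finset.card_pos.2 hA0).ne'
      have h3 : p ∈ K := by
        have := K.mul_mem_left (p * C ((A.card : ℂ)⁻¹)) h2
        rw [mul_assoc, ← C_mul, inv_mul_cancel₀ hne] at this
        simpa using this
      exact ⟨p, h3, by simp⟩
  · obtain ⟨j, hj, hjmax⟩ := Finset.exists_max_image _ e h0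
    have hjm := hj
    simp only [Finset.mem_filter] at hj
    obtain ⟨hjA, hjθ⟩ := hj
    have hmax : ∀ k ∈ A, e k < θ → e k ≤ e j := fun k hk hk2 =>
      hjmax k (Finset.mem_filter.2 ⟨hk, hk2⟩)
    have habove : ∀ k ∈ A, e j < e k → θ ≤ e k := by
      intro k hk h; by_contra hcon
      have := hmax k hk (by omega); omega
    have hjU : j ∈ Ud e A j := by simp [Ud, hjA]
    -- the colon step
    have hzj : zz e θ j = 1 := by simp [zz, hjθ]
    have hzj' : zz e (e j) j = 0 := by simp [zz]
    have hcol : X j * ff e N A (e j) j ∈ K := by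
      have h1 := box_aux e N he K A θ hf _ j hjA rfl habove 1
      have h2 : ∑ m ∈ (Ud e A j).erase j,
          ((X m - X j) * ∏ l ∈ Wd e N A j, (X m - X l)) * (1 : Polynomial (MvPolynomial ι ℂ)).eval (X m)
          = ∑ m ∈ (Ud e A j),
          ((X m - X j) * ∏ l ∈ Wd e N A j, (X m - X l)) := by
        simp only [Polynomial.eval_one, mul_one]
        apply Finset.sum_subset (Finset.erase_subset _ _)
        intro x hx hx2
        have : x = j := by
          by_contra hne; exact hx2 (Finset.mem_erase.2 ⟨hne, hx⟩)
        subst this; simp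
      rw [h2] at h1
      have h3 : X j * ff e N A (e j) j = ff e N A θ j - ∑ m ∈ (Ud e A j),
          ((X m - X j) * ∏ l ∈ Wd e N A j, (X m - X l)) := by
        rw [ff, ff, hzj, hzj', Finset.mul_sum, ← Finset.sum_sub_distrib]
        refine Finset.sum_congr rfl fun m _ => ?_
        ring
      rw [h3]
      exact K.sub_mem (hf j hjA) h1
    have hzk : ∀ k ∈ A, k ≠ j → zz e (e j) k = zz e θ k := by
      intro k hk hkj
      have hne : e k ≠ e j := fun h => hkj (he h)
      simp only [zz]
      by_cases h : e k < θ
      · have := hmax k hk h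
        rw [if_pos h, if_pos (by omega)]
      · rw [if_neg h, if_neg (by omega)]
    set K1 : Ideal (MvPolynomial ι ℂ) := K ⊔ Ideal.span {X j} with hK1
    have hXj1 : X j ∈ K1 := (le_sup_right : _ ≤ K1) (Ideal.subset_span rfl)
    have hK1le : K ≤ K1 := le_sup_left
    have hWj : ∀ k ∈ A.erase j, ¬ (e k - N < e j ∧ e j < e k) →
        Wd e N (A.erase j) k = Wd e N A k := by
      intro k hk h
      ext l
      simp only [Wd, Finset.mem_filter, Finset.mem_erase]
      constructor
      · rintro ⟨⟨_, h1⟩, h2⟩; exact ⟨h1, h2⟩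
      · rintro ⟨h1, h2⟩
        refine ⟨⟨?_, h1⟩, h2⟩
        rintro rfl; exact h h2
    have hWj' : ∀ k, Wd e N (A.erase j) k = (Wd e N A k).erase j := by
      intro k; simp only [Wd]; rw [Finset.filter_erase]
    have hUj' : ∀ k, Ud e (A.erase j) k = (Ud e A k).erase j := by
      intro k; simp only [Ud]; rw [Finset.filter_erase]
    have hlow : ∀ k ∈ A.erase j, ¬ (e k - N < e j ∧ e j < e k) → zz e (e j + N) k = zz e θ k := by
      intro k hk h
      have hkA := Finset.mem_of_mem_erase hk
      have hkj : e k ≠ e j := fun h => (Finset.ne_of_mem_erase hk) (he h)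
      simp only [zz]
      by_cases h1 : e k < e j
      · rw [if_pos (by omega), if_pos (by omega)]
      · have := habove k hkA (by omega)
        rw [if_neg (by omega), if_neg (by omega)]
    have hhigh : ∀ k ∈ A.erase j, (e k - N < e j ∧ e j < e k) →
        zz e (e j + N) k = 1 ∧ zz e θ k = 0 := by
      intro k hk h
      have := habove k (Finset.mem_of_mem_erase hk) h.2
      simp only [zz]
      rw [if_pos (by omega), if_neg (by omega)]; exact ⟨rfl, rfl⟩
    have hww : ∀ k ∈ A.erase j, ww e N (A.erase j) (e j + N) k = ww e N A θ k := by
      intro k hk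
      by_cases h : e k - N < e j ∧ e j < e k
      · obtain ⟨h1, h2⟩ := hhigh k hk h
        have hjW : j ∈ Wd e N A k := by simp [Wd, hjA, h]
        rw [ww, ww, h1, h2, hWj', Finset.card_erase_of_mem hjW]
        have := Finset.card_pos.2 ⟨j, hjW⟩
        omega
      · rw [ww, ww, hlow k hk h, hWj k hk h]
    have hf1 : ∀ k ∈ A.erase j, ff e N (A.erase j) (e j + N) k ∈ K1 := by
      intro k hk
      have hkA := Finset.mem_of_mem_erase hk
      have hkj : e k ≠ e j := fun h => (Finset.ne_of_mem_erase hk) (he h)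
      have hfk := hK1le (hf k hkA)
      by_cases h : e k - N < e j ∧ e j < e k
      · obtain ⟨h1, h2⟩ := hhigh k hk h
        have hjW : j ∈ Wd e N A k := by simp [Wd, hjA, h]
        have hjU : j ∉ Ud e A k := by simp [Ud, h.2]
        have : ff e N (A.erase j) (e j + N) k = ff e N A θ k
            + X j * ∑ m ∈ Ud e A k, ∏ l ∈ (Wd e N A k).erase j, (X m - X l) := by
          rw [ff, ff, h1, h2, hUj', Finset.erase_eq_of_notMem hjU, hWj', Finset.mul_sum,
            ← Finset.sum_add_distrib]
          refine Finset.sum_congr rfl fun m _ => ?_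
          rw [← Finset.mul_prod_erase _ _ hjW]; ring
        rw [this]
        exact K1.add_mem hfk (K1.mul_mem_right _ hXj1)
      · by_cases h' : e k < e j
        · have hz : zz e θ k = 1 := by simp only [zz]; rw [if_pos (by omega)]
          have hjU : j ∈ Ud e A k := by simp [Ud, hjA]; omega
          have : ff e N (A.erase j) (e j + N) k = ff e N A θ k
            - X j * ∏ l ∈ (Wd e N A k), (X j - X l) := by
            rw [ff, ff, hlow k hk h, hz, hWj k hk h, hUj',
              ← Finset.add_sum_erase _ _ hjU]
            ring
          rw [this]
          exact K1.sub_mem hfk (K1.mul_mem_right _ hXj1)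
        · have hjU : j ∉ Ud e A k := by simp [Ud]; omega
          have : ff e N (A.erase j) (e j + N) k = ff e N A θ k := by
            rw [ff, ff, hlow k hk h, hWj k hk h, hUj', Finset.erase_eq_of_notMem hjU]
          rw [this]; exact hfk
    have hX1 : ∀ i, i ∉ A.erase j → X i ∈ K1 := by
      intro i hi
      by_cases hij : i = j
      · subst hij; exact hXj1
      · exact hK1le (hX i (fun h => hi (Finset.mem_erase.2 ⟨hij, h⟩)))
    have hca : (A.erase j).card < a := by rw [← hA]; exact Finset.card_erase_lt_of_mem hjA
    obtain ⟨q1, hq1, hp1⟩ := iha _ hca _ (A.erase j) (e j + N) K1 rfl rfl hf1 hX1 p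
    obtain ⟨k0, hk0, k1, hk1, rfl⟩ := Submodule.mem_sup.1 hq1
    obtain ⟨q, rfl⟩ := Ideal.mem_span_singleton'.1 hk1
    -- second application
    let K3 : Ideal (MvPolynomial ι ℂ) :=
      { carrier := {f | X j * f ∈ K}
        add_mem' := by intro f g hf hg; simpa [mul_add] using K.add_mem hf hg
        zero_mem' := by simp
        smul_mem' := by
          intro c f hf
          have := K.mul_mem_left c hf
          simp only [Set.mem_ofPred_eq, smul_eq_mul] at *
          rwa [mul_left_comm] at this }
    have hK3 : ∀ f, f ∈ K3 ↔ X j * f ∈ K := fun f => Iff.rfl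
    have hf3 : ∀ k ∈ A, ff e N A (e j) k ∈ K3 := by
      intro k hk
      rw [hK3]
      by_cases hkj : k = j
      · subst hkj; exact hcol
      · have : ff e N A (e j) k = ff e N A θ k := by rw [ff, ff, hzk k hk hkj]
        rw [this]; exact K.mul_mem_left _ (hf k hk)
    have hX3 : ∀ i, i ∉ A → X i ∈ K3 := fun i hi => (hK3 _).2 (K.mul_mem_left _ (hX i hi))
    have hcc : (A.filter fun k => e k < e j).card < c := by
      rw [← hc]
      apply Finset.card_lt_card
      refine ⟨fun k hk => ?_, fun h => ?_⟩
      · simp only [Finset.mem_filter] at hk ⊢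
        exact ⟨hk.1, by omega⟩
      · have := h hjm; simp at this
    obtain ⟨q3, hq3, hp3⟩ := ihc _ hcc A (e j) K3 hA rfl hf3 hX3 q
    refine ⟨k0 + X j * q3, K.add_mem hk0 ((hK3 _).1 hq3), ?_⟩
    have hsplit : p - (k0 + X j * q3) = (p - (k0 + q * X j)) + X j * (q - q3) := by ring
    rw [hsplit]
    refine Submodule.add_mem _ ?_ ?_
    · refine Submodule.span_mono ?_ hp1
      rintro f ⟨α, h1, h2, rfl⟩
      refine ⟨α, fun i hi => h1 i (fun h => hi (Finset.mem_of_mem_erase h)), fun i hi => ?_, rfl⟩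
      by_cases hij : i = j
      · subst hij
        rw [h1 i (by simp)]
        simp [ww, hzj]
      · have h3 := Finset.mem_erase.2 ⟨hij, hi⟩
        rw [← hww i h3]; exact h2 i h3
    · have : ∀ g ∈ Submodule.span ℂ
        {f | ∃ α : ι → ℕ, (∀ i, i ∉ A → α i = 0) ∧ (∀ i ∈ A, α i < ww e N A (e j) i) ∧
          f = ∏ i, (X i : MvPolynomial ι ℂ) ^ α i}, X j * g ∈ Submodule.span ℂ
        {f | ∃ α : ι → ℕ, (∀ i, i ∉ A → α i = 0) ∧ (∀ i ∈ A, α i < ww e N A θ i) ∧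
          f = ∏ i, (X i : MvPolynomial ι ℂ) ^ α i} := by
        intro g hg
        induction hg using Submodule.span_induction with
        | mem f hf =>
          obtain ⟨α, h1, h2, rfl⟩ := hf
          refine Submodule.subset_span ⟨α + Pi.single j 1, ?_, ?_, ?_⟩
          · intro i hi
            have : i ≠ j := fun h => hi (h ▸ hjA)
            simp [h1 i hi, this]
          · intro i hi
            by_cases hij : i = j
            · subst hij
              have := h2 i hi
              simp only [ww, hzj, hzj', Pi.add_apply, Pi.single_eq_same] at this ⊢
              omega
            · have := h2 i hi
              simp only [ww, hzk i hi hij, Pi.add_apply, Pi.single_eq_of_ne hij] at this ⊢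
              omega
          · simp only [Pi.add_apply, pow_add, Finset.prod_mul_distrib]
            rw [mul_comm]
            congr 1
            rw [Finset.prod_eq_single j]
            · simp
            · intro b _ hb; simp [Pi.single_eq_of_ne hb]
            · simp
        | zero => simp
        | add f g _ _ hf hg => rw [mul_add]; exact Submodule.add_mem _ hf hg
        | smul a f _ hf => rw [mul_smul_comm]; exact Submodule.smul_mem _ _ hf
      exact this _ hp3

end Box
end PM


namespace PM

section ElemSym
variable {ι R : Type*} [DecidableEq ι] [CommRing R]

/-- elementary symmetric function of the `Y i`, `i ∈ G` -/
def es (Y : ι → R) (G : Finset ι) (s : ℕ) : R := ∑ S ∈ G.powersetCard s, ∏ i ∈ S, Y i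

theorem es_erase (Y : ι → R) (G : Finset ι) (k : ι) (hk : k ∈ G) (s : ℕ) :
    es Y G (s + 1) = es Y (G.erase k) (s + 1) + Y k * es Y (G.erase k) s := by
  conv_lhs => rw [← Finset.insert_erase hk]
  have hk' : k ∉ G.erase k := by simp
  rw [es, Finset.powersetCard_succ_insert hk', Finset.sum_union]
  · congr 1
    rw [Finset.sum_image, es, Finset.mul_sum]
    · refine Finset.sum_congr rfl fun S hS => ?_
      rw [Finset.prod_insert]
      intro h; exact hk' ((Finset.mem_powersetCard.1 hS).1 h)
    · intro S hS T hT h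
      have hS' : k ∉ S := fun h => hk' ((Finset.mem_powersetCard.1 hS).1 h)
      have hT' : k ∉ T := fun h => hk' ((Finset.mem_powersetCard.1 hT).1 h)
      rw [← Finset.erase_insert hS', ← Finset.erase_insert hT', h]
  · rw [Finset.disjoint_left]
    intro S hS hS2
    obtain ⟨T, hT, rfl⟩ := Finset.mem_image.1 hS2
    exact hk' ((Finset.mem_powersetCard.1 hS).1 (Finset.mem_insert_self _ _))

theorem es_mem (I : Ideal R) (φ Y : ι → R) (G : Finset ι)
    (h : ∀ j : ℕ, 1 ≤ j → ∑ k ∈ G, φ k * Y k ^ j ∈ I) :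
    ∀ (s j : ℕ), 1 ≤ j → ∑ k ∈ G, φ k * Y k ^ j * es Y (G.erase k) s ∈ I := by
  intro s
  induction s with
  | zero => intro j hj; simpa [es] using h j hj
  | succ s ih =>
    intro j hj
    have h1 : ∑ k ∈ G, φ k * Y k ^ j * es Y (G.erase k) (s + 1)
        = es Y G (s + 1) * ∑ k ∈ G, φ k * Y k ^ j
          - ∑ k ∈ G, φ k * Y k ^ (j + 1) * es Y (G.erase k) s := by
      rw [Finset.mul_sum, ← Finset.sum_sub_distrib]
      refine Finset.sum_congr rfl fun k hk => ?_
      rw [es_erase Y G k hk s]; ring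
    rw [h1]
    exact I.sub_mem (I.mul_mem_left _ (h j hj)) (ih (j + 1) (by omega))

theorem es_mem' (I : Ideal R) (φ Y : ι → R) (G : Finset ι)
    (h : ∀ j : ℕ, 1 ≤ j → ∑ k ∈ G, φ k * Y k ^ j ∈ I) (s : ℕ) :
    ∑ S ∈ G.powersetCard (s + 1), (∑ k ∈ S, φ k) * ∏ i ∈ S, Y i ∈ I := by
  have h1 := es_mem I φ Y G h s 1 le_rfl
  convert h1 using 1
  simp only [Finset.sum_mul, es, Finset.mul_sum]
  rw [Finset.sum_sigma', Finset.sum_sigma']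
  refine Finset.sum_bij' (fun x _ => ⟨x.2, x.1.erase x.2⟩) (fun x _ => ⟨insert x.1 x.2, x.1⟩) ?_ ?_ ?_ ?_ ?_
  · rintro ⟨S, k⟩ hx
    simp only [Finset.mem_sigma, Finset.mem_powersetCard] at hx ⊢
    obtain ⟨⟨h1, h2⟩, h3⟩ := hx
    refine ⟨h1 h3, Finset.erase_subset_erase _ h1, ?_⟩
    rw [Finset.card_erase_of_mem h3]; omega
  · rintro ⟨k, S⟩ hx
    simp only [Finset.mem_sigma, Finset.mem_powersetCard] at hx ⊢
    obtain ⟨h1, h2, h3⟩ := hx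
    have hk : k ∉ S := fun h => by simpa using h2 h
    refine ⟨⟨?_, ?_⟩, Finset.mem_insert_self _ _⟩
    · intro i hi
      rcases Finset.mem_insert.1 hi with rfl | hi
      · exact h1
      · exact Finset.mem_of_mem_erase (h2 hi)
    · rw [Finset.card_insert_of_notMem hk, h3]
  · rintro ⟨S, k⟩ hx
    simp only [Finset.mem_sigma, Finset.mem_powersetCard] at hx
    simp [Finset.insert_erase hx.2]
  · rintro ⟨k, S⟩ hx
    simp only [Finset.mem_sigma, Finset.mem_powersetCard] at hx
    have hk : k ∉ S := fun h => by simpa using hx.2.1 h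
    simp [Finset.erase_insert hk]
  · rintro ⟨S, k⟩ hx
    simp only [Finset.mem_sigma, Finset.mem_powersetCard] at hx
    simp only
    rw [← Finset.mul_prod_erase _ _ hx.2]; ring

end ElemSym

section Span
variable {n : ℕ}

def ee (b : Fin n → ℕ) (l : Fin n) : ℤ := n * b l - l

theorem ee_inj (b : Fin n → ℕ) : Function.Injective (ee b) := by
  intro i j h
  have hi := i.2
  have hj := j.2
  simp only [ee] at h
  have h1 : (n : ℤ) ∣ (i : ℤ) - j := ⟨b i - b j, by linarith⟩
  have h2 : (i : ℤ) - j = 0 := by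
    apply Int.eq_zero_of_abs_lt_dvd h1
    rw [abs_lt]; constructor <;> omega
  ext; omega

theorem ee_gap (b : Fin n → ℕ) (l q : Fin n) : ee b q ≠ ee b l - n := by
  intro h
  have hi := l.2
  have hj := q.2
  simp only [ee] at h
  have h1 : (n : ℤ) ∣ (l : ℤ) - q := ⟨b l - b q - 1, by linarith⟩
  have h2 : (l : ℤ) - q = 0 := by
    apply Int.eq_zero_of_abs_lt_dvd h1
    rw [abs_lt]; constructor <;> omega
  have h3 : l = q := by ext; omega
  subst h3
  have : 0 < n := by omega
  omega

def psi (b : Fin n → ℕ) (i : Fin n) : ℤ := n * (b i ^ 2 + 1) - 2 * i * b i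

theorem psi_nonneg (b : Fin n → ℕ) (i : Fin n) : 0 ≤ psi b i := by
  have h : (i : ℤ) ≤ n := by have := i.2; omega
  have h2 : (0 : ℤ) ≤ b i := by positivity
  have h3 : (0 : ℤ) ≤ n := by positivity
  simp only [psi]
  nlinarith [mul_nonneg h3 (sq_nonneg ((b i : ℤ) - 1)), mul_nonneg h2 (sub_nonneg.2 h)]

def shiftB (b : Fin n → ℕ) (U S : Finset (Fin n)) (i : Fin n) : ℕ :=
  b i - (if i ∈ U then 1 else 0) + if i ∈ S then 1 else 0

theorem psi_lt (b : Fin n → ℕ) (l : Fin n) (U S : Finset (Fin n)) (hU : ∀ p ∈ U, ee b l ≤ ee b p)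
    (hUb : ∀ p ∈ U, 1 ≤ b p)
    (hS : ∀ q ∈ S, q ∉ U → ee b q ≤ ee b l - n) (hc : S.card = U.card) (hne : S ≠ U) :
    ∑ i, psi (shiftB b U S) i < ∑ i, psi b i := by
  have key : ∑ i, psi (shiftB b U S) i < ∑ i, (psi b i +
      ((if i ∈ S then 1 else 0) - (if i ∈ U then 1 else 0)) * (2 * ee b l - n)) := by
    have hEne : ∃ q ∈ S, q ∉ U := by
      by_contra hcon
      push Not at hcon
      exact hne (Finset.eq_of_subset_of_card_le hcon hc.ge)
    obtain ⟨q, hqS, hqU⟩ := hEne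
    have hstep : ∀ i, i ∈ S → i ∉ U → psi (shiftB b U S) i < (psi b i +
      ((if i ∈ S then 1 else 0) - (if i ∈ U then 1 else 0)) * (2 * ee b l - n)) := by
      intro i h1 h2
      have h3 := hS i h1 h2
      have h4 := ee_gap b l i
      have h5 : ee b i < ee b l - n := lt_of_le_of_ne h3 h4
      simp only [psi, shiftB, h1, h2, if_true, if_false, Nat.sub_zero]
      push_cast
      simp only [ee] at h5 ⊢
      nlinarith
    refine Finset.sum_lt_sum (fun i _ => ?_) ⟨q, Finset.mem_univ _, hstep q hqS hqU⟩
    by_cases h1 : i ∈ S <;> by_cases h2 : i ∈ U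
    · have := hUb i h2
      have h3 : b i - 1 + 1 = b i := by omega
      simp [psi, shiftB, h1, h2, h3]
    · exact (hstep i h1 h2).le
    · have h3 := hU i h2
      obtain ⟨t, ht⟩ : ∃ t, b i = t + 1 := ⟨b i - 1, by have := hUb i h2; omega⟩
      simp only [psi, shiftB, h1, h2, if_true, if_false]
      simp only [ee] at h3 ⊢
      rw [ht] at h3 ⊢
      simp only [Nat.add_sub_cancel]
      push_cast at h3 ⊢
      nlinarith
    · simp [psi, shiftB, h1, h2]
  have h2 : ∑ i : Fin n, (((if i ∈ S then (1 : ℤ) else 0) - (if i ∈ U then 1 else 0)) * (2 * ee b l - n)) = 0 := by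
    rw [← Finset.sum_mul, Finset.sum_sub_distrib]
    simp [hc]
  rw [Finset.sum_add_distrib, h2, add_zero] at key
  exact key

abbrev RR (n : ℕ) := MvPolynomial (Fin n ⊕ Fin n) ℂ

noncomputable def yb (b : Fin n → ℕ) : RR n := ∏ i, X (Sum.inr i) ^ b i

noncomputable def rho (n : ℕ) : MvPolynomial (Fin n) ℂ →ₐ[ℂ] RR n := rename Sum.inl

def BoxSet (n : ℕ) : Set (RR n) := {f | ∃ b α : Fin n → ℕ,
  (∀ l, α l < ww (ee b) n Finset.univ 1 l) ∧ f = (∏ i, X (Sum.inl i) ^ α i) * yb b}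

noncomputable def Sp (n : ℕ) : Submodule ℂ (RR n) :=
  (invIdeal n).restrictScalars ℂ ⊔ Submodule.span ℂ (BoxSet n)

theorem power_sum_mem (r j : ℕ) (h : 1 ≤ r + j) :
    ∑ k : Fin n, (X (Sum.inl k) ^ r * X (Sum.inr k) ^ j : RR n) ∈ invIdeal n := by
  refine Ideal.subset_span ⟨fun σ => ?_, ?_⟩
  · simp only [map_sum, map_mul, map_pow, rename_X, Sum.map_inl, Sum.map_inr]
    exact Equiv.sum_comp σ (fun k => (X (Sum.inl k) ^ r * X (Sum.inr k) ^ j : RR n))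
  · simp only [map_sum, map_mul, map_pow, constantCoeff_X]
    refine Finset.sum_eq_zero fun k _ => ?_
    rw [← pow_add, zero_pow (by omega)]

theorem poly_sum_mem (φ : Polynomial (RR n)) (r j : ℕ) (h : 1 ≤ r + j) :
    ∑ k : Fin n, (X (Sum.inl k) ^ r * φ.eval (X (Sum.inl k)) * X (Sum.inr k) ^ j : RR n) ∈ invIdeal n := by
  simp only [Polynomial.eval_eq_sum_range, Finset.mul_sum, Finset.sum_mul]
  rw [Finset.sum_comm]
  refine Ideal.sum_mem _ fun i _ => ?_
  have := (invIdeal n).mul_mem_left (φ.coeff i) (power_sum_mem (n := n) (r + i) j (by omega))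
  convert this using 1
  rw [Finset.mul_sum]
  refine Finset.sum_congr rfl fun k _ => ?_
  ring

theorem yb_shift (b : Fin n → ℕ) (U S : Finset (Fin n)) :
    (∏ i ∈ S, X (Sum.inr i)) * yb (fun i => b i - if i ∈ U then 1 else 0) = yb (shiftB b U S) := by
  have h1 : (∏ i ∈ S, X (Sum.inr i) : RR n) = ∏ i, X (Sum.inr i) ^ (if i ∈ S then 1 else 0) := by
    rw [← Finset.prod_subset (Finset.subset_univ S)]
    · refine Finset.prod_congr rfl fun i hi => ?_
      rw [if_pos hi, pow_one]
    · intro i _ hi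
      rw [if_neg hi, pow_zero]
  rw [h1, yb, yb, ← Finset.prod_mul_distrib]
  refine Finset.prod_congr rfl fun i _ => ?_
  rw [← pow_add, add_comm, shiftB]

theorem claimB (hn : 1 ≤ n) : ∀ (M : ℕ) (b : Fin n → ℕ), (∑ i, psi b i).toNat = M →
    ∀ g : MvPolynomial (Fin n) ℂ, rho n g * yb b ∈ Sp n := by
  intro M
  induction M using Nat.strong_induction_on with
  | _ M ih =>
  intro b hM g
  have hI : ∀ f ∈ invIdeal n, f ∈ Sp n := fun f hf => (le_sup_left : _ ≤ Sp n) hf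
  let K : Ideal (MvPolynomial (Fin n) ℂ) :=
    { carrier := {g | ∀ h, rho n (h * g) * yb b ∈ Sp n}
      add_mem' := by
        intro f g hf hg h
        have := Submodule.add_mem _ (hf h) (hg h)
        rwa [← add_mul, ← map_add, ← mul_add] at this
      zero_mem' := by intro h; simp
      smul_mem' := by
        intro c f hf h
        have := hf (h * c)
        rwa [mul_assoc] at this }
  have hK : ∀ f, f ∈ K ↔ ∀ h, rho n (h * f) * yb b ∈ Sp n := fun f => Iff.rfl
  have hff : ∀ l ∈ (Finset.univ : Finset (Fin n)), ff (ee b) n Finset.univ 1 l ∈ K := by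
    intro l _
    rw [hK]
    intro h
    set W := Wd (ee b) n Finset.univ l with hW
    set U := Ud (ee b) Finset.univ l with hU
    have hWm : ∀ q, q ∈ W ↔ ee b l - n < ee b q ∧ ee b q < ee b l := by intro q; simp [hW, Wd]
    have hUm : ∀ q, q ∈ U ↔ ee b l ≤ ee b q := by intro q; simp [hU, Ud]
    let φ : Polynomial (RR n) := ∏ q ∈ W, (Polynomial.X - Polynomial.C (X (Sum.inl q)))
    have hφ : ∀ k, φ.eval (X (Sum.inl k)) = rho n (∏ q ∈ W, (X k - X q)) := by
      intro k
      simp [φ, Polynomial.eval_prod, rho]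
    have hφ0 : ∀ k ∈ W, φ.eval (X (Sum.inl k)) = 0 := by
      intro k hk
      rw [hφ, Finset.prod_eq_zero hk (by simp), map_zero]
    by_cases hb : b l = 0
    · have hz : zz (ee b) 1 l = 1 := by
        simp only [zz]; rw [if_pos]; simp only [ee, hb]; push_cast; omega
      have h1 : rho n (ff (ee b) n Finset.univ 1 l) ∈ invIdeal n := by
        have h2 := poly_sum_mem φ 1 0 le_rfl
        convert h2 using 1
        rw [ff, ← hW, ← hU, hz, map_sum]
        simp only [pow_one, pow_zero, mul_one, map_mul, ← hφ]
        rw [← Finset.sum_subset (Finset.subset_univ U)]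
        · simp [rho]
        · intro k _ hk
          rw [hφ0 k, mul_zero]
          rw [hWm]
          rw [hUm, not_le] at hk
          refine ⟨?_, hk⟩
          have := k.2
          have h0 : (0 : ℤ) ≤ n * b k := by positivity
          simp only [ee, hb]
          push_cast
          omega
      rw [map_mul, mul_comm (rho n h), mul_assoc]
      exact hI _ (Ideal.mul_mem_right _ _ h1)
    · have hUb : ∀ p ∈ U, 1 ≤ b p := by
        intro p hp
        rw [hUm] at hp
        by_contra hcon
        have h0 : b p = 0 := by omega
        have h1 : (n : ℤ) * 1 ≤ n * b l := by
          apply mul_le_mul_of_nonneg_left _ (by positivity); omega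
        simp only [ee, h0] at hp
        have := l.2
        push_cast at hp
        omega
      have hlU : l ∈ U := by rw [hUm]
      have hz : zz (ee b) 1 l = 0 := by
        have h1 : (n : ℤ) * 1 ≤ n * b l := by
          apply mul_le_mul_of_nonneg_left _ (by positivity); omega
        simp only [zz]; rw [if_neg]; simp only [ee]; have := l.2; omega
      obtain ⟨s, hs⟩ : ∃ s, U.card = s + 1 := ⟨U.card - 1, by
        have := Finset.card_pos.2 ⟨l, hlU⟩; omega⟩
      have hT := es_mem' (invIdeal n) (fun k => φ.eval (X (Sum.inl k))) (fun k => X (Sum.inr k))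
        Wᶜ (by
          intro j hj
          have h2 := poly_sum_mem φ 0 j (by omega)
          convert h2 using 1
          rw [Finset.sum_subset (Finset.subset_univ Wᶜ)]
          · simp
          · intro k _ hk
            simp only [Finset.mem_compl, not_not] at hk
            rw [hφ0 k hk, zero_mul]) s
      rw [← hs] at hT
      have hT2 := Ideal.mul_mem_left _ (rho n h * yb (fun i => b i - if i ∈ U then 1 else 0)) hT
      have hterm : ∀ S : Finset (Fin n), (rho n h * yb (fun i => b i - if i ∈ U then 1 else 0)) *
          ((∑ k ∈ S, φ.eval (X (Sum.inl k))) * ∏ i ∈ S, X (Sum.inr i)) =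
          rho n (h * ∑ k ∈ S, ∏ q ∈ W, (X k - X q)) * yb (shiftB b U S) := by
        intro S
        simp only [hφ]
        rw [← map_sum, map_mul, ← yb_shift]
        ring
      rw [Finset.mul_sum] at hT2
      have hUG : U ∈ Finset.powersetCard U.card Wᶜ := by
        rw [Finset.mem_powersetCard]
        refine ⟨fun q hq => ?_, rfl⟩
        rw [Finset.mem_compl, hWm]; rw [hUm] at hq; omega
      rw [← Finset.add_sum_erase _ _ hUG] at hT2
      have hrest : ∑ S ∈ (Finset.powersetCard U.card Wᶜ).erase U,
          (rho n h * yb (fun i => b i - if i ∈ U then 1 else 0)) *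
          ((∑ k ∈ S, φ.eval (X (Sum.inl k))) * ∏ i ∈ S, X (Sum.inr i)) ∈ Sp n := by
        refine Submodule.sum_mem _ fun S hS => ?_
        rw [hterm]
        rw [Finset.mem_erase, Finset.mem_powersetCard] at hS
        refine ih _ ?_ (shiftB b U S) rfl _
        rw [← hM]
        have := psi_lt b l U S (fun p hp => (hUm p).1 hp) hUb (by
          intro q hq hqU
          have h1 := hS.2.1 hq
          rw [Finset.mem_compl, hWm] at h1
          rw [hUm] at hqU
          omega) hS.2.2 hS.1
        have h0 : 0 ≤ ∑ i, psi (shiftB b U S) i := Finset.sum_nonneg fun i _ => psi_nonneg _ i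
        omega
      have hfin := Submodule.sub_mem _ (hI _ hT2) hrest
      rw [add_sub_cancel_right, hterm] at hfin
      have hbb : shiftB b U U = b := by
        funext i
        simp only [shiftB]
        split_ifs with hi
        · have := hUb i hi; omega
        · rfl
      rw [hbb] at hfin
      rw [ff, ← hU, ← hW, hz]
      simpa only [pow_zero, one_mul] using hfin
  obtain ⟨q, hq, hp⟩ := box (ee b) n (ee_inj b) (by positivity) _ _ Finset.univ 1 K rfl rfl hff
    (by simp) g
  have h1 := (hK q).1 hq 1
  rw [one_mul] at h1
  have h2 : ∀ f ∈ Submodule.span ℂ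
        {f | ∃ α : Fin n → ℕ, (∀ i, i ∉ (Finset.univ : Finset (Fin n)) → α i = 0) ∧
          (∀ i ∈ (Finset.univ : Finset (Fin n)), α i < ww (ee b) n Finset.univ 1 i) ∧
          f = ∏ i, (X i : MvPolynomial (Fin n) ℂ) ^ α i}, rho n f * yb b ∈ Sp n := by
    intro f hf
    induction hf using Submodule.span_induction with
    | mem f hf =>
      obtain ⟨α, _, h2, rfl⟩ := hf
      refine (le_sup_right : _ ≤ Sp n) (Submodule.subset_span ⟨b, α, fun l => h2 l (Finset.mem_univ _), ?_⟩)
      simp [rho]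
    | zero => simp
    | add f g _ _ hf hg => rw [map_add, add_mul]; exact Submodule.add_mem _ hf hg
    | smul a f _ hf => rw [map_smul, smul_mul_assoc]; exact Submodule.smul_mem _ _ hf
  have h3 := Submodule.add_mem _ (h2 _ hp) h1
  rwa [← add_mul, ← map_add, sub_add_cancel] at h3

theorem mem_Sp (hn : 1 ≤ n) (p : RR n) : p ∈ Sp n := by
  induction p using MvPolynomial.induction_on' with
  | monomial u a =>
    have := claimB hn _ (fun i => u (Sum.inr i)) rfl (C a * ∏ i, X i ^ u (Sum.inl i))
    convert this using 1
    rw [monomial_eq, Finsupp.prod_fintype _ _ (by simp), Fintype.prod_sum_type]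
    simp [rho, yb, mul_assoc]
  | add p q hp hq => exact Submodule.add_mem _ hp hq

end Span
end PM


namespace PM
set_option linter.unusedSectionVars false

section Lists
variable {ι : Type*} [DecidableEq ι] (e : ι → ℤ) (N : ℤ) (α : ι → ℕ)

def att (l j : ι) : Bool := decide (e l - N < e j ∧ e j < e l)

def Good : List ι → Prop
  | [] => True
  | l :: L => L.countP (att e N l) = α l ∧ Good L

theorem good_insert (l : ι) (L1 L2 : List ι) (h : Good e N α (L1 ++ L2))
    (hx : ∀ x ∈ L1, e x < e l) (hl : L2.countP (att e N l) = α l) :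
    Good e N α (L1 ++ l :: L2) := by
  induction L1 with
  | nil => exact ⟨hl, h⟩
  | cons x L1 ih =>
    obtain ⟨h1, h2⟩ := h
    refine ⟨?_, ih h2 (fun y hy => hx y (List.mem_cons_of_mem _ hy))⟩
    have h3 : att e N x l = false := by
      have := hx x (by simp)
      simp only [att, decide_eq_false_iff_not]; omega
    rw [← h1]
    change (L1 ++ l :: L2).countP _ = (L1 ++ L2).countP _
    simp [List.countP_append, List.countP_cons, h3]

theorem countP_split (p : ι → Bool) (k : ℕ) (L : List ι) (h : k < L.countP p) :
    ∃ L1 q L2, L = L1 ++ q :: L2 ∧ p q = true ∧ L2.countP p = k := by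
  induction L with
  | nil => simp at h
  | cons x L ih =>
    by_cases hk : k < L.countP p
    · obtain ⟨L1, q, L2, h1, h2, h3⟩ := ih hk
      exact ⟨x :: L1, q, L2, by simp [h1], h2, h3⟩
    · rw [List.countP_cons] at h
      by_cases hp : p x = true
      · rw [if_pos hp] at h
        exact ⟨[], x, L, rfl, hp, by omega⟩
      · rw [if_neg hp] at h; omega

theorem exists_list [Fintype ι] (he : Function.Injective e)
    (hα : ∀ l, α l < ww e N Finset.univ 1 l) (A : Finset ι) (hN : 0 < N) :
    (∀ l ∈ A, ∀ j, e j < e l → j ∈ A) → ∃ L : List ι, L.Nodup ∧ (∀ x, x ∈ L ↔ x ∈ A) ∧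
      Good e N α L ∧ L.IsChain (fun i j => e j < e i + N) ∧ ∀ h ∈ L.head?, e h < 1 := by
  induction A using Finset.induction_on_max_value e with
  | empty => intro _; exact ⟨[], by simp, by simp, trivial, by simp, by simp⟩
  | insert l s hls hmax ih =>
    intro hdc
    have hlt : ∀ x ∈ s, e x < e l := fun x hx =>
      lt_of_le_of_ne (hmax x hx) (fun h => hls (he h ▸ hx))
    obtain ⟨L, hnd, hmem, hgood, hchain, hhead⟩ := ih (by
      intro x hx j hj
      have h1 := hdc x (Finset.mem_insert_of_mem hx) j hj
      rcases Finset.mem_insert.1 h1 with rfl | h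
      · have := hlt x hx; omega
      · exact h)
    have hltL : ∀ x ∈ L, e x < e l := fun x hx => hlt x ((hmem x).1 hx)
    have hlL : l ∉ L := fun h => hls ((hmem l).1 h)
    have hcount : L.countP (att e N l) = (Wd e N Finset.univ l).card := by
      rw [List.countP_eq_length_filter, ← List.toFinset_card_of_nodup (hnd.filter _)]
      congr 1
      ext j
      simp only [List.mem_toFinset, List.mem_filter, att, decide_eq_true_eq, Wd, Finset.mem_filter,
        Finset.mem_univ, true_and, and_iff_right_iff_imp]
      intro hj
      rw [hmem]
      have := hdc l (Finset.mem_insert_self _ _) j hj.2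
      rcases Finset.mem_insert.1 this with rfl | h
      · omega
      · exact h
    by_cases hk : α l < L.countP (att e N l)
    · obtain ⟨L1, q, L2, rfl, hq, hc⟩ := countP_split _ _ _ hk
      simp only [att, decide_eq_true_eq] at hq
      refine ⟨(L1 ++ [q]) ++ l :: L2, ?_, ?_, ?_, ?_, ?_⟩
      · have h1 : (L1 ++ q :: L2) = (L1 ++ [q]) ++ L2 := by simp
        rw [h1] at hnd hlL
        rw [List.nodup_middle, List.nodup_cons]
        exact ⟨hlL, hnd⟩
      · intro x
        rw [Finset.mem_insert, ← hmem]
        simp; tauto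
      · apply good_insert
        · simpa using hgood
        · intro x hx; apply hltL; simp at hx ⊢; tauto
        · exact hc
      · have h1 : (L1 ++ [q]) ++ l :: L2 = L1 ++ q :: l :: L2 := by simp
        rw [h1]
        rw [List.isChain_append_cons_cons]
        rw [List.isChain_split] at hchain
        refine ⟨hchain.1, by omega, ?_⟩
        have h2 := hchain.2
        cases L2 with
        | nil => simp
        | cons y L2 =>
          rw [List.isChain_cons_cons] at h2 ⊢
          refine ⟨?_, h2.2⟩
          have := hltL y (by simp)
          omega
      · cases L1 with
        | nil => simpa using hhead
        | cons y L1 => simpa using hhead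
    · have h1 := hα l
      rw [ww, ← hcount] at h1
      have hz : zz e 1 l ≤ 1 := by simp only [zz]; split_ifs <;> omega
      have h2 : α l = L.countP (att e N l) := by omega
      have h3 : e l < 1 := by
        by_contra hcon
        have : zz e 1 l = 0 := by simp only [zz]; rw [if_neg hcon]
        omega
      refine ⟨l :: L, List.nodup_cons.2 ⟨hlL, hnd⟩, ?_, ⟨h2.symm, hgood⟩, ?_, by simpa using h3⟩
      · intro x; rw [Finset.mem_insert, List.mem_cons, hmem]
      · cases L with
        | nil => simp
        | cons y L =>
          rw [List.isChain_cons_cons]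
          refine ⟨?_, hchain⟩
          have := hltL y (by simp)
          omega

theorem countP_ofFn (p : ι → Bool) (m : ℕ) (s : Fin m → ι) :
    (List.ofFn s).countP p = (Finset.univ.filter fun j => p (s j) = true).card := by
  induction m with
  | zero => simp
  | succ m ih =>
    rw [List.ofFn_succ, List.countP_cons, ih, Fin.card_filter_univ_succ]
    split_ifs <;> rfl

theorem good_ofFn (m : ℕ) (s : Fin m → ι) (h : Good e N α (List.ofFn s)) (i : Fin m) :
    (Finset.univ.filter fun j => i < j ∧ att e N (s i) (s j) = true).card = α (s i) := by
  induction m with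
  | zero => exact i.elim0
  | succ m ih =>
    rw [List.ofFn_succ] at h
    obtain ⟨h1, h2⟩ := h
    rw [Fin.card_filter_univ_succ, if_neg (by simp)]
    induction i using Fin.cases with
    | zero =>
      rw [← h1, countP_ofFn]
      simp [Fin.succ_pos]
    | succ i =>
      have := ih (fun i => s i.succ) h2 i
      rw [← this]
      simp [Fin.succ_lt_succ_iff]

end Lists

theorem boxset_park {n : ℕ} (hn : 1 ≤ n) (f : RR n) (hf : f ∈ BoxSet n) :
    ∃ a σ, IsParking (n := n) a σ ∧ f = parkMonomial a σ := by
  obtain ⟨b, α, hα, rfl⟩ := hf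
  obtain ⟨L, hnd, hmem, hgood, hchain, hhead⟩ := exists_list (ee b) n α (ee_inj b) hα
    Finset.univ (by omega) (by simp)
  have hlen : L.length = n := by
    have h1 : L.toFinset = Finset.univ := by ext x; simp [hmem]
    rw [← List.toFinset_card_of_nodup hnd, h1]; simp
  obtain ⟨s, rfl⟩ : ∃ s : Fin n → Fin n, L = List.ofFn s := by
    refine ⟨fun i => L.get (i.cast hlen.symm), ?_⟩
    apply List.ext_get
    · simp [hlen]
    · intro i h1 h2; simp
  rw [List.nodup_ofFn] at hnd
  rw [List.isChain_ofFn] at hchain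
  let σ : Equiv.Perm (Fin n) := Equiv.ofBijective s (Finite.injective_iff_bijective.1 hnd)
  have hσ : ∀ i, σ i = s i := fun i => rfl
  have hatt : ∀ i j, att (ee b) n (s i) (s j) = true ↔
      ((b (s i) = b (s j) ∧ s i < s j) ∨ (b (s i) = b (s j) + 1 ∧ s j < s i)) := by
    intro i j
    rw [att, decide_eq_true_eq]
    simp only [ee, Fin.lt_def]
    generalize s i = x
    generalize s j = y
    have hx := x.2
    have hy := y.2
    constructor
    · rintro ⟨h1, h2⟩
      rcases lt_trichotomy (b x) (b y) with h | h | h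
      · exfalso
        have : (n : ℤ) * (b x + 1) ≤ n * b y :=
          mul_le_mul_of_nonneg_left (by omega) (by positivity)
        rw [mul_add] at this; omega
      · left; rw [h] at h2; omega
      · rcases Nat.lt_or_ge (b y + 1) (b x) with h' | h'
        · exfalso
          have : (n : ℤ) * (b y + 2) ≤ n * b x :=
            mul_le_mul_of_nonneg_left (by omega) (by positivity)
          rw [mul_add] at this; omega
        · right
          have h3 : b x = b y + 1 := by omega
          rw [h3] at h1; push_cast at h1; rw [mul_add] at h1
          omega
    · rintro (⟨h1, h2⟩ | ⟨h1, h2⟩)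
      · rw [h1]; omega
      · rw [h1]; push_cast; rw [mul_add]; omega
  refine ⟨fun i => b (s i), σ, ⟨⟨?_, ?_⟩, ?_⟩, ?_⟩
  · intro i hi
    have h1 : s i ∈ (List.ofFn s).head? := by
      obtain ⟨m, rfl⟩ : ∃ m, n = m + 1 := ⟨n - 1, by omega⟩
      have : i = 0 := by ext; simpa using hi
      subst this
      simp [List.ofFn_succ]
    have h2 := hhead _ h1
    simp only [ee] at h2
    by_contra hcon
    simp only at hcon
    have h3 : (n : ℤ) * 1 ≤ n * b (s i) :=
      mul_le_mul_of_nonneg_left (by omega) (by positivity)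
    have := (s i).2
    omega
  · intro i j hij
    have hi := i.2
    have hj := j.2
    have h1 := hchain i (by omega)
    have h2 : j = ⟨i + 1, by omega⟩ := by ext; exact hij
    simp only [Fin.eta, ← h2, ee] at h1
    by_contra hcon
    simp only at hcon
    have h3 : (n : ℤ) * (b (s i) + 2) ≤ n * b (s j) :=
      mul_le_mul_of_nonneg_left (by omega) (by positivity)
    have := (s i).2
    have := (s j).2
    rw [mul_add] at h3
    omega
  · intro i j hij hb
    have hi := i.2
    have hj := j.2
    have h1 := hchain i (by omega)
    have h2 : j = ⟨i + 1, by omega⟩ := by ext; exact hij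
    simp only [Fin.eta, ← h2, ee] at h1
    simp only at hb
    rw [hb] at h1
    push_cast at h1
    rw [mul_add] at h1
    rw [hσ, hσ, Fin.lt_def]
    omega
  · rw [parkMonomial, yb, ← Finset.prod_mul_distrib, ← Equiv.prod_comp σ]
    refine Finset.prod_congr rfl fun i _ => ?_
    have h1 := good_ofFn (ee b) n α n s hgood i
    have h2 : dinvPark (fun i => b (s i)) σ i = α (σ i) := by
      rw [hσ, ← h1, dinvPark]
      simp only [hatt, hσ]
    rw [h2, hσ]

theorem span_top {n : ℕ} (hn : 1 ≤ n) (p : RR n) : p ∈ (invIdeal n).restrictScalars ℂ ⊔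
    Submodule.span ℂ {f | ∃ a σ, IsParking (n := n) a σ ∧ f = parkMonomial a σ} := by
  have h := mem_Sp hn p
  refine (sup_le_sup_left (Submodule.span_mono ?_) _ : Sp n ≤ _) h
  exact fun f hf => boxset_park hn f hf

end PM


namespace PM

section AbstractAffine
variable {A : Type*} [Ring A] (n : ℕ) (S : ℕ → A) (Om : A)

/-- `S_{k-1} ⋯ S_0` -/
def wd : ℕ → A
  | 0 => 1
  | k + 1 => S k * wd k

/-- `S_k ⋯ S_1` -/
def wd' : ℕ → A
  | 0 => 1
  | k + 1 => S (k + 1) * wd' k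

def TT : ℕ → A
  | 0 => Om * wd S (n - 1)
  | k + 1 => S k * TT k * S k

structure AffRel : Prop where
  sq : ∀ i, i + 1 < n → S i * S i = 1
  braid : ∀ i, i + 2 < n → S i * S (i + 1) * S i = S (i + 1) * S i * S (i + 1)
  far : ∀ i j, i + 1 < j → j + 1 < n → S i * S j = S j * S i
  om1 : ∀ j, j + 2 < n → S (j + 1) * Om = Om * S j
  om2 : 2 ≤ n → S 0 * (Om * Om) = Om * Om * S (n - 2)

variable {n S Om}

theorem wd_far (h : AffRel n S Om) (k : ℕ) : ∀ j, k < j → j + 1 < n → S j * wd S k = wd S k * S j := by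
  induction k with
  | zero => intro j _ _; simp [wd]
  | succ k ih =>
    intro j hj hn
    rw [wd, ← mul_assoc, ← h.far k j hj hn, mul_assoc, ih j (by omega) hn, mul_assoc]

theorem wd_shift (h : AffRel n S Om) (k : ℕ) : ∀ j, j + 1 < k → k < n → S j * wd S k = wd S k * S (j + 1) := by
  induction k with
  | zero => intro j hj; omega
  | succ k ih =>
    intro j hj hn
    rcases Nat.lt_or_ge (j + 1) k with h1 | h1
    · rw [wd, ← mul_assoc, h.far j k h1 hn, mul_assoc, ih j h1 (by omega), mul_assoc]
    · obtain rfl : k = j + 1 := by omega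
      simp only [wd]
      rw [← mul_assoc, ← mul_assoc, h.braid j hn, mul_assoc _ (S (j+1)), wd_far h j (j+1) (by omega) hn]
      simp only [mul_assoc]

theorem T0_comm (h : AffRel n S Om) (j : ℕ) (hj : j + 2 < n) : S (j + 1) * TT n S Om 0 = TT n S Om 0 * S (j + 1) := by
  rw [TT, ← mul_assoc, h.om1 j hj, mul_assoc, wd_shift h (n - 1) j (by omega) (by omega), mul_assoc]

theorem wd'_Om (h : AffRel n S Om) (k : ℕ) (hk : k + 1 < n) : wd' S k * Om = Om * wd S k := by
  induction k with
  | zero => simp [wd, wd']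
  | succ k ih =>
    rw [wd, wd', mul_assoc, ih (by omega), ← mul_assoc, h.om1 k (by omega), mul_assoc]

theorem wd_S0 (h : AffRel n S Om) (k : ℕ) (hk : k + 1 < n) : wd S (k + 1) = wd' S k * S 0 := by
  induction k with
  | zero => simp [wd, wd']
  | succ k ih => rw [wd, ih (by omega), wd', mul_assoc]

theorem wd_wd' (h : AffRel n S Om) (k : ℕ) : ∀ i, k < i → i < n → wd S i * wd' S k = wd S k * wd S i := by
  induction k with
  | zero => intro i _ _; simp [wd, wd']
  | succ k ih =>
    intro i hi hn
    rw [wd, wd', ← mul_assoc, ← wd_shift h i k hi hn, mul_assoc, ih i (by omega) hn, mul_assoc]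

theorem T01 (h : AffRel n S Om) (hn : 2 ≤ n) : Commute (TT n S Om 0) (TT n S Om 1) := by
  obtain ⟨k, rfl⟩ : ∃ k, n = k + 2 := ⟨n - 2, by omega⟩
  set T := TT (k + 2) S Om 0 with hT
  have h1 : TT (k + 2) S Om 1 = S 0 * T * S 0 := rfl
  have h0 := h.sq 0 (by omega)
  have hY : T * S 0 = Om * wd' S k := by
    rw [hT, TT, show k + 2 - 1 = k + 1 from rfl, wd_S0 h k (by omega), mul_assoc, mul_assoc, h0, mul_one]
  have hYY : (T * S 0) * (T * S 0) = Om * Om * (wd S k * wd' S k) := by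
    rw [hY, mul_assoc Om (wd' S k), ← mul_assoc (wd' S k), wd'_Om h k (by omega)]
    simp only [mul_assoc]
  have h2 : S 0 * ((T * S 0) * (T * S 0)) = ((T * S 0) * (T * S 0)) * S 0 := by
    rw [hYY, ← mul_assoc, h.om2 hn, show k + 2 - 2 = k from rfl, mul_assoc _ (S k), ← mul_assoc (S k),
      show S k * wd S k = wd S (k + 1) from rfl, wd_wd' h k (k + 1) (by omega) (by omega),
      wd_S0 h k (by omega)]
    simp only [mul_assoc]
  have h3 : T * (S 0 * T * S 0) = S 0 * T * S 0 * T := by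
    have h4 : S 0 * (((T * S 0) * (T * S 0)) * S 0) = S 0 * T * S 0 * T := by
      have : S 0 * (((T * S 0) * (T * S 0)) * S 0) = S 0 * T * S 0 * T * (S 0 * S 0) := by
        simp only [mul_assoc]
      rw [this, h0, mul_one]
    rw [← h4, ← h2, ← mul_assoc (S 0) (S 0), h0, one_mul]
    simp only [mul_assoc]
  rw [h1]; exact h3

theorem ST_gt (h : AffRel n S Om) (j : ℕ) : ∀ i, j < i → i + 1 < n → Commute (S i) (TT n S Om j) := by
  induction j with
  | zero =>
    intro i hi hn
    obtain ⟨k, rfl⟩ : ∃ k, i = k + 1 := ⟨i - 1, by omega⟩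
    exact T0_comm h k hn
  | succ j ih =>
    intro i hi hn
    have h1 : Commute (S i) (S j) := (h.far j i hi hn).symm
    exact (h1.mul_right (ih i (by omega) hn)).mul_right h1

theorem ST_lt (h : AffRel n S Om) (j : ℕ) : ∀ i, i + 1 < j → j < n → Commute (S i) (TT n S Om j) := by
  induction j with
  | zero => intro i hi; omega
  | succ j ih =>
    intro i hi hn
    rcases Nat.lt_or_ge (i + 1) j with h1 | h1
    · have h2 : Commute (S i) (S j) := h.far i j h1 hn
      exact (h2.mul_right (ih i h1 (by omega))).mul_right h2
    · obtain rfl : j = i + 1 := by omega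
      have hb := h.braid i hn
      have hc : S (i + 1) * TT n S Om i = TT n S Om i * S (i + 1) := ST_gt h i (i + 1) (by omega) hn
      change S i * (S (i + 1) * (S i * TT n S Om i * S i) * S (i + 1)) =
        (S (i + 1) * (S i * TT n S Om i * S i) * S (i + 1)) * S i
      set T := TT n S Om i
      calc S i * (S (i + 1) * (S i * T * S i) * S (i + 1))
          = (S i * S (i + 1) * S i) * T * S i * S (i + 1) := by simp only [mul_assoc]
        _ = S (i + 1) * S i * (S (i + 1) * T) * S i * S (i + 1) := by rw [hb]; simp only [mul_assoc]
        _ = S (i + 1) * S i * T * (S (i + 1) * S i * S (i + 1)) := by rw [hc]; simp only [mul_assoc]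
        _ = (S (i + 1) * (S i * T * S i) * S (i + 1)) * S i := by rw [← hb]; simp only [mul_assoc]

theorem TT_comm (h : AffRel n S Om) (i : ℕ) : ∀ j, i < j → j < n → Commute (TT n S Om i) (TT n S Om j) := by
  induction i with
  | zero =>
    intro j
    induction j with
    | zero => intro h; omega
    | succ j ih =>
      intro _ hn
      rcases Nat.eq_zero_or_pos j with rfl | hj
      · exact T01 h (by omega)
      · have h1 : Commute (TT n S Om 0) (S j) := (ST_gt h 0 j hj hn).symm
        exact (h1.mul_right (ih hj (by omega))).mul_right h1
  | succ i ih =>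
    intro j hj hn
    have h1 : Commute (S i) (TT n S Om j) := ST_lt h j i hj hn
    exact (h1.mul_left (ih j (by omega) hn)).mul_left h1

end AbstractAffine

section Antisym
variable {A : Type*} [Ring A] (S : ℕ → A)

/-- signed coset representatives -/
def Dj (k : ℕ) : ℕ → A
  | 0 => 1
  | j + 1 => -(S (k - j) * Dj k j)

def EE : ℕ → A
  | 0 => 1
  | k + 1 => (∑ j ∈ Finset.range (k + 2), Dj S k j) * EE k

variable {S} {n : ℕ} {Om : A}

theorem Dj_low (h : AffRel n S Om) (k j i : ℕ) (hk : k + 1 < n) (hj : j ≤ k + 1) (hi : i + j < k) :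
    S i * Dj S k j = Dj S k j * S i := by
  induction j with
  | zero => simp [Dj]
  | succ j ih =>
    rw [Dj, mul_neg, neg_mul, ← mul_assoc, h.far i (k - j) (by omega) (by omega), mul_assoc,
      ih (by omega) (by omega), mul_assoc]

theorem Dj_high (h : AffRel n S Om) (k j i : ℕ) (hk : k + 1 < n) (hj : j ≤ k + 1) (hi : k + 1 < i + j) (hik : i ≤ k) :
    S i * Dj S k j = Dj S k j * S (i - 1) := by
  induction j with
  | zero => omega
  | succ j ih =>
    rcases Nat.lt_or_ge (k + 1) (i + j) with h1 | h1
    · rw [Dj, mul_neg, neg_mul, ← mul_assoc, ← h.far (k - j) i (by omega) (by omega), mul_assoc,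
        ih (by omega) h1, mul_assoc]
    · -- i = k - j + 1
      obtain ⟨t, rfl⟩ : ∃ t, i = t + 1 := ⟨i - 1, by omega⟩
      obtain ⟨r, rfl⟩ : ∃ r, j = r + 1 := ⟨j - 1, by omega⟩
      have e1 : k - (r + 1) = t := by omega
      have e2 : k - r = t + 1 := by omega
      simp only [Dj, e1, e2, Nat.add_sub_cancel, mul_neg, neg_neg, neg_mul]
      have := Dj_low h k r t hk (by omega) (by omega)
      rw [← mul_assoc, ← mul_assoc, ← h.braid t (by omega), mul_assoc _ (S t), this]
      simp only [mul_assoc]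

theorem S_EE (h : AffRel n S Om) (k : ℕ) : k < n → ∀ i, i < k → S i * EE S k = - EE S k := by
  induction k with
  | zero => intro _ i hi; omega
  | succ k ih =>
    intro hk i hi
    have ih' := ih (by omega)
    rw [EE, ← mul_assoc, Finset.mul_sum, Finset.sum_mul, Finset.sum_mul, ← Finset.sum_neg_distrib]
    -- involution exchanging k - i and k - i + 1
    refine Finset.sum_bij' (fun j _ => Equiv.swap (k - i) (k - i + 1) j)
      (fun j _ => Equiv.swap (k - i) (k - i + 1) j) ?_ ?_ ?_ ?_ ?_
    · intro j hj
      simp only [Finset.mem_range] at hj ⊢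
      rw [Equiv.swap_apply_def]; split_ifs <;> omega
    · intro j hj
      simp only [Finset.mem_range] at hj ⊢
      rw [Equiv.swap_apply_def]; split_ifs <;> omega
    · intro j _; simp
    · intro j _; simp
    · intro j hj
      simp only [Finset.mem_range] at hj
      rcases Nat.lt_trichotomy (i + j) k with h1 | h1 | h1
      · rw [Equiv.swap_apply_of_ne_of_ne (by omega) (by omega), Dj_low h k j i (by omega) (by omega) h1,
          mul_assoc, ih' i (by omega), mul_neg]
      · obtain rfl : j = k - i := by omega
        rw [Equiv.swap_apply_left, Dj, show k - (k - i) = i by omega, neg_mul, neg_neg]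
      · rcases Nat.lt_or_ge (k + 1) (i + j) with h2 | h2
        · rw [Equiv.swap_apply_of_ne_of_ne (by omega) (by omega),
            Dj_high h k j i (by omega) (by omega) h2 (by omega),
            mul_assoc, ih' (i - 1) (by omega), mul_neg]
        · obtain rfl : j = k - i + 1 := by omega
          rw [Equiv.swap_apply_right, Dj, show k - (k - i) = i by omega, mul_neg, ← mul_assoc,
            h.sq i (by omega), one_mul, neg_mul]

end Antisym
end PM


namespace PM

section Rep

/-- windows of affine permutations -/
abbrev WW (n : ℕ) : Type := {w : Fin n → ℤ //
  (∀ i j, (n : ℤ) ∣ w i - w j → i = j) ∧ ∑ i, w i = ∑ i : Fin n, (i : ℤ)}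

variable {n : ℕ}

def swapW (w : WW n) (p q : Fin n) : WW n :=
  ⟨fun i => w.1 (Equiv.swap p q i), fun i j h => by simpa using w.2.1 _ _ h, by
    exact (Equiv.sum_comp (Equiv.swap p q) w.1).trans w.2.2⟩

theorem rot_mod (i : Fin n) : (n : ℤ) ∣ (i : ℤ) - ((finRotate n).symm i : ℤ) - 1 := by
  obtain ⟨k, rfl⟩ := (finRotate n).surjective i
  rw [Equiv.symm_apply_apply]
  cases n with
  | zero => exact k.elim0
  | succ n =>
    by_cases h : k = Fin.last n
    · subst h; rw [finRotate_last]; refine ⟨-1, ?_⟩; push_cast; simp; ring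
    · have h1 : (k : ℕ) < n := by
        have := k.2
        have h2 : (k : ℕ) ≠ n := fun h' => h (by ext; simpa using h')
        omega
      rw [coe_finRotate_of_ne_last h]
      refine ⟨0, ?_⟩; push_cast; ring

def OmW (w : WW n) : WW n :=
  ⟨fun i => w.1 ((finRotate n).symm i) + ((i : ℤ) - ((finRotate n).symm i : Fin n)), by
    intro i j h
    have h1 := rot_mod i
    have h2 := rot_mod j
    have h3 : (n : ℤ) ∣ w.1 ((finRotate n).symm i) - w.1 ((finRotate n).symm j) := by
      obtain ⟨a, ha⟩ := h
      obtain ⟨b, hb⟩ := h1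
      obtain ⟨c, hc⟩ := h2
      refine ⟨a - (b - c), ?_⟩
      simp only at ha
      linarith
    exact (finRotate n).symm.injective (w.2.1 _ _ h3), by
    rw [Finset.sum_add_distrib, Finset.sum_sub_distrib, Equiv.sum_comp (finRotate n).symm w.1,
      Equiv.sum_comp (finRotate n).symm (fun i : Fin n => (i : ℤ)), w.2.2, sub_self, add_zero]⟩

def OmWi (w : WW n) : WW n :=
  ⟨fun i => w.1 ((finRotate n) i) + ((i : ℤ) - ((finRotate n) i : Fin n)), by
    intro i j h
    have h1 := rot_mod (finRotate n i)
    have h2 := rot_mod (finRotate n j)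
    rw [Equiv.symm_apply_apply] at h1 h2
    have h3 : (n : ℤ) ∣ w.1 ((finRotate n) i) - w.1 ((finRotate n) j) := by
      obtain ⟨a, ha⟩ := h
      obtain ⟨b, hb⟩ := h1
      obtain ⟨c, hc⟩ := h2
      refine ⟨a + (b - c), ?_⟩
      simp only at ha
      linarith
    exact (finRotate n).injective (w.2.1 _ _ h3), by
    rw [Finset.sum_add_distrib, Finset.sum_sub_distrib, Equiv.sum_comp (finRotate n) w.1,
      Equiv.sum_comp (finRotate n) (fun i : Fin n => (i : ℤ)), w.2.2, sub_self, add_zero]⟩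

theorem OmW_OmWi (w : WW n) : OmW (OmWi w) = w := by
  apply Subtype.ext
  funext i
  simp only [OmW, OmWi, Equiv.apply_symm_apply]
  ring

abbrev VV (n : ℕ) := WW n →₀ ℂ

noncomputable def bas (w : WW n) : VV n := Finsupp.single w 1

noncomputable def dd (w : WW n) (p q : Fin n) : ℂ := (w.1 p : ℂ) - w.1 q

noncomputable def mm (n : ℕ) : ℂ := n + 1

noncomputable def Xop (i : Fin n) : Module.End ℂ (VV n) :=
  Finsupp.linearCombination ℂ (fun w : WW n => (w.1 i : ℂ) • bas w)

noncomputable def Sop (p q : Fin n) : Module.End ℂ (VV n) :=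
  Finsupp.linearCombination ℂ (fun w : WW n =>
    (-(mm n / dd w p q)) • bas w + (1 + mm n / dd w p q) • bas (swapW w p q))

noncomputable def Omop (n : ℕ) : Module.End ℂ (VV n) :=
  Finsupp.linearCombination ℂ (fun w : WW n => bas (OmW w))

theorem Xop_bas (i : Fin n) (w : WW n) : Xop i (bas w) = (w.1 i : ℂ) • bas w := by
  simp [Xop, bas]

theorem Sop_bas (p q : Fin n) (w : WW n) : Sop p q (bas w) =
    (-(mm n / dd w p q)) • bas w + (1 + mm n / dd w p q) • bas (swapW w p q) := by
  rw [Sop, bas, Finsupp.linearCombination_single, one_smul]; rfl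

theorem Omop_bas (w : WW n) : Omop n (bas w) = bas (OmW w) := by
  rw [Omop, bas, Finsupp.linearCombination_single, one_smul]

theorem end_ext {f g : Module.End ℂ (VV n)} (h : ∀ w, f (bas w) = g (bas w)) : f = g := by
  apply Finsupp.lhom_ext'
  intro w
  apply LinearMap.ext_ring
  exact h w

theorem dd_ne (w : WW n) {p q : Fin n} (h : p ≠ q) : dd w p q ≠ 0 := by
  intro h0
  apply h
  apply w.2.1
  have : (w.1 p : ℂ) = w.1 q := sub_eq_zero.1 h0
  have h2 : w.1 p = w.1 q := by exact_mod_cast this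
  rw [h2]; simp

theorem swapW_swapW (w : WW n) (p q : Fin n) : swapW (swapW w p q) p q = w := by
  apply Subtype.ext; funext i; simp [swapW]

theorem dd_swap (w : WW n) (p q r s : Fin n) :
    dd (swapW w p q) r s = dd w (Equiv.swap p q r) (Equiv.swap p q s) := rfl

theorem Sop_sq {p q : Fin n} (h : p ≠ q) : Sop p q * Sop p q = 1 := by
  apply end_ext
  intro w
  have hd := dd_ne w h
  rw [Module.End.mul_apply, Sop_bas, map_add, map_smul, map_smul, Sop_bas, Sop_bas, dd_swap, swapW_swapW,
    Equiv.swap_apply_left, Equiv.swap_apply_right]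
  have h1 : dd w q p = - dd w p q := by simp [dd]
  rw [h1, Module.End.one_apply]
  match_scalars
  · field_simp; ring
  · field_simp; ring

theorem Sop_far {p q r s : Fin n} (h1 : p ≠ r) (h2 : p ≠ s) (h3 : q ≠ r) (h4 : q ≠ s) :
    Sop p q * Sop r s = Sop r s * Sop p q := by
  apply end_ext
  intro w
  simp only [Module.End.mul_apply, Sop_bas, map_add, map_smul, dd_swap,
    Equiv.swap_apply_of_ne_of_ne h1 h2, Equiv.swap_apply_of_ne_of_ne h3 h4,
    Equiv.swap_apply_of_ne_of_ne h1.symm h3.symm, Equiv.swap_apply_of_ne_of_ne h2.symm h4.symm]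
  have h5 : swapW (swapW w r s) p q = swapW (swapW w p q) r s := by
    apply Subtype.ext; funext i
    simp only [swapW]
    have : Equiv.swap r s * Equiv.swap p q = Equiv.swap p q * Equiv.swap r s :=
      (Equiv.Perm.Disjoint.commute (by
        intro x
        by_cases hx : x = r ∨ x = s
        · right
          rcases hx with rfl | rfl
          · exact Equiv.swap_apply_of_ne_of_ne h1.symm h3.symm
          · exact Equiv.swap_apply_of_ne_of_ne h2.symm h4.symm
        · left; push Not at hx; exact Equiv.swap_apply_of_ne_of_ne hx.1 hx.2)).eq
    exact congrArg (fun t : Equiv.Perm (Fin n) => w.1 (t i)) this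
  rw [h5]
  module

theorem Sop_braid {p q r : Fin n} (h1 : p ≠ q) (h2 : p ≠ r) (h3 : q ≠ r) :
    Sop p q * Sop q r * Sop p q = Sop q r * Sop p q * Sop q r := by
  apply end_ext
  intro w
  have hpq := dd_ne w h1
  have hpr := dd_ne w h2
  have hqr := dd_ne w h3
  have e1 : dd w q p = - dd w p q := by simp [dd]
  have e2 : dd w r p = - dd w p r := by simp [dd]
  have e3 : dd w r q = - dd w q r := by simp [dd]
  have e4 : dd w p r = dd w p q + dd w q r := by simp [dd]
  have s1 : swapW (swapW (swapW w p q) q r) p q = swapW (swapW (swapW w q r) p q) q r := by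
    apply Subtype.ext; funext i
    simp only [swapW]
    have : Equiv.swap p q * Equiv.swap q r * Equiv.swap p q = Equiv.swap q r * Equiv.swap p q * Equiv.swap q r := by
      rw [Equiv.swap_mul_swap_mul_swap h1 h2, Equiv.swap_comm p q, Equiv.swap_comm q r,
        Equiv.swap_mul_swap_mul_swap h3.symm h2.symm, Equiv.swap_comm]
    exact congrArg (fun t : Equiv.Perm (Fin n) => w.1 (t i)) this
  simp only [Module.End.mul_apply, Sop_bas, map_add, map_smul, dd_swap, swapW_swapW,
    Equiv.swap_apply_left, Equiv.swap_apply_right,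
    Equiv.swap_apply_of_ne_of_ne h2.symm h3.symm, Equiv.swap_apply_of_ne_of_ne h1 h2]
  rw [s1]
  simp only [e1, e2, e3]
  rw [e4] at hpr ⊢
  generalize dd w p q = x at *
  generalize dd w q r = y at *
  match_scalars <;> field_simp <;> ring

theorem XS_same {p q : Fin n} (h : p ≠ q) : Xop p * Sop p q = Sop p q * Xop q - mm n • 1 := by
  apply end_ext
  intro w
  have hd := dd_ne w h
  simp only [Module.End.mul_apply, LinearMap.sub_apply, LinearMap.smul_apply, Module.End.one_apply,
    Sop_bas, Xop_bas, map_add, map_smul]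
  have e : (swapW w p q).1 p = w.1 q := by simp [swapW]
  have e2 : (w.1 p : ℂ) = w.1 q + dd w p q := by simp [dd]
  rw [e, e2]
  match_scalars
  · field_simp; ring
  · field_simp

theorem XS_far {p q r : Fin n} (h1 : r ≠ p) (h2 : r ≠ q) : Xop r * Sop p q = Sop p q * Xop r := by
  apply end_ext
  intro w
  have e : (swapW w p q).1 r = w.1 r := by simp [swapW, Equiv.swap_apply_of_ne_of_ne h1 h2]
  simp only [Module.End.mul_apply, Sop_bas, Xop_bas, map_add, map_smul, e]
  module

theorem XX_comm (p q : Fin n) : Xop p * Xop q = Xop q * Xop p := by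
  apply end_ext
  intro w
  simp only [Module.End.mul_apply, Xop_bas, map_smul]
  module

theorem X_Om (i : Fin n) : Xop i * Omop n = Omop n * (Xop ((finRotate n).symm i) +
    ((i : ℂ) - ((finRotate n).symm i : Fin n)) • 1) := by
  apply end_ext
  intro w
  simp only [Module.End.mul_apply, LinearMap.add_apply, LinearMap.smul_apply, Module.End.one_apply,
    Omop_bas, Xop_bas, map_add, map_smul]
  rw [← add_smul]
  congr 1
  simp [OmW]

theorem S_Om {p q p' q' : Fin n} (hp : (finRotate n).symm p = p') (hq : (finRotate n).symm q = q')
    (h : (p : ℤ) - p' = q - q') :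
    Sop p q * Omop n = Omop n * Sop p' q' := by
  subst hp hq
  apply end_ext
  intro w
  simp only [Module.End.mul_apply, Omop_bas, Sop_bas, map_add, map_smul]
  have e1 : dd (OmW w) p q = dd w ((finRotate n).symm p) ((finRotate n).symm q) := by
    have : (OmW w).1 p - (OmW w).1 q = w.1 ((finRotate n).symm p) - w.1 ((finRotate n).symm q) := by
      simp only [OmW]; linarith
    simp only [dd]
    exact_mod_cast this
  have e2 : swapW (OmW w) p q = OmW (swapW w ((finRotate n).symm p) ((finRotate n).symm q)) := by
    apply Subtype.ext; funext i
    simp only [swapW, OmW]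
    have e3 : ∀ j, (finRotate n).symm (Equiv.swap p q j) =
        Equiv.swap ((finRotate n).symm p) ((finRotate n).symm q) ((finRotate n).symm j) := by
      intro j
      have := Equiv.swap_apply_apply (finRotate n).symm p q
      rw [this]; simp only [Equiv.Perm.mul_apply, Equiv.Perm.inv_def, Equiv.symm_apply_apply]
    rw [e3]
    congr 1
    rw [← e3]
    rw [Equiv.swap_apply_def]
    split_ifs with h1 h2
    · subst h1; linarith
    · subst h2; linarith
    · rfl
  rw [e1, e2]

theorem S_Om2 {p q p' q' : Fin n} (hp : (finRotate n).symm ((finRotate n).symm p) = p')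
    (hq : (finRotate n).symm ((finRotate n).symm q) = q')
    (h : (p : ℤ) - p' = q - q') :
    Sop p q * (Omop n * Omop n) = Omop n * Omop n * Sop p' q' := by
  subst hp hq
  set ρ := (finRotate n).symm with hρ
  apply end_ext
  intro w
  simp only [Module.End.mul_apply, Omop_bas, Sop_bas, map_add, map_smul]
  have e0 : ∀ (w : WW n) i, (OmW (OmW w)).1 i = w.1 (ρ (ρ i)) + ((i : ℤ) - (ρ (ρ i) : Fin n)) := by
    intro w i; simp only [OmW, ← hρ]; ring
  have e1 : dd (OmW (OmW w)) p q = dd w (ρ (ρ p)) (ρ (ρ q)) := by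
    have : (OmW (OmW w)).1 p - (OmW (OmW w)).1 q = w.1 (ρ (ρ p)) - w.1 (ρ (ρ q)) := by
      rw [e0, e0]; linarith
    simp only [dd]
    exact_mod_cast this
  have e2 : swapW (OmW (OmW w)) p q = OmW (OmW (swapW w (ρ (ρ p)) (ρ (ρ q)))) := by
    apply Subtype.ext; funext i
    rw [e0]
    change (OmW (OmW w)).1 (Equiv.swap p q i) = _
    rw [e0]
    simp only [swapW]
    have e3 : ∀ j, ρ (ρ (Equiv.swap p q j)) =
        Equiv.swap (ρ (ρ p)) (ρ (ρ q)) (ρ (ρ j)) := by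
      intro j
      rw [Equiv.swap_apply_apply ρ, Equiv.swap_apply_apply ρ]; simp only [Equiv.Perm.mul_apply, Equiv.Perm.inv_def, Equiv.symm_apply_apply]
    rw [e3]
    congr 1
    rw [← e3]
    rw [Equiv.swap_apply_def]
    split_ifs with h1 h2
    · subst h1; linarith
    · subst h2; linarith
    · rfl
  rw [e1, e2]

end Rep
end PM


namespace PM

set_option linter.unusedSectionVars false
section Rep2
variable {n : ℕ} [NeZero n]

def pt (n : ℕ) [NeZero n] (k : ℕ) : Fin n := Fin.ofNat n k

theorem pt_val {k : ℕ} (h : k < n) : (pt n k : ℕ) = k := by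
  simp [pt, Nat.mod_eq_of_lt h]

theorem pt_self (i : Fin n) : pt n i = i := Fin.ext (pt_val i.2)

theorem pt_ne {k l : ℕ} (hk : k < n) (hl : l < n) (h : k ≠ l) : pt n k ≠ pt n l := by
  intro h'
  have := congrArg Fin.val h'
  rw [pt_val hk, pt_val hl] at this
  exact h this

noncomputable def Sn (n : ℕ) [NeZero n] (k : ℕ) : Module.End ℂ (VV n) := Sop (pt n k) (pt n (k + 1))

theorem rho_eq {i j : Fin n} (h : (n : ℤ) ∣ (i : ℤ) - j - 1) : (finRotate n).symm i = j := by
  have h1 := rot_mod i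
  have h2 : (n : ℤ) ∣ ((finRotate n).symm i : ℤ) - j := by
    obtain ⟨a, ha⟩ := h
    obtain ⟨b, hb⟩ := h1
    exact ⟨a - b, by linarith⟩
  have b1 := ((finRotate n).symm i).2
  have b2 := j.2
  have h3 := Int.eq_zero_of_abs_lt_dvd h2 (by rw [abs_lt]; omega)
  apply Fin.ext; omega

theorem rho_succ {k : ℕ} (h : k + 1 < n) : (finRotate n).symm (pt n (k + 1)) = pt n k := by
  apply rho_eq
  rw [pt_val h, pt_val (by omega)]
  simp

theorem rho_zero : (finRotate n).symm (pt n 0) = pt n (n - 1) := by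
  have := NeZero.pos n
  apply rho_eq
  rw [pt_val (by omega), pt_val (by omega)]
  refine ⟨-1, ?_⟩
  push_cast [this]; ring

theorem affRel (n : ℕ) [NeZero n] : AffRel n (Sn n) (Omop n) where
  sq i hi := Sop_sq (pt_ne (by omega) (by omega) (by omega))
  braid i hi := Sop_braid (pt_ne (by omega) (by omega) (by omega)) (pt_ne (by omega) (by omega) (by omega))
    (pt_ne (by omega) (by omega) (by omega))
  far i j h1 h2 := Sop_far (pt_ne (by omega) (by omega) (by omega)) (pt_ne (by omega) (by omega) (by omega))
    (pt_ne (by omega) (by omega) (by omega)) (pt_ne (by omega) (by omega) (by omega))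
  om1 j h := by
    apply S_Om (rho_succ (by omega)) (rho_succ (by omega))
    rw [pt_val (by omega), pt_val (by omega), pt_val (by omega)]
    push_cast; ring
  om2 h := by
    have e1 : (finRotate n).symm ((finRotate n).symm (pt n 0)) = pt n (n - 2) := by
      rw [rho_zero]
      have : n - 1 = (n - 2) + 1 := by omega
      rw [this]; exact rho_succ (by omega)
    have e2 : (finRotate n).symm ((finRotate n).symm (pt n (0 + 1))) = pt n (n - 2 + 1) := by
      rw [rho_succ (by omega), rho_zero]
      congr 1; omega
    apply S_Om2 e1 e2
    rw [pt_val (by omega), pt_val (by omega), pt_val (by omega), pt_val (by omega)]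
    push_cast; ring

noncomputable def Top (i : Fin n) : Module.End ℂ (VV n) := TT n (Sn n) (Omop n) i

noncomputable def Oop : Fin n ⊕ Fin n → Module.End ℂ (VV n) := Sum.elim Xop Top

def sw (n : ℕ) [NeZero n] (k : ℕ) : Equiv.Perm (Fin n) := Equiv.swap (pt n k) (pt n (k + 1))

theorem S_X {k : ℕ} (hk : k + 1 < n) (i : Fin n) :
    ∃ c : ℂ, Sn n k * Xop i = Xop (sw n k i) * Sn n k + c • 1 := by
  have hne : pt n k ≠ pt n (k + 1) := pt_ne (by omega) (by omega) (by omega)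
  have hsq : Sn n k * Sn n k = 1 := (affRel n).sq k hk
  have hxs : Sn n k * Xop (pt n (k + 1)) = Xop (pt n k) * Sn n k + mm n • 1 := by
    have : Xop (pt n k) * Sn n k = Sn n k * Xop (pt n (k + 1)) - mm n • 1 := XS_same hne
    rw [this]; abel
  by_cases h1 : i = pt n k
  · subst h1
    refine ⟨-mm n, ?_⟩
    rw [sw, Equiv.swap_apply_left]
    have h2 : Sn n k * (Sn n k * Xop (pt n (k + 1))) * Sn n k = Sn n k * (Xop (pt n k) * Sn n k + mm n • 1) * Sn n k := by
      rw [hxs]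
    rw [← mul_assoc, hsq, one_mul, mul_add, add_mul, mul_assoc, mul_assoc, hsq, mul_one, mul_smul_comm, mul_one,
      smul_mul_assoc, hsq] at h2
    rw [h2]; module
  by_cases h2 : i = pt n (k + 1)
  · subst h2
    refine ⟨mm n, ?_⟩
    rw [sw, Equiv.swap_apply_right, hxs]
  · refine ⟨0, ?_⟩
    rw [sw, Equiv.swap_apply_of_ne_of_ne h1 h2, zero_smul, add_zero]
    exact (XS_far h1 h2).symm

theorem S_T {k : ℕ} (hk : k + 1 < n) (i : Fin n) :
    Sn n k * Top i = Top (sw n k i) * Sn n k := by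
  have hsq : Sn n k * Sn n k = 1 := (affRel n).sq k hk
  by_cases h1 : i = pt n k
  · subst h1
    rw [sw, Equiv.swap_apply_left, Top, Top, pt_val hk, pt_val (by omega), TT, mul_assoc _ _ (Sn n k), hsq,
      mul_one]
  by_cases h2 : i = pt n (k + 1)
  · subst h2
    rw [sw, Equiv.swap_apply_right, Top, Top, pt_val hk, pt_val (by omega), TT, ← mul_assoc, ← mul_assoc, hsq,
      one_mul]
  · rw [sw, Equiv.swap_apply_of_ne_of_ne h1 h2]
    have h3 : (i : ℕ) ≠ k := fun h => h1 (Fin.ext (by rw [h, pt_val (by omega)]))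
    have h4 : (i : ℕ) ≠ k + 1 := fun h => h2 (Fin.ext (by rw [h, pt_val (by omega)]))
    rcases Nat.lt_or_ge i k with h5 | h5
    · exact ST_gt (affRel n) i k h5 hk
    · exact ST_lt (affRel n) i k (by omega) i.2

theorem S_O {k : ℕ} (hk : k + 1 < n) (a : Fin n ⊕ Fin n) :
    ∃ c : ℂ, Sn n k * Oop a = Oop (Sum.map (sw n k) (sw n k) a) * Sn n k + c • 1 := by
  rcases a with i | i
  · exact S_X hk i
  · exact ⟨0, by rw [zero_smul, add_zero]; exact S_T hk i⟩

theorem T_comm (i j : Fin n) : Top i * Top j = Top j * Top i := by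
  rcases lt_trichotomy i j with h | h | h
  · exact TT_comm (affRel n) i j h j.2
  · rw [h]
  · exact (TT_comm (affRel n) j i h i.2).symm

/-- `S_0 ⋯ S_{k-1}` -/
noncomputable def wr (n : ℕ) [NeZero n] : ℕ → Module.End ℂ (VV n)
  | 0 => 1
  | k + 1 => wr n k * Sn n k

theorem wd_wr (k : ℕ) (hk : k < n) : wd (Sn n) k * wr n k = 1 := by
  induction k with
  | zero => simp [wd, wr]
  | succ k ih =>
    rw [wd, wr, mul_assoc, ← mul_assoc (wd (Sn n) k), ih (by omega), one_mul, (affRel n).sq k hk]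

theorem Om_eq : Omop n = Top (pt n 0) * wr n (n - 1) := by
  have := NeZero.pos n
  rw [Top, pt_val this, TT, mul_assoc, wd_wr _ (by omega), mul_one]

end Rep2
end PM


namespace PM

section Filt
variable {V ι : Type*} [AddCommGroup V] [Module ℂ V] (O : ι → Module.End ℂ V) (v : V)

/-- a word in the operators applied to `v` -/
def wv (l : List ι) : V := l.foldr (fun a u => O a u) v

theorem wv_cons (a : ι) (l : List ι) : wv O v (a :: l) = O a (wv O v l) := rfl

def FF (d : ℕ) : Submodule ℂ V := Submodule.span ℂ {u | ∃ l : List ι, l.length < d ∧ u = wv O v l}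

variable {O v}

theorem wv_mem {l : List ι} {d : ℕ} (h : l.length < d) : wv O v l ∈ FF O v d :=
  Submodule.subset_span ⟨l, h, rfl⟩

theorem FF_mono {d e : ℕ} (h : d ≤ e) : FF O v d ≤ FF O v e :=
  Submodule.span_mono (by rintro u ⟨l, hl, rfl⟩; exact ⟨l, by omega, rfl⟩)

theorem FF_ind {d : ℕ} (A : Module.End ℂ V) (K : Submodule ℂ V)
    (h : ∀ l : List ι, l.length < d → A (wv O v l) ∈ K) {u : V} (hu : u ∈ FF O v d) : A u ∈ K := by
  have : FF O v d ≤ K.comap A := by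
    apply Submodule.span_le.2
    rintro u ⟨l, hl, rfl⟩
    exact h l hl
  exact this hu

theorem O_FF (a : ι) {d : ℕ} {u : V} (hu : u ∈ FF O v d) : O a u ∈ FF O v (d + 1) := by
  refine FF_ind (O a) _ (fun l hl => ?_) hu
  rw [← wv_cons]
  exact wv_mem (by simpa using hl)

variable (O v) in
def Deg (k : ℕ) (A : Module.End ℂ V) : Prop := ∀ d u, u ∈ FF O v d → A u ∈ FF O v (d + k)

theorem Deg.mono {k l : ℕ} (h : k ≤ l) {A : Module.End ℂ V} (hA : Deg O v k A) : Deg O v l A :=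
  fun d u hu => FF_mono (by omega) (hA d u hu)

theorem Deg.add {k : ℕ} {A B : Module.End ℂ V} (hA : Deg O v k A) (hB : Deg O v k B) : Deg O v k (A + B) :=
  fun d u hu => add_mem (hA d u hu) (hB d u hu)

theorem Deg.sub {k : ℕ} {A B : Module.End ℂ V} (hA : Deg O v k A) (hB : Deg O v k B) : Deg O v k (A - B) :=
  fun d u hu => sub_mem (hA d u hu) (hB d u hu)

theorem Deg.neg {k : ℕ} {A : Module.End ℂ V} (hA : Deg O v k A) : Deg O v k (-A) :=
  fun d u hu => neg_mem (hA d u hu)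

theorem Deg.smul {k : ℕ} {A : Module.End ℂ V} (c : ℂ) (hA : Deg O v k A) : Deg O v k (c • A) :=
  fun d u hu => Submodule.smul_mem _ c (hA d u hu)

theorem Deg.mul {k l : ℕ} {A B : Module.End ℂ V} (hA : Deg O v k A) (hB : Deg O v l B) :
    Deg O v (l + k) (A * B) :=
  fun d u hu => by
    have := hA _ _ (hB d u hu)
    rwa [add_assoc] at this

theorem Deg.one : Deg O v 0 (1 : Module.End ℂ V) := fun _ _ hu => hu

theorem Deg.op (a : ι) : Deg O v 1 (O a) := fun _ _ hu => O_FF a hu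

theorem S_wv {S : Module.End ℂ V} {f : ι → ι} (hv : S v = -v)
    (hS : ∀ a, ∃ c : ℂ, S * O a = O (f a) * S + c • 1) (l : List ι) :
    S (wv O v l) + wv O v (l.map f) ∈ FF O v l.length := by
  induction l with
  | nil => simp [wv, hv]
  | cons a l ih =>
    obtain ⟨c, hc⟩ := hS a
    have e : S (O a (wv O v l)) = O (f a) (S (wv O v l)) + c • wv O v l := by
      have := LinearMap.congr_fun hc (wv O v l)
      simpa using this
    rw [List.map_cons, wv_cons, wv_cons, e]
    have e2 : O (f a) (S (wv O v l)) + c • wv O v l + O (f a) (wv O v (l.map f)) =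
        O (f a) (S (wv O v l) + wv O v (l.map f)) + c • wv O v l := by
      rw [map_add]; abel
    rw [e2]
    refine add_mem (O_FF _ ih) (Submodule.smul_mem _ _ (wv_mem (by simp)))

theorem S_Deg {S : Module.End ℂ V} {f : ι → ι} (hv : S v = -v)
    (hS : ∀ a, ∃ c : ℂ, S * O a = O (f a) * S + c • 1) : Deg O v 0 S := by
  intro d u hu
  refine FF_ind S _ (fun l hl => ?_) hu
  have := FF_mono (O := O) (v := v) hl.le (S_wv hv hS l)
  have h2 : wv O v (l.map f) ∈ FF O v d := wv_mem (by simpa using hl)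
  have := sub_mem this h2
  simpa using this

theorem wv_perm (hO : ∀ a b, Deg O v 1 (O a * O b - O b * O a)) {l l' : List ι} (h : l.Perm l') :
    wv O v l - wv O v l' ∈ FF O v l.length := by
  induction h with
  | nil => simp
  | cons a h ih =>
    rw [wv_cons, wv_cons, ← map_sub]
    exact O_FF a ih
  | swap a b l =>
    have := hO b a (l.length + 1) (wv O v l) (wv_mem (by simp))
    simpa [wv_cons] using this
  | trans h1 h2 ih1 ih2 =>
    rw [← h1.length_eq] at ih2
    have := add_mem ih1 ih2
    simpa using this

variable (O v) in
noncomputable def Phi : MvPolynomial ι ℂ →ₗ[ℂ] V :=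
  (MvPolynomial.basisMonomials ι ℂ).constr ℂ (fun m => wv O v (Finsupp.toMultiset m).toList)

theorem Phi_mono (m : ι →₀ ℕ) : Phi O v (monomial m 1) = wv O v (Finsupp.toMultiset m).toList := by
  have := (MvPolynomial.basisMonomials ι ℂ).constr_basis ℂ (fun m => wv O v (Finsupp.toMultiset m).toList) m
  rwa [MvPolynomial.coe_basisMonomials] at this

theorem Phi_wv (hO : ∀ a b, Deg O v 1 (O a * O b - O b * O a)) (m : ι →₀ ℕ) (l : List ι)
    (h : (l : Multiset ι) = Finsupp.toMultiset m) :
    Phi O v (monomial m 1) - wv O v l ∈ FF O v l.length := by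
  rw [Phi_mono]
  have hp : l.Perm (Finsupp.toMultiset m).toList := by
    rw [← Multiset.coe_eq_coe, h, Multiset.coe_toList]
  have := neg_mem (wv_perm hO hp)
  simpa using this

theorem toList_length (m : ι →₀ ℕ) : (Finsupp.toMultiset m).toList.length = m.degree := by
  rw [Multiset.length_toList, Finsupp.card_toMultiset]; rfl

theorem hom_ind (A : MvPolynomial ι ℂ →ₗ[ℂ] V) (K : Submodule ℂ V) {d : ℕ}
    (h : ∀ m : ι →₀ ℕ, m.degree = d → A (monomial m 1) ∈ K) {p : MvPolynomial ι ℂ} (hp : p.IsHomogeneous d) :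
    A p ∈ K := by
  rw [p.as_sum, map_sum]
  refine sum_mem fun m hm => ?_
  have : (monomial m (coeff m p) : MvPolynomial ι ℂ) = coeff m p • monomial m 1 := by
    rw [smul_monomial, smul_eq_mul, mul_one]
  rw [this, map_smul]
  refine Submodule.smul_mem _ _ (h m ?_)
  rw [Finsupp.degree_eq_weight_one]
  exact hp (mem_support_iff.1 hm)

theorem Phi_X (hO : ∀ a b, Deg O v 1 (O a * O b - O b * O a)) (j : ι) {d : ℕ} {p : MvPolynomial ι ℂ}
    (hp : p.IsHomogeneous d) : Phi O v (X j * p) - O j (Phi O v p) ∈ FF O v (d + 1) := by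
  refine hom_ind (Phi O v ∘ₗ LinearMap.mulLeft ℂ (X j) - O j ∘ₗ Phi O v) _ (fun m hm => ?_) hp
  simp only [LinearMap.sub_apply, LinearMap.comp_apply, LinearMap.mulLeft_apply]
  have e : (X j * monomial m 1 : MvPolynomial ι ℂ) = monomial (Finsupp.single j 1 + m) 1 := by
    rw [X, monomial_mul, one_mul]
  rw [e, Phi_mono m, ← wv_cons]
  have := Phi_wv hO (Finsupp.single j 1 + m) (j :: (Finsupp.toMultiset m).toList) (by
    rw [← Multiset.cons_coe, Multiset.coe_toList, map_add, Finsupp.toMultiset_single, one_smul]; rfl)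
  rwa [List.length_cons, toList_length, hm] at this

theorem S_Phi (hO : ∀ a b, Deg O v 1 (O a * O b - O b * O a)) {S : Module.End ℂ V} {f : ι → ι} (hv : S v = -v)
    (hS : ∀ a, ∃ c : ℂ, S * O a = O (f a) * S + c • 1) {d : ℕ} {p : MvPolynomial ι ℂ}
    (hp : p.IsHomogeneous d) : S (Phi O v p) + Phi O v (rename f p) ∈ FF O v d := by
  refine hom_ind (S ∘ₗ Phi O v + Phi O v ∘ₗ (rename f).toLinearMap) _ (fun m hm => ?_) hp
  simp only [LinearMap.add_apply, LinearMap.comp_apply, AlgHom.toLinearMap_apply, rename_monomial]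
  rw [Phi_mono m]
  have h1 := S_wv hv hS (Finsupp.toMultiset m).toList
  have h2 := Phi_wv hO (m.mapDomain f) ((Finsupp.toMultiset m).toList.map f) (by
    rw [← Multiset.map_coe, Multiset.coe_toList, Finsupp.toMultiset_map])
  rw [List.length_map] at h2
  rw [toList_length, hm] at h1 h2
  have := add_mem h1 h2
  convert this using 1
  abel

theorem Phi_mem (U : Submodule ℂ V) (hv : v ∈ U) (hU : ∀ a, ∀ u ∈ U, O a u ∈ U) (p : MvPolynomial ι ℂ) :
    Phi O v p ∈ U := by
  have h : ∀ l : List ι, wv O v l ∈ U := by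
    intro l
    induction l with
    | nil => exact hv
    | cons a l ih => exact hU a _ ih
  rw [p.as_sum, map_sum]
  refine sum_mem fun m _ => ?_
  have : (monomial m (coeff m p) : MvPolynomial ι ℂ) = coeff m p • monomial m 1 := by
    rw [smul_monomial, smul_eq_mul, mul_one]
  rw [this, map_smul, Phi_mono]
  exact Submodule.smul_mem _ _ (h _)

/-- spanning criterion -/
theorem FF_le_span (hO : ∀ a b, Deg O v 1 (O a * O b - O b * O a)) (I : Submodule ℂ (MvPolynomial ι ℂ))
    (hI : ∀ f ∈ I, ∀ d, Phi O v (homogeneousComponent d f) ∈ FF O v d) (B : Set (MvPolynomial ι ℂ))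
    (hB : ∀ b ∈ B, ∃ d, b.IsHomogeneous d) (hIB : ∀ p, p ∈ I ⊔ Submodule.span ℂ B) (d : ℕ) :
    FF O v d ≤ Submodule.span ℂ (Phi O v '' B) := by
  have hcB : ∀ e, ∀ b ∈ Submodule.span ℂ B, homogeneousComponent e b ∈ Submodule.span ℂ B := by
    intro e b hb
    have : Submodule.span ℂ B ≤ (Submodule.span ℂ B).comap (homogeneousComponent e) := by
      apply Submodule.span_le.2
      intro b hb
      obtain ⟨k, hk⟩ := hB b hb
      simp only [Submodule.comap_coe, Set.mem_preimage, SetLike.mem_coe]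
      rw [homogeneousComponent_of_mem hk]
      split_ifs
      · exact Submodule.subset_span hb
      · exact zero_mem _
    exact this hb
  induction d with
  | zero =>
    apply Submodule.span_le.2
    rintro u ⟨l, hl, rfl⟩
    omega
  | succ d ih =>
    apply Submodule.span_le.2
    rintro u ⟨l, hl, rfl⟩
    rcases Nat.lt_or_ge l.length d with h | h
    · exact ih (wv_mem h)
    have hld : l.length = d := by omega
    classical
    set m := Multiset.toFinsupp (l : Multiset ι) with hm
    have hml : (l : Multiset ι) = Finsupp.toMultiset m := by rw [hm, Multiset.toFinsupp_toMultiset]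
    have h1 := Phi_wv hO m l hml
    rw [hld] at h1
    obtain ⟨f, hf, b, hb, hfb⟩ := Submodule.mem_sup.1 (hIB (monomial m 1))
    have hmd : m.degree = d := by
      rw [← toList_length, ← hml, Multiset.length_toList, Multiset.coe_card, hld]
    have h2 : homogeneousComponent d (monomial m 1 : MvPolynomial ι ℂ) = monomial m 1 :=
      homogeneousComponent_eq_self (isHomogeneous_monomial 1 hmd)
    rw [← hfb, map_add] at h2
    have h3 : Phi O v (monomial m 1) ∈ Submodule.span ℂ (Phi O v '' B) := by
      rw [← hfb, ← h2, map_add]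
      refine add_mem (ih (hI f hf d)) ?_
      rw [← Submodule.map_span]
      exact Submodule.mem_map_of_mem (hcB d b hb)
    have := sub_mem h3 (ih h1)
    simpa using this

end Filt

section SignProj
variable {V : Type*} [AddCommGroup V] [Module ℂ V] {n : ℕ} {S : ℕ → Module.End ℂ V}

theorem Dj_mem (F : Submodule ℂ V) (hF : ∀ k, k + 1 < n → ∀ u ∈ F, S k u ∈ F) (k : ℕ) (hk : k + 1 < n) (j : ℕ)
    (u : V) (hu : u ∈ F) : Dj S k j u ∈ F := by
  induction j with
  | zero => exact hu
  | succ j ih => exact neg_mem (hF _ (by omega) _ ih)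

theorem Dj_sub (F : Submodule ℂ V) (hF : ∀ k, k + 1 < n → ∀ u ∈ F, S k u ∈ F) (k : ℕ) (hk : k + 1 < n) (j : ℕ)
    (u : V) (hu : ∀ k, k + 1 < n → S k u + u ∈ F) : Dj S k j u - u ∈ F := by
  induction j with
  | zero => simp [Dj]
  | succ j ih =>
    have h1 := hF (k - j) (by omega) _ ih
    have h2 := hu (k - j) (by omega)
    rw [map_sub] at h1
    have := neg_mem (add_mem h1 h2)
    convert this using 1
    rw [Dj, LinearMap.neg_apply, Module.End.mul_apply]; abel

theorem EE_mem (F : Submodule ℂ V) (hF : ∀ k, k + 1 < n → ∀ u ∈ F, S k u ∈ F) (k : ℕ) (hk : k < n)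
    (u : V) (hu : u ∈ F) : EE S k u ∈ F := by
  induction k with
  | zero => exact hu
  | succ k ih =>
    rw [EE, Module.End.mul_apply, LinearMap.sum_apply]
    exact sum_mem fun j _ => Dj_mem F hF k hk j _ (ih (by omega))

theorem EE_sub (F : Submodule ℂ V) (hF : ∀ k, k + 1 < n → ∀ u ∈ F, S k u ∈ F) (k : ℕ) (hk : k < n)
    (u : V) (hu : ∀ k, k + 1 < n → S k u + u ∈ F) : ∃ c : ℂ, c ≠ 0 ∧ EE S k u - c • u ∈ F := by
  induction k with
  | zero => exact ⟨1, one_ne_zero, by simp [EE]⟩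
  | succ k ih =>
    obtain ⟨c, hc, h⟩ := ih (by omega)
    refine ⟨c * (k + 2), mul_ne_zero hc (by exact_mod_cast (by omega : k + 2 ≠ 0)), ?_⟩
    rw [EE, Module.End.mul_apply, LinearMap.sum_apply]
    have e : ∑ j ∈ Finset.range (k + 2), Dj S k j (EE S k u) - (c * (k + 2)) • u =
        ∑ j ∈ Finset.range (k + 2), (Dj S k j (EE S k u - c • u) + c • (Dj S k j u - u)) := by
      have e1 : ∀ j, Dj S k j (EE S k u - c • u) + c • (Dj S k j u - u) = Dj S k j (EE S k u) - c • u := by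
        intro j
        simp only [map_sub, map_smul, smul_sub]; abel
      simp only [e1]
      rw [Finset.sum_sub_distrib, Finset.sum_const, Finset.card_range]
      congr 1
      rw [← Nat.cast_smul_eq_nsmul ℂ, smul_smul]
      congr 1; push_cast; ring
    rw [e]
    exact sum_mem fun j _ => add_mem (Dj_mem F hF k hk j _ h) (Submodule.smul_mem _ _ (Dj_sub F hF k hk j u hu))

theorem sign_proj {Om : Module.End ℂ V} (hA : AffRel n S Om) (hn : 1 ≤ n) (F U : Submodule ℂ V)
    (hF : ∀ k, k + 1 < n → ∀ u ∈ F, S k u ∈ F) (hU : ∀ k, k + 1 < n → ∀ u ∈ U, S k u ∈ U)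
    (v : V) (hv : v ∈ F)
    (hs : ∀ u ∈ U, (∀ k, k + 1 < n → S k u = -u) → u ∈ Submodule.span ℂ {v})
    (u : V) (huU : u ∈ U) (hu : ∀ k, k + 1 < n → S k u + u ∈ F) : u ∈ F := by
  obtain ⟨c, hc, h⟩ := EE_sub F hF (n - 1) (by omega) u hu
  have h1 : EE S (n - 1) u ∈ Submodule.span ℂ {v} := by
    refine hs _ (EE_mem U hU _ (by omega) u huU) (fun k hk => ?_)
    have := LinearMap.congr_fun (S_EE hA (n - 1) (by omega) k (by omega)) u
    simpa using this
  have h2 : EE S (n - 1) u ∈ F := (Submodule.span_le.2 (by simpa using hv) : Submodule.span ℂ {v} ≤ F) h1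
  have h3 := sub_mem h2 h
  rw [sub_sub_cancel] at h3
  exact (Submodule.smul_mem_iff _ hc).1 h3

end SignProj
end PM


namespace PM
set_option linter.unusedSectionVars false

section Res
variable {n : ℕ} [NeZero n]

def Res (w : WW n) : Prop := ∀ i j : Fin n, (n : ℤ) ∣ w.1 i + 1 - w.1 j → w.1 j - j < w.1 i - i + n + 1

theorem Res_OmW {w : WW n} (h : Res w) : Res (OmW w) := by
  intro i j hij
  have h1 := rot_mod i
  have h2 := rot_mod j
  simp only [OmW] at hij ⊢
  have := h ((finRotate n).symm i) ((finRotate n).symm j) (by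
    obtain ⟨a, ha⟩ := hij
    obtain ⟨b, hb⟩ := h1
    obtain ⟨c, hc⟩ := h2
    exact ⟨a - (b - c), by linarith⟩)
  linarith

theorem Res_OmWi {w : WW n} (h : Res w) : Res (OmWi w) := by
  intro i j hij
  have h1 := rot_mod (finRotate n i)
  have h2 := rot_mod (finRotate n j)
  rw [Equiv.symm_apply_apply] at h1 h2
  simp only [OmWi] at hij ⊢
  have := h ((finRotate n) i) ((finRotate n) j) (by
    obtain ⟨a, ha⟩ := hij
    obtain ⟨b, hb⟩ := h1
    obtain ⟨c, hc⟩ := h2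
    exact ⟨a + (b - c), by linarith⟩)
  linarith

theorem Res_swap {w : WW n} (h : Res w) {p q : Fin n} (hpq : (q : ℕ) = p + 1) (h' : ¬ Res (swapW w p q)) :
    w.1 q = w.1 p + n + 1 := by
  unfold Res at h'
  push Not at h'
  obtain ⟨i, j, ⟨t, ht⟩, hlt⟩ := h'
  simp only [swapW] at ht hlt
  have h1 := h (Equiv.swap p q i) (Equiv.swap p q j) ⟨t, ht⟩
  have b1 := (Equiv.swap p q i).2
  have b2 := (Equiv.swap p q j).2
  have b3 := i.2
  have b4 := j.2
  have ht1 : t = -1 := by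
    have t1 : t < 0 := by
      by_contra hc
      have : 0 ≤ (n : ℤ) * t := mul_nonneg (by omega) (by omega)
      omega
    have t2 : -2 < t := by
      by_contra hc
      have : (n : ℤ) * t ≤ n * (-2) := mul_le_mul_of_nonneg_left (by omega) (by omega)
      omega
    omega
  subst ht1
  have hji : (j : ℕ) ≤ i := by omega
  have hij : ((Equiv.swap p q i : Fin n) : ℕ) < (Equiv.swap p q j : Fin n) := by omega
  have e : i = q ∧ j = p := by
    rw [Equiv.swap_apply_def, Equiv.swap_apply_def] at hij
    split_ifs at hij with a1 a2 a3 a4 a5 a6 <;> simp_all <;> omega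
  obtain ⟨rfl, rfl⟩ := e
  rw [Equiv.swap_apply_left, Equiv.swap_apply_right] at ht
  linarith

theorem Res_ne {w : WW n} (h : Res w) {p q : Fin n} (hpq : (q : ℕ) = p + 1) : w.1 p ≠ w.1 q + n + 1 := by
  intro h'
  have := h q p ⟨-1, by linarith⟩
  omega

noncomputable def URes (n : ℕ) [NeZero n] : Submodule ℂ (VV n) := Submodule.span ℂ (bas '' {w : WW n | Res w})

theorem bas_URes {w : WW n} (h : Res w) : bas w ∈ URes n := Submodule.subset_span ⟨w, h, rfl⟩

theorem URes_stable (A : Module.End ℂ (VV n)) (h : ∀ w : WW n, Res w → A (bas w) ∈ URes n) :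
    ∀ u ∈ URes n, A u ∈ URes n := by
  have : URes n ≤ (URes n).comap A := by
    apply Submodule.span_le.2
    rintro _ ⟨w, hw, rfl⟩
    exact h w hw
  exact this

theorem X_URes (i : Fin n) : ∀ u ∈ URes n, Xop i u ∈ URes n := by
  apply URes_stable
  intro w hw
  rw [Xop_bas]
  exact Submodule.smul_mem _ _ (bas_URes hw)

theorem Om_URes : ∀ u ∈ URes n, Omop n u ∈ URes n := by
  apply URes_stable
  intro w hw
  rw [Omop_bas]
  exact bas_URes (Res_OmW hw)

theorem S_URes (k : ℕ) (hk : k + 1 < n) : ∀ u ∈ URes n, Sn n k u ∈ URes n := by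
  apply URes_stable
  intro w hw
  rw [Sn, Sop_bas]
  refine add_mem (Submodule.smul_mem _ _ (bas_URes hw)) ?_
  by_cases h : Res (swapW w (pt n k) (pt n (k + 1)))
  · exact Submodule.smul_mem _ _ (bas_URes h)
  · have := Res_swap hw (by rw [pt_val hk, pt_val (by omega)]) h
    have e : 1 + mm n / dd w (pt n k) (pt n (k + 1)) = 0 := by
      have h0 : (n : ℂ) + 1 ≠ 0 := by exact_mod_cast Nat.succ_ne_zero n
      rw [dd, this, mm]; push_cast
      have : (w.1 (pt n k) : ℂ) - (w.1 (pt n k) + n + 1) = -(n + 1) := by ring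
      rw [this]; field_simp; ring
    rw [e, zero_smul]; exact zero_mem _

theorem TT_URes (k : ℕ) (hk : k < n) : ∀ u ∈ URes n, TT n (Sn n) (Omop n) k u ∈ URes n := by
  induction k with
  | zero =>
    have : ∀ j, j < n → ∀ u ∈ URes n, wd (Sn n) j u ∈ URes n := by
      intro j
      induction j with
      | zero => intro _ u hu; exact hu
      | succ j ih => intro hj u hu; exact S_URes j hj _ (ih (by omega) u hu)
    intro u hu
    exact Om_URes _ (this (n - 1) (by omega) u hu)
  | succ k ih =>
    intro u hu
    exact S_URes k hk _ (ih (by omega) _ (S_URes k hk _ hu))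

theorem O_URes (a : Fin n ⊕ Fin n) : ∀ u ∈ URes n, Oop a u ∈ URes n := by
  rcases a with i | i
  · exact X_URes i
  · exact TT_URes i i.2

theorem URes_supp {u : VV n} (hu : u ∈ URes n) {w : WW n} (h : u w ≠ 0) : Res w := by
  by_contra hw
  apply h
  have : URes n ≤ LinearMap.ker (Finsupp.lapply (M := ℂ) (R := ℂ) w) := by
    apply Submodule.span_le.2
    rintro _ ⟨w', hw', rfl⟩
    have : w' ≠ w := fun e => hw (e ▸ hw')
    simp [bas, this]
  exact this hu

/-! sign vector -/

def permW (σ : Equiv.Perm (Fin n)) : WW n := ⟨fun i => (σ i : ℤ), by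
  intro i j h
  have h1 := (σ i).2
  have h2 := (σ j).2
  simp only at h
  have h3 := Int.eq_zero_of_abs_lt_dvd h (by rw [abs_lt]; omega)
  apply σ.injective
  apply Fin.ext; omega, Equiv.sum_comp σ (fun i : Fin n => (i : ℤ))⟩

theorem permW_inj : Function.Injective (permW (n := n)) := by
  intro σ τ h
  ext i
  have := congrFun (congrArg Subtype.val h) i
  simp only [permW] at this
  omega

theorem Res_permW (σ : Equiv.Perm (Fin n)) : Res (permW σ) := by
  rintro i j ⟨t, ht⟩
  simp only [permW] at ht ⊢
  have h1 := (σ i).2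
  have h2 := (σ j).2
  have h3 := i.2
  have h4 := j.2
  have : 0 ≤ t := by
    by_contra hc
    have : (n : ℤ) * t ≤ n * (-1) := mul_le_mul_of_nonneg_left (by omega) (by omega)
    omega
  have : 0 ≤ (n : ℤ) * t := mul_nonneg (by omega) (by omega)
  omega

noncomputable def vv (n : ℕ) [NeZero n] : VV n :=
  ∑ σ : Equiv.Perm (Fin n), ((Equiv.Perm.sign σ : ℤ) : ℂ) • bas (permW σ)

theorem vv_URes : vv n ∈ URes n :=
  sum_mem fun σ _ => Submodule.smul_mem _ _ (bas_URes (Res_permW σ))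

theorem Sop_vv {p q : Fin n} (h : p ≠ q) : Sop p q (vv n) = - vv n := by
  rw [vv, map_sum]
  have e : ∀ σ : Equiv.Perm (Fin n), Sop p q (((Equiv.Perm.sign σ : ℤ) : ℂ) • bas (permW σ)) =
      (-(((Equiv.Perm.sign σ : ℤ) : ℂ) * (mm n / dd (permW σ) p q))) • bas (permW σ) +
      ((((Equiv.Perm.sign σ : ℤ) : ℂ)) * (1 + mm n / dd (permW σ) p q)) • bas (permW (σ * Equiv.swap p q)) := by
    intro σ
    rw [map_smul, Sop_bas, smul_add, smul_smul, smul_smul]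
    congr 2
    ring
  simp only [e]
  rw [Finset.sum_add_distrib]
  have e2 : ∑ σ : Equiv.Perm (Fin n), ((((Equiv.Perm.sign σ : ℤ) : ℂ)) * (1 + mm n / dd (permW σ) p q)) •
      bas (permW (σ * Equiv.swap p q)) = ∑ σ : Equiv.Perm (Fin n),
      (-(((Equiv.Perm.sign σ : ℤ) : ℂ) * (1 - mm n / dd (permW σ) p q))) • bas (permW σ) := by
    rw [← Equiv.sum_comp (Equiv.mulRight (Equiv.swap p q))]
    refine Finset.sum_congr rfl fun σ _ => ?_
    rw [Equiv.coe_mulRight, mul_assoc, Equiv.swap_mul_self, mul_one, Equiv.Perm.sign_mul, Equiv.Perm.sign_swap h]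
    have : dd (permW (σ * Equiv.swap p q)) p q = - dd (permW σ) p q := by
      simp [dd, permW]
    rw [this, div_neg]
    congr 1
    push_cast; ring
  rw [e2, ← Finset.sum_add_distrib, ← Finset.sum_neg_distrib]
  refine Finset.sum_congr rfl fun σ _ => ?_
  rw [← add_smul, ← neg_smul]
  congr 1
  ring

def compW (w : WW n) (σ : Equiv.Perm (Fin n)) : WW n :=
  ⟨fun i => w.1 (σ i), fun i j h => σ.injective (w.2.1 _ _ h), (Equiv.sum_comp σ w.1).trans w.2.2⟩

theorem Sop_apply {p q : Fin n} (u : VV n) (w : WW n) :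
    (Sop p q u) w = -(mm n / dd w p q) * u w + (1 - mm n / dd w p q) * u (swapW w p q) := by
  have : Finsupp.lapply (M := ℂ) (R := ℂ) w ∘ₗ Sop p q =
      (-(mm n / dd w p q)) • Finsupp.lapply (M := ℂ) (R := ℂ) w +
      (1 - mm n / dd w p q) • Finsupp.lapply (M := ℂ) (R := ℂ) (swapW w p q) := by
    apply Finsupp.lhom_ext'
    intro w'
    apply LinearMap.ext_ring
    change (Sop p q (bas w')) w = (-(mm n / dd w p q)) * (bas w') w + (1 - mm n / dd w p q) * bas w' (swapW w p q)
    rw [Sop_bas]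
    have h1 : swapW w' p q = w ↔ w' = swapW w p q := by
      constructor
      · rintro rfl; rw [swapW_swapW]
      · rintro rfl; rw [swapW_swapW]
    have h2 : dd (swapW w p q) p q = - dd w p q := by simp [dd, swapW]
    classical
    simp only [bas, Finsupp.add_apply, Finsupp.smul_apply, Finsupp.single_apply, smul_eq_mul, h1]
    congr 1
    · by_cases h : w' = w
      · subst h; rfl
      · simp [h]
    · by_cases h : w' = swapW w p q
      · subst h; rw [h2, div_neg]; simp [sub_eq_add_neg]
      · simp [h]
  exact LinearMap.congr_fun this u

theorem sign_coeff {p q : Fin n} {u : VV n} (hu : Sop p q u = -u) (w : WW n) :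
    u (swapW w p q) = - u w := by
  have h1 := Sop_apply (p := p) (q := q) u w
  have h2 := Sop_apply (p := p) (q := q) u (swapW w p q)
  rw [swapW_swapW] at h2
  have e : dd (swapW w p q) p q = - dd w p q := by simp [dd, swapW]
  rw [hu, Finsupp.neg_apply] at h1 h2
  rw [e, div_neg] at h2
  generalize mm n / dd w p q = x at *
  generalize u w = y at *
  generalize u (swapW w p q) = z at *
  linear_combination (-1/2) * h1 - (1/2) * h2

theorem perm_ind (P : Equiv.Perm (Fin n) → Prop) (h1 : P 1)
    (hs : ∀ k, k + 1 < n → P (sw n k)) (hm : ∀ σ τ, P σ → P τ → P (σ * τ)) (σ : Equiv.Perm (Fin n)) : P σ := by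
  obtain ⟨m, rfl⟩ : ∃ m, n = m + 1 := ⟨n - 1, by have := NeZero.pos n; omega⟩
  have hσ : σ ∈ Submonoid.closure (Set.range fun i : Fin m => Equiv.swap i.castSucc i.succ) := by
    rw [Equiv.Perm.mclosure_swap_castSucc_succ]; trivial
  induction hσ using Submonoid.closure_induction with
  | mem x hx =>
    obtain ⟨i, rfl⟩ := hx
    have := hs i (by omega)
    have e1 : pt (m + 1) i = i.castSucc := Fin.ext (by rw [pt_val (by omega)]; rfl)
    have e2 : pt (m + 1) (i + 1) = i.succ := Fin.ext (by rw [pt_val (by omega)]; rfl)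
    rw [sw, e1, e2] at this
    exact this
  | one => exact h1
  | mul x y _ _ hx hy => exact hm x y hx hy

theorem sign_perm {u : VV n} (hu : ∀ k, k + 1 < n → Sn n k u = -u) (σ : Equiv.Perm (Fin n)) :
    ∀ w, u (compW w σ) = ((Equiv.Perm.sign σ : ℤ) : ℂ) * u w := by
  refine perm_ind (fun σ => ∀ w, u (compW w σ) = ((Equiv.Perm.sign σ : ℤ) : ℂ) * u w) ?_ ?_ ?_ σ
  · intro w
    simp only [map_one, Units.val_one, Int.cast_one, one_mul]
    rfl
  · intro k hk w
    have := sign_coeff (hu k hk) w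
    rw [sw, Equiv.Perm.sign_swap (pt_ne (by omega) (by omega) (by omega))]
    have e : compW w (Equiv.swap (pt n k) (pt n (k + 1))) = swapW w (pt n k) (pt n (k + 1)) := rfl
    rw [e, this]; simp
  · intro σ τ h1 h2 w
    have : compW w (σ * τ) = compW (compW w σ) τ := rfl
    rw [this, h2, h1, Equiv.Perm.sign_mul]
    push_cast; ring

theorem res_surj (w : WW n) (c : ℤ) : ∃ j, (n : ℤ) ∣ c - w.1 j := by
  have hi : Function.Injective (fun j : Fin n => (w.1 j : ZMod n)) := by
    intro i j h
    have := (ZMod.intCast_eq_intCast_iff_dvd_sub _ _ n).1 h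
    exact (w.2.1 j i this).symm
  have hb := (Fintype.bijective_iff_injective_and_card _).2 ⟨hi, by simp [ZMod.card]⟩
  obtain ⟨j, hj⟩ := hb.2 (c : ZMod n)
  exact ⟨j, (ZMod.intCast_eq_intCast_iff_dvd_sub _ _ n).1 hj⟩

theorem exists_perm_two {i j : Fin n} (h : i ≠ j) : ∃ σ : Equiv.Perm (Fin n), σ (pt n 0) = j ∧ σ (pt n (n - 1)) = i := by
  have hn := NeZero.pos n
  have hi := i.2
  have hj := j.2
  have hne : (i : ℕ) ≠ j := fun e => h (Fin.ext e)
  have h0 : pt n 0 ≠ pt n (n - 1) := pt_ne (by omega) (by omega) (by omega)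
  set s := Equiv.swap (pt n 0) j
  refine ⟨s * Equiv.swap (pt n (n - 1)) (s⁻¹ i), ?_, ?_⟩
  · rw [Equiv.Perm.mul_apply, Equiv.swap_apply_of_ne_of_ne h0]
    · exact Equiv.swap_apply_left _ _
    · intro e
      apply h
      have : s (pt n 0) = i := by rw [e]; simp
      rw [← this]; exact Equiv.swap_apply_left _ _
  · rw [Equiv.Perm.mul_apply, Equiv.swap_apply_left]; simp

theorem all_res {w : WW n} (h : ∀ σ, Res (compW w σ)) : ∃ σ, w = permW σ := by
  have hn := NeZero.pos n
  have h1 : ∀ i j : Fin n, (n : ℤ) ∣ w.1 i + 1 - w.1 j → w.1 j ≤ w.1 i + 1 := by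
    intro i j hij
    by_cases e : i = j
    · subst e; omega
    obtain ⟨σ, h0, h2⟩ := exists_perm_two e
    have := h σ (pt n (n - 1)) (pt n 0) (by simpa [compW, h0, h2] using hij)
    simp only [compW, h0, h2, pt_val hn, pt_val (show n - 1 < n by omega)] at this
    omega
  obtain ⟨i0, -, hi0⟩ := Finset.exists_min_image Finset.univ w.1 ⟨pt n 0, Finset.mem_univ _⟩
  have h2 : ∀ t : ℕ, t < n → ∃ i, w.1 i = w.1 i0 + t := by
    intro t
    induction t with
    | zero => intro _; exact ⟨i0, by simp⟩
    | succ t ih =>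
      intro ht
      obtain ⟨i, hi⟩ := ih (by omega)
      obtain ⟨j, hj⟩ := res_surj w (w.1 i + 1)
      have a1 := h1 i j hj
      have a2 := hi0 j (Finset.mem_univ _)
      have := Int.eq_zero_of_abs_lt_dvd hj (by rw [abs_lt]; omega)
      exact ⟨j, by push_cast; omega⟩
  choose f hf using fun t : Fin n => h2 t t.2
  have hfi : Function.Injective f := by
    intro s t hst
    have a := hf s
    rw [hst, hf t] at a
    apply Fin.ext; omega
  let τ : Equiv.Perm (Fin n) := Equiv.ofBijective f (Finite.injective_iff_bijective.1 hfi)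
  have hs : ∑ i, w.1 i = ∑ t : Fin n, (w.1 i0 + (t : ℤ)) := by
    rw [← Equiv.sum_comp τ]
    exact Finset.sum_congr rfl fun t _ => hf t
  rw [w.2.2, Finset.sum_add_distrib, Finset.sum_const, Finset.card_univ, Fintype.card_fin] at hs
  have h0 : w.1 i0 = 0 := by
    have : (n : ℤ) * w.1 i0 = 0 := by rw [nsmul_eq_mul] at hs; linarith
    rcases mul_eq_zero.1 this with h | h
    · omega
    · exact h
  refine ⟨τ.symm, Subtype.ext (funext fun i => ?_)⟩
  have := hf (τ.symm i)
  have e : f (τ.symm i) = i := τ.apply_symm_apply i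
  rw [e, h0, zero_add] at this
  exact this

theorem sign_unique {u : VV n} (hU : u ∈ URes n) (hu : ∀ k, k + 1 < n → Sn n k u = -u) :
    u ∈ Submodule.span ℂ {vv n} := by
  rw [Submodule.mem_span_singleton]
  refine ⟨u (permW 1), ?_⟩
  ext w
  by_cases hw : ∃ σ, w = permW σ
  · obtain ⟨σ, rfl⟩ := hw
    have e1 : permW σ = compW (permW 1) σ := rfl
    have e2 : vv n (permW σ) = ((Equiv.Perm.sign σ : ℤ) : ℂ) := by
      rw [vv, Finsupp.finsetSum_apply]
      rw [Finset.sum_eq_single σ]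
      · simp [bas]
      · intro τ _ hτ
        have : permW τ ≠ permW σ := fun e => hτ (permW_inj e)
        simp [bas, this]
      · simp
    rw [Finsupp.smul_apply, e2, e1, sign_perm hu, smul_eq_mul, mul_comm]
  · have e1 : u w = 0 := by
      by_contra h0
      apply hw
      apply all_res
      intro σ
      apply URes_supp hU
      rw [sign_perm hu]
      refine mul_ne_zero ?_ h0
      rcases Int.units_eq_one_or (Equiv.Perm.sign σ) with h | h <;> simp [h]
    have e2 : vv n w = 0 := by
      rw [vv, Finsupp.finsetSum_apply]
      refine Finset.sum_eq_zero fun τ _ => ?_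
      have : permW τ ≠ w := fun e => hw ⟨τ, e.symm⟩
      simp [bas, this]
    rw [Finsupp.smul_apply, e1, e2, smul_zero]

end Res
end PM


namespace PM
set_option linter.unusedSectionVars false

section Gen
variable {A : Type*} [Ring A] [Algebra ℂ A]

theorem alg1 {S X X' W Y : A} {c : ℂ} (hc : S * X = X' * S + c • (1 : A)) :
    X' * (S * W) - S * W * Y = S * (X * W - W * Y) - c • W := by
  have e1 : S * X * W = X' * S * W + c • W := by rw [hc, add_mul, smul_mul_assoc, one_mul]
  rw [mul_sub, ← mul_assoc S X, e1, ← mul_assoc, ← mul_assoc]; abel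

theorem alg2 {X X' Om W : A} {c : ℂ} (hX : X * Om = Om * (X' + c • (1 : A))) :
    X * (Om * W) - Om * W * X = Om * (X' * W - W * X) + c • (Om * W) := by
  rw [← mul_assoc, hX, mul_add, add_mul, mul_smul_comm, mul_one, smul_mul_assoc, mul_sub, ← mul_assoc, ← mul_assoc]
  abel

theorem alg3 {S X X' T : A} {c c' : ℂ} (hc : S * X' = X * S + c • (1 : A)) (hc' : S * X = X' * S + c' • (1 : A)) :
    X * (S * T * S) - S * T * S * X = S * (X' * T - T * X') * S - c • (T * S) - c' • (S * T) := by
  have hc2 : X * S = S * X' - c • (1 : A) := by rw [hc]; abel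
  have a1 : X * (S * T * S) = S * (X' * T) * S - c • (T * S) := by
    rw [← mul_assoc, ← mul_assoc, hc2, sub_mul, sub_mul, smul_mul_assoc, smul_mul_assoc, one_mul]
    simp only [mul_assoc]
  have a2 : S * T * S * X = S * (T * X') * S + c' • (S * T) := by
    rw [mul_assoc, hc', mul_add, mul_smul_comm, mul_one]
    simp only [mul_assoc]
  rw [a1, a2, mul_sub, sub_mul]; abel

variable {V ι : Type*} [AddCommGroup V] [Module ℂ V] {O : ι → Module.End ℂ V} {v : V}

theorem Deg_alg1 {S X X' W Y : Module.End ℂ V} {c : ℂ} (hc : S * X = X' * S + c • 1)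
    (dS : Deg O v 0 S) (h : Deg O v 0 (X * W - W * Y)) (dW : Deg O v 0 W) :
    Deg O v 0 (X' * (S * W) - S * W * Y) := by
  rw [alg1 hc]
  exact (dS.mul h).sub (dW.smul c)

theorem Deg_alg2 {X X' Om W : Module.End ℂ V} {c : ℂ} (hX : X * Om = Om * (X' + c • 1))
    (dOm : Deg O v 1 Om) (h : Deg O v 0 (X' * W - W * X)) (dW : Deg O v 0 W) :
    Deg O v 1 (X * (Om * W) - Om * W * X) := by
  rw [alg2 hX]
  exact (dOm.mul h).add ((dOm.mul dW).smul c)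

theorem Deg_alg3 {S X X' T : Module.End ℂ V} {c c' : ℂ} (hc : S * X' = X * S + c • 1)
    (hc' : S * X = X' * S + c' • 1) (hS : Deg O v 0 S) (hT : Deg O v 1 T) (hi : Deg O v 1 (X' * T - T * X')) :
    Deg O v 1 (X * (S * T * S) - S * T * S * X) := by
  rw [alg3 hc hc']
  exact (((hS.mul hi).mul hS).sub ((hT.mul hS).smul c)).sub ((hS.mul hT).smul c')

theorem Deg_self {A B : Module.End ℂ V} (h : A * B = B * A) (k : ℕ) : Deg O v k (A * B - B * A) := by
  rw [h, sub_self]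
  intro d u _
  exact zero_mem _

theorem Deg_neg {A B : Module.End ℂ V} {k : ℕ} (h : Deg O v k (A * B - B * A)) : Deg O v k (B * A - A * B) := by
  have := h.neg
  rwa [neg_sub] at this

end Gen

section Comm
variable {n : ℕ} [NeZero n]

theorem S_vv (k : ℕ) (hk : k + 1 < n) : Sn n k (vv n) = - vv n :=
  Sop_vv (pt_ne (by omega) (by omega) (by omega))

theorem dS (k : ℕ) (hk : k + 1 < n) : Deg Oop (vv n) 0 (Sn n k) := S_Deg (S_vv k hk) (S_O hk)

theorem dwd (k : ℕ) (hk : k < n) : Deg Oop (vv n) 0 (wd (Sn n) k) := by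
  induction k with
  | zero => exact Deg.one
  | succ k ih => exact (dS k hk).mul (ih (by omega))

theorem dwr (k : ℕ) (hk : k < n) : Deg Oop (vv n) 0 (wr n k) := by
  induction k with
  | zero => exact Deg.one
  | succ k ih => exact (ih (by omega)).mul (dS k hk)

theorem dX (i : Fin n) : Deg Oop (vv n) 1 (Xop i) := Deg.op (Sum.inl i)
theorem dT (i : Fin n) : Deg Oop (vv n) 1 (Top i) := Deg.op (Sum.inr i)

theorem dOm : Deg Oop (vv n) 1 (Omop n) := by
  have := NeZero.pos n
  rw [Om_eq]
  exact (dT _).mul (dwr (n - 1) (by omega))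

def cyc (n : ℕ) [NeZero n] : ℕ → Fin n → Fin n
  | 0, i => i
  | k + 1, i => sw n k (cyc n k i)

theorem cyc_zero (k : ℕ) (hk : k < n) : cyc n k (pt n 0) = pt n k := by
  induction k with
  | zero => rfl
  | succ k ih => rw [cyc, ih (by omega), sw, Equiv.swap_apply_left]

theorem cyc_big (k i : ℕ) (hk : k < i) (hi : i < n) : cyc n k (pt n i) = pt n i := by
  induction k with
  | zero => rfl
  | succ k ih =>
    rw [cyc, ih (by omega), sw, Equiv.swap_apply_of_ne_of_ne (pt_ne (by omega) (by omega) (by omega))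
      (pt_ne (by omega) (by omega) (by omega))]

theorem cyc_small (k i : ℕ) (hk : i < k) (hi : k < n) : cyc n k (pt n (i + 1)) = pt n i := by
  induction k with
  | zero => omega
  | succ k ih =>
    rw [cyc]
    rcases Nat.lt_or_ge i k with h | h
    · rw [ih h (by omega), sw, Equiv.swap_apply_of_ne_of_ne (pt_ne (by omega) (by omega) (by omega))
        (pt_ne (by omega) (by omega) (by omega))]
    · obtain rfl : i = k := by omega
      rw [cyc_big i (i + 1) (by omega) (by omega), sw, Equiv.swap_apply_right]

theorem cyc_rho (i : Fin n) : cyc n (n - 1) i = (finRotate n).symm i := by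
  have h := i.2
  rw [← pt_self i]
  rcases Nat.eq_zero_or_pos (i : ℕ) with h0 | h0
  · rw [h0, cyc_zero _ (by omega), rho_zero]
  · obtain ⟨j, hj⟩ : ∃ j, (i : ℕ) = j + 1 := ⟨i - 1, by omega⟩
    rw [hj, cyc_small _ _ (by omega) (by omega), rho_succ (by omega)]

theorem wd_X (k : ℕ) (hk : k < n) (i : Fin n) :
    Deg Oop (vv n) 0 (Xop (cyc n k i) * wd (Sn n) k - wd (Sn n) k * Xop i) := by
  induction k with
  | zero => exact Deg_self (by rw [wd, mul_one, one_mul]) 0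
  | succ k ih =>
    obtain ⟨c, hc⟩ := S_X hk (cyc n k i)
    exact Deg_alg1 hc (dS k hk) (ih (by omega)) (dwd k (by omega))

theorem XT_aux (k : ℕ) (hk : k < n) : ∀ i : Fin n,
    Deg Oop (vv n) 1 (Xop i * TT n (Sn n) (Omop n) k - TT n (Sn n) (Omop n) k * Xop i) := by
  induction k with
  | zero =>
    intro i
    have hX := X_Om i
    have hw := wd_X (n - 1) (by omega) i
    rw [cyc_rho] at hw
    exact Deg_alg2 hX dOm hw (dwd (n - 1) (by omega))
  | succ k ih =>
    intro i
    have hT : Deg Oop (vv n) 1 (TT n (Sn n) (Omop n) k) := by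
      have := dT (pt n k)
      rwa [Top, pt_val (by omega)] at this
    have hi := ih (by omega) (sw n k i)
    obtain ⟨c, hc⟩ := S_X hk (sw n k i)
    obtain ⟨c', hc'⟩ := S_X hk i
    have hss : sw n k (sw n k i) = i := by simp [sw]
    rw [hss] at hc
    exact Deg_alg3 hc hc' (dS k hk) hT hi

theorem O_comm (a b : Fin n ⊕ Fin n) : Deg Oop (vv n) 1 (Oop a * Oop b - Oop b * Oop a) := by
  rcases a with i | i <;> rcases b with j | j
  · exact Deg_self (XX_comm i j) 1
  · exact XT_aux j j.2 i
  · exact Deg_neg (XT_aux i i.2 j)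
  · exact Deg_self (T_comm i j) 1

theorem hc_X_mul (j : Fin n ⊕ Fin n) (d : ℕ) (f : MvPolynomial (Fin n ⊕ Fin n) ℂ) :
    homogeneousComponent (d + 1) (X j * f) = X j * homogeneousComponent d f := by
  have h : LinearMap.comp (homogeneousComponent (d + 1)) (LinearMap.mulLeft ℂ (X j)) =
      LinearMap.comp (LinearMap.mulLeft ℂ (X j : MvPolynomial (Fin n ⊕ Fin n) ℂ)) (homogeneousComponent d) := by
    apply MvPolynomial.linearMap_ext
    intro m
    apply LinearMap.ext_ring
    simp only [LinearMap.comp_apply, LinearMap.mulLeft_apply]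
    have h1 : (monomial m 1 : MvPolynomial (Fin n ⊕ Fin n) ℂ).IsHomogeneous m.degree :=
      isHomogeneous_monomial 1 rfl
    have h2 := (isHomogeneous_X ℂ j).mul h1
    rw [homogeneousComponent_of_mem h1, homogeneousComponent_of_mem h2]
    by_cases h : d = m.degree
    · rw [if_pos h, if_pos (by omega)]
    · rw [if_neg h, if_neg (by omega), mul_zero]
  exact LinearMap.congr_fun h f

theorem inv_Phi {f : MvPolynomial (Fin n ⊕ Fin n) ℂ} (hf : f ∈ invIdeal n) :
    ∀ d, Phi Oop (vv n) (homogeneousComponent d f) ∈ FF Oop (vv n) d := by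
  have hn := NeZero.pos n
  unfold invIdeal Ideal.span at hf
  induction hf using Submodule.span_induction with
  | mem g hg =>
    obtain ⟨h1, h2⟩ := hg
    intro d
    rcases Nat.eq_zero_or_pos d with rfl | hd
    · rw [homogeneousComponent_zero, ← constantCoeff_eq, h2, C_0, map_zero]; exact zero_mem _
    · refine sign_proj (affRel n) (by omega) (FF Oop (vv n) d) (URes n) (fun k hk u hu => dS k hk d u hu) S_URes (vv n)
        (wv_mem (l := []) hd) (fun u hu h => sign_unique hu h) _ (Phi_mem _ vv_URes O_URes _) ?_
      intro k hk
      have := S_Phi O_comm (S_vv k hk) (S_O hk) (homogeneousComponent_isHomogeneous d g)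
      rwa [rename_homogeneousComponent, h1] at this
  | zero => intro d; rw [map_zero, map_zero]; exact zero_mem _
  | add x y _ _ hx hy => intro d; rw [map_add, map_add]; exact add_mem (hx d) (hy d)
  | smul p x _ hx =>
    rw [smul_eq_mul]
    induction p using MvPolynomial.induction_on with
    | C a =>
      intro d
      rw [homogeneousComponent_C_mul, ← smul_eq_C_mul, map_smul]
      exact Submodule.smul_mem _ _ (hx d)
    | add p q hp hq =>
      intro d
      rw [add_mul, map_add, map_add]
      exact add_mem (hp d) (hq d)
    | mul_X p j hp =>
      intro d
      rw [mul_comm p, mul_assoc]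
      cases d with
      | zero =>
        rw [homogeneousComponent_zero]
        have : coeff 0 (X j * (p * x)) = 0 := by
          rw [← constantCoeff_eq, map_mul, constantCoeff_X, zero_mul]
        rw [this, C_0, map_zero]; exact zero_mem _
      | succ d =>
        rw [hc_X_mul]
        have h1 := Phi_X O_comm j (homogeneousComponent_isHomogeneous d (p * x))
        have h2 := add_mem h1 (O_FF j (hp d))
        rwa [sub_add_cancel] at h2

end Comm
end PM


namespace PM
set_option linter.unusedSectionVars false

section Gen7
variable {n : ℕ} [NeZero n]

noncomputable def LL (n : ℕ) [NeZero n] : Submodule ℂ (VV n) := Submodule.span ℂ (Set.range (wv Oop (vv n)))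

theorem FF_le_LL (d : ℕ) : FF Oop (vv n) d ≤ LL n :=
  Submodule.span_mono (by rintro u ⟨l, _, rfl⟩; exact ⟨l, rfl⟩)

theorem LL_le {K : Submodule ℂ (VV n)} (h : ∀ d, FF Oop (vv n) d ≤ K) : LL n ≤ K := by
  apply Submodule.span_le.2
  rintro _ ⟨l, rfl⟩
  exact h (l.length + 1) (wv_mem (by omega))

theorem LL_stable {A : Module.End ℂ (VV n)} {k : ℕ} (hA : Deg Oop (vv n) k A) : ∀ u ∈ LL n, A u ∈ LL n := by
  have : LL n ≤ (LL n).comap A := by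
    apply LL_le
    intro d u hu
    exact FF_le_LL _ (hA d u hu)
  exact this

theorem Xop_apply (i : Fin n) (u : VV n) (w : WW n) : (Xop i u) w = (w.1 i : ℂ) * u w := by
  have : Finsupp.lapply (M := ℂ) (R := ℂ) w ∘ₗ Xop i = ((w.1 i : ℂ)) • Finsupp.lapply (M := ℂ) (R := ℂ) w := by
    apply Finsupp.lhom_ext'
    intro w'
    apply LinearMap.ext_ring
    change (Xop i (bas w')) w = (w.1 i : ℂ) * (bas w') w
    rw [Xop_bas]
    classical
    simp only [bas, Finsupp.smul_apply, Finsupp.single_apply, smul_eq_mul]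
    by_cases h : w' = w
    · subst h; rfl
    · simp [h]
  exact LinearMap.congr_fun this u

theorem LL_sep (N : ℕ) : ∀ u ∈ LL n, u.support.card ≤ N → ∀ w, u w ≠ 0 → bas w ∈ LL n := by
  classical
  induction N with
  | zero =>
    intro u _ hc w hw
    have := Finset.card_eq_zero.1 (Nat.le_zero.1 hc)
    exact absurd (Finsupp.mem_support_iff.2 hw) (by rw [this]; simp)
  | succ N ih =>
    intro u hu hc w hw
    by_cases h : ∃ w', w' ≠ w ∧ u w' ≠ 0
    · obtain ⟨w', hne, hw'⟩ := h
      obtain ⟨i, hi⟩ : ∃ i, w'.1 i ≠ w.1 i := by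
        by_contra hcon
        push Not at hcon
        exact hne (Subtype.ext (funext hcon))
      set u' : VV n := Xop i u - (w'.1 i : ℂ) • u with hu'
      have hval : ∀ x, u' x = ((x.1 i : ℂ) - w'.1 i) * u x := by
        intro x
        rw [hu', Finsupp.sub_apply, Finsupp.smul_apply, Xop_apply, smul_eq_mul]; ring
      have hm : u' ∈ LL n := sub_mem (LL_stable (dX i) u hu) (Submodule.smul_mem _ _ hu)
      refine ih u' hm ?_ w ?_
      · have hsub : u'.support ⊆ u.support.erase w' := by
          intro x hx
          rw [Finsupp.mem_support_iff, hval] at hx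
          rw [Finset.mem_erase, Finsupp.mem_support_iff]
          refine ⟨?_, right_ne_zero_of_mul hx⟩
          rintro rfl
          simp at hx
        have := Finset.card_le_card hsub
        rw [Finset.card_erase_of_mem (Finsupp.mem_support_iff.2 hw')] at this
        omega
      · rw [hval]
        refine mul_ne_zero ?_ hw
        rw [sub_ne_zero]
        exact_mod_cast hi.symm
    · push Not at h
      have e : bas w = (u w)⁻¹ • u := by
        ext x
        rw [Finsupp.smul_apply, bas, Finsupp.single_apply, smul_eq_mul]
        split_ifs with hx
        · subst hx; rw [inv_mul_cancel₀ hw]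
        · rw [h x (Ne.symm hx), mul_zero]
      rw [e]
      exact Submodule.smul_mem _ _ hu

theorem vv_one : vv n (permW 1) = 1 := by
  rw [vv, Finsupp.finsetSum_apply]
  rw [Finset.sum_eq_single 1]
  · simp [bas]
  · intro τ _ hτ
    have : permW τ ≠ permW 1 := fun e => hτ (permW_inj e)
    simp [bas, this]
  · simp

theorem bas_one_LL : bas (permW (n := n) 1) ∈ LL n :=
  LL_sep _ (vv n) (Submodule.subset_span ⟨[], rfl⟩) le_rfl _ (by rw [vv_one]; exact one_ne_zero)

def meas (w : WW n) : ℤ := ∑ i, (w.1 i - i) ^ 2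

theorem meas_swap (w : WW n) {p q : Fin n} (hpq : (q : ℕ) = p + 1) (h : w.1 q < w.1 p) :
    meas (swapW w p q) < meas w := by
  have hne : p ≠ q := by rintro rfl; omega
  have e1 : meas (swapW w p q) = ∑ i, (w.1 i - (Equiv.swap p q i : Fin n)) ^ 2 := by
    rw [meas, ← Equiv.sum_comp (Equiv.swap p q)]
    refine Finset.sum_congr rfl fun i _ => ?_
    simp [swapW]
  have e2 : meas w - meas (swapW w p q) = 2 * (w.1 p - w.1 q) := by
    rw [e1, meas, ← Finset.sum_sub_distrib, Finset.sum_eq_add p q hne]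
    · rw [Equiv.swap_apply_left, Equiv.swap_apply_right, hpq]; push_cast; ring
    · intro c _ hc
      rw [Equiv.swap_apply_of_ne_of_ne hc.1 hc.2, sub_self]
    · simp
    · simp
  linarith

theorem meas_nonneg (w : WW n) : 0 ≤ meas w := Finset.sum_nonneg fun _ _ => sq_nonneg _

theorem meas_OmWi (w : WW n) : meas (OmWi w) = meas w := by
  rw [meas, meas, ← Equiv.sum_comp (finRotate n) (fun i => (w.1 i - (i : ℤ)) ^ 2)]
  refine Finset.sum_congr rfl fun i _ => ?_
  simp only [OmWi]; ring

theorem LL_descent {w : WW n} (hw : Res w) (k : ℕ) (hk : k + 1 < n)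
    (hd : w.1 (pt n (k + 1)) < w.1 (pt n k))
    (ih : ∀ w' : WW n, Res w' → meas w' < meas w → bas w' ∈ LL n) : bas w ∈ LL n := by
  set p := pt n k with hp
  set q := pt n (k + 1) with hq
  have hpq : (q : ℕ) = p + 1 := by rw [hp, hq, pt_val hk, pt_val (by omega)]
  set w' := swapW w p q with hw'
  have hR : Res w' := by
    by_contra hc
    have := Res_swap hw hpq hc
    omega
  have h1 := ih w' hR (meas_swap w hpq hd)
  have h2 := LL_stable (dS k hk) _ h1
  rw [Sn, ← hp, ← hq, Sop_bas, hw', swapW_swapW, ← hw'] at h2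
  have h3 : (1 + mm n / dd w' p q) • bas w ∈ LL n :=
    (Submodule.add_mem_iff_right _ (Submodule.smul_mem _ _ h1)).1 h2
  refine (Submodule.smul_mem_iff _ ?_).1 h3
  intro h0
  have hne : p ≠ q := fun e => by rw [e] at hpq; omega
  have hdne := dd_ne w' hne
  have h4 : dd w' p q + mm n = 0 := by
    field_simp at h0
    rw [h0, mul_zero]
  have h5 : dd w' p q = (w.1 q : ℂ) - w.1 p := by simp [dd, hw', swapW]
  rw [h5, mm] at h4
  apply Res_ne hw hpq
  have h6 : (w.1 p : ℂ) = w.1 q + n + 1 := by linear_combination -h4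
  exact_mod_cast h6

theorem incr_id {w : WW n} (h : ∀ k, k + 1 < n → w.1 (pt n k) ≤ w.1 (pt n (k + 1)))
    (hl : w.1 (pt n (n - 1)) ≤ w.1 (pt n 0) + n) : w = permW 1 := by
  have hn := NeZero.pos n
  have h' : ∀ k, k + 1 < n → w.1 (pt n k) + 1 ≤ w.1 (pt n (k + 1)) := by
    intro k hk
    have h1 := h k hk
    have h2 : w.1 (pt n k) ≠ w.1 (pt n (k + 1)) := by
      intro e
      exact pt_ne (by omega) hk (by omega) (w.2.1 (pt n k) (pt n (k + 1)) (by rw [e, sub_self]; exact dvd_zero _))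
    omega
  have hl' : w.1 (pt n (n - 1)) < w.1 (pt n 0) + n := by
    refine lt_of_le_of_ne hl ?_
    intro e
    have h1 := w.2.1 (pt n (n - 1)) (pt n 0) ⟨1, by linarith⟩
    rw [h1] at e
    omega
  have hs : ∀ k j, k + j < n → w.1 (pt n k) + j ≤ w.1 (pt n (k + j)) := by
    intro k j
    induction j with
    | zero => intro _; simp
    | succ j ih =>
      intro hj
      have h1 := ih (by omega)
      have h2 := h' (k + j) (by omega)
      push_cast
      rw [← add_assoc k j 1]
      omega
  have he : ∀ i : Fin n, w.1 i = w.1 (pt n 0) + i := by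
    intro i
    have hi := i.2
    have h1 := hs 0 i (by omega)
    have h2 := hs i (n - 1 - i) (by omega)
    rw [zero_add, pt_self] at h1
    have e : (i : ℕ) + (n - 1 - i) = n - 1 := by omega
    rw [e, pt_self] at h2
    omega
  have hsum := w.2.2
  rw [Finset.sum_congr rfl (fun i _ => he i)] at hsum
  rw [Finset.sum_add_distrib, Finset.sum_const, Finset.card_univ, Fintype.card_fin, nsmul_eq_mul] at hsum
  have h0 : w.1 (pt n 0) = 0 := by
    have : (n : ℤ) * w.1 (pt n 0) = 0 := by linarith
    rcases mul_eq_zero.1 this with h | h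
    · omega
    · exact h
  apply Subtype.ext
  funext i
  rw [he i, h0, zero_add]; rfl

theorem LL_all (N : ℕ) : ∀ w : WW n, Res w → meas w < N → bas w ∈ LL n := by
  have hn := NeZero.pos n
  induction N with
  | zero => intro w _ h; exact absurd (meas_nonneg w) (by push_cast at h; omega)
  | succ N ih =>
    intro w hw hm
    have ih' : ∀ w' : WW n, Res w' → meas w' < meas w → bas w' ∈ LL n := by
      intro w' h1 h2
      exact ih w' h1 (by push_cast at hm; omega)
    by_cases h : ∃ k, k + 1 < n ∧ w.1 (pt n (k + 1)) < w.1 (pt n k)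
    · obtain ⟨k, hk, hd⟩ := h
      exact LL_descent hw k hk hd ih'
    push Not at h
    by_cases hl : w.1 (pt n (n - 1)) ≤ w.1 (pt n 0) + n
    · rw [incr_id h hl]; exact bas_one_LL
    · push Not at hl
      have hn2 : 2 ≤ n := by
        by_contra hc
        have : n = 1 := by omega
        subst this
        simp at hl
      have r1 : finRotate n (pt n (n - 2)) = pt n (n - 2 + 1) := by
        rw [← rho_succ (show n - 2 + 1 < n by omega), Equiv.apply_symm_apply]
      have r2 : finRotate n (pt n (n - 2 + 1)) = pt n 0 := by
        have e : n - 2 + 1 = n - 1 := by omega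
        rw [e, ← rho_zero, Equiv.apply_symm_apply]
      have hb : bas (OmWi w) ∈ LL n := by
        refine LL_descent (Res_OmWi hw) (n - 2) (by omega) ?_ (by rw [meas_OmWi]; exact ih')
        simp only [OmWi]
        rw [r1, r2, pt_val (show n - 2 + 1 < n by omega), pt_val (show n - 2 < n by omega), pt_val hn]
        have e : n - 2 + 1 = n - 1 := by omega
        rw [e]
        omega
      have := LL_stable dOm _ hb
      rwa [Omop_bas, OmW_OmWi] at this

theorem bas_mem_span (B : Set (MvPolynomial (Fin n ⊕ Fin n) ℂ))
    (hB : ∀ b ∈ B, ∃ d, b.IsHomogeneous d)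
    (hIB : ∀ p, p ∈ (invIdeal n).restrictScalars ℂ ⊔ Submodule.span ℂ B) (w : WW n) (hw : Res w) :
    bas w ∈ Submodule.span ℂ (Phi Oop (vv n) '' B) := by
  have h1 : LL n ≤ Submodule.span ℂ (Phi Oop (vv n) '' B) :=
    LL_le (FF_le_span O_comm _ (fun f hf => inv_Phi hf) B hB hIB)
  exact h1 (LL_all ((meas w).toNat + 1) w hw (by push_cast; have := meas_nonneg w; omega))

end Gen7
end PM


namespace PM
set_option linter.unusedSectionVars false

section Park
variable {n : ℕ} [NeZero n]

def parkW (a : Fin n → ℕ) (σ : Equiv.Perm (Fin n)) : WW n :=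
  ⟨fun x => ((σ.symm x : Fin n) : ℤ) + n * a (σ.symm x) - ∑ i, (a i : ℤ), by
    intro x y h
    have h1 := (σ.symm x).2
    have h2 := (σ.symm y).2
    have h' : (n : ℤ) ∣ ((σ.symm x : Fin n) : ℤ) - (σ.symm y : Fin n) := by
      obtain ⟨t, ht⟩ := h
      exact ⟨t - a (σ.symm x) + a (σ.symm y), by simp only at ht; linarith⟩
    have h3 := Int.eq_zero_of_abs_lt_dvd h' (by rw [abs_lt]; omega)
    apply σ.symm.injective
    apply Fin.ext; omega, by
    rw [Finset.sum_sub_distrib, Finset.sum_add_distrib, Equiv.sum_comp σ.symm (fun i : Fin n => (i : ℤ)),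
      Equiv.sum_comp σ.symm (fun i : Fin n => (n : ℤ) * a i), ← Finset.mul_sum, Finset.sum_const,
      Finset.card_univ, Fintype.card_fin, nsmul_eq_mul]
    ring⟩

theorem Res_park {a : Fin n → ℕ} {σ : Equiv.Perm (Fin n)} (h : IsParking a σ) : Res (parkW a σ) := by
  rintro x y ⟨t, ht⟩
  obtain ⟨i, rfl⟩ := σ.surjective x
  obtain ⟨j, rfl⟩ := σ.surjective y
  simp only [parkW, Equiv.symm_apply_apply] at ht ⊢
  have b1 := i.2
  have b2 := j.2
  have b3 := (σ i).2
  have b4 := (σ j).2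
  have hd : (n : ℤ) ∣ (i : ℤ) + 1 - j := ⟨t - a i + a j, by linarith⟩
  obtain ⟨s, hs⟩ := hd
  have hs0 : 0 ≤ s := by
    by_contra hc
    have : (n : ℤ) * s ≤ n * (-1) := mul_le_mul_of_nonneg_left (by omega) (by omega)
    omega
  have hs1 : s ≤ 1 := by
    by_contra hc
    have : (n : ℤ) * 2 ≤ n * s := mul_le_mul_of_nonneg_left (by omega) (by omega)
    omega
  rcases (by omega : s = 0 ∨ s = 1) with rfl | rfl
  · have hj : (j : ℕ) = i + 1 := by omega
    have h1 := h.1.2 i j hj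
    rcases Nat.lt_or_ge (a i) (a j) with h2 | h2
    · have h3 : a j = a i + 1 := by omega
      have h4 : (σ i : ℕ) < σ j := h.2 i j hj h3
      rw [h3, hj]; push_cast
      have : (n : ℤ) * (a i + 1) = n * a i + n := by ring
      omega
    · have : (n : ℤ) * a j ≤ n * a i := mul_le_mul_of_nonneg_left (by omega) (by omega)
      omega
  · have h0 := h.1.1 j (by omega)
    rw [h0]
    have : 0 ≤ (n : ℤ) * a i := by positivity
    push_cast
    omega

theorem parkW_min {a : Fin n → ℕ} {σ : Equiv.Perm (Fin n)} (h : IsParking a σ) (x : Fin n) :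
    - ∑ i, (a i : ℤ) ≤ (parkW a σ).1 x := by
  have : 0 ≤ (n : ℤ) * a (σ.symm x) := by positivity
  simp only [parkW]; omega

theorem parkW_zero {a : Fin n → ℕ} {σ : Equiv.Perm (Fin n)} (h : IsParking a σ) :
    (parkW a σ).1 (σ (pt n 0)) = - ∑ i, (a i : ℤ) := by
  have h0 : (pt n 0 : ℕ) = 0 := pt_val (NeZero.pos n)
  simp only [parkW, Equiv.symm_apply_apply]
  rw [h.1.1 _ h0, h0]; simp

theorem parkW_inj {a b : Fin n → ℕ} {σ τ : Equiv.Perm (Fin n)} (ha : IsParking a σ) (hb : IsParking b τ)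
    (h : parkW a σ = parkW b τ) : a = b ∧ σ = τ := by
  have h1 : ∑ i, (a i : ℤ) = ∑ i, (b i : ℤ) := by
    have e1 := parkW_zero ha
    have e2 := parkW_zero hb
    have e3 := parkW_min hb (σ (pt n 0))
    have e4 := parkW_min ha (τ (pt n 0))
    rw [← h] at e3 e2
    rw [e1] at e3
    rw [e2] at e4
    omega
  have h2 : ∀ x, ((σ.symm x : Fin n) : ℤ) + n * a (σ.symm x) = ((τ.symm x : Fin n) : ℤ) + n * b (τ.symm x) := by
    intro x
    have := congrFun (congrArg Subtype.val h) x
    simp only [parkW] at this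
    omega
  have h3 : ∀ x, σ.symm x = τ.symm x := by
    intro x
    have c1 := (σ.symm x).2
    have c2 := (τ.symm x).2
    have h' : (n : ℤ) ∣ ((σ.symm x : Fin n) : ℤ) - (τ.symm x : Fin n) :=
      ⟨b (τ.symm x) - a (σ.symm x), by linarith [h2 x]⟩
    have h3 := Int.eq_zero_of_abs_lt_dvd h' (by rw [abs_lt]; omega)
    apply Fin.ext; omega
  have h4 : σ = τ := by
    have : σ.symm = τ.symm := Equiv.ext h3
    rw [← Equiv.symm_symm σ, this, Equiv.symm_symm]
  refine ⟨?_, h4⟩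
  subst h4
  funext i
  have := h2 (σ i)
  rw [Equiv.symm_apply_apply] at this
  have hn := NeZero.pos n
  have h5 : (n : ℤ) * a i = n * b i := by linarith
  have h6 := mul_left_cancel₀ (by omega : (n : ℤ) ≠ 0) h5
  exact_mod_cast h6

abbrev PP (n : ℕ) := {p : (Fin n → ℕ) × Equiv.Perm (Fin n) // IsParking p.1 p.2}

theorem area_le {a : Fin n → ℕ} (h : IsDyckArea a) (k : ℕ) : k < n → a (pt n k) ≤ k := by
  induction k with
  | zero => intro hk; rw [h.1 _ (pt_val hk)]
  | succ k ih =>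
    intro hk
    have h1 := ih (by omega)
    have h2 := h.2 (pt n k) (pt n (k + 1)) (by rw [pt_val hk, pt_val (by omega)])
    omega

instance : Finite (PP n) := by
  have hf : Set.Finite ((Set.Iic (fun _ : Fin n => n)) ×ˢ (Set.univ : Set (Equiv.Perm (Fin n)))) :=
    (Set.finite_Iic _).prod Set.finite_univ
  refine (hf.subset ?_ : Set.Finite {p : (Fin n → ℕ) × Equiv.Perm (Fin n) | IsParking p.1 p.2}).to_subtype
  rintro ⟨a, σ⟩ h
  refine ⟨fun i => ?_, trivial⟩
  have h0 : IsParking a σ := h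
  have h1 : a i ≤ i := by
    have h3 := area_le h0.1 i i.2
    rwa [pt_self] at h3
  exact h1.trans i.2.le

theorem park_hom (a : Fin n → ℕ) (σ : Equiv.Perm (Fin n)) : ∃ d, (parkMonomial a σ).IsHomogeneous d :=
  ⟨_, IsHomogeneous.prod _ _ _ fun i _ => (isHomogeneous_X_pow _ _).mul (isHomogeneous_X_pow _ _)⟩

theorem park_indep (P0 : PP n) (h : ∀ p, p ∈ (invIdeal n).restrictScalars ℂ ⊔
    Submodule.span ℂ (Set.range (fun P : {P : PP n // P ≠ P0} => parkMonomial P.1.1.1 P.1.1.2))) : False := by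
  classical
  have := Fintype.ofFinite (PP n)
  have hm := bas_mem_span _ (by rintro _ ⟨P, rfl⟩; exact park_hom _ _) h
  rw [← Set.range_comp] at hm
  have hli : LinearIndependent ℂ (fun P : PP n => bas (parkW P.1.1 P.1.2)) := by
    have h1 : LinearIndependent ℂ (fun w : WW n => bas w) := by
      have := (Finsupp.basisSingleOne (R := ℂ) (ι := WW n)).linearIndependent
      rwa [Finsupp.coe_basisSingleOne] at this
    refine h1.comp (fun P : PP n => parkW P.1.1 P.1.2) ?_
    intro P Q hPQ
    have := parkW_inj P.2 Q.2 hPQ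
    exact Subtype.ext (Prod.ext this.1 this.2)
  set g := (Phi Oop (vv n)) ∘ (fun P : {P : PP n // P ≠ P0} => parkMonomial P.1.1.1 P.1.1.2)
  have h2 : Submodule.span ℂ (Set.range (fun P : PP n => bas (parkW P.1.1 P.1.2))) ≤ Submodule.span ℂ (Set.range g) := by
    apply Submodule.span_le.2
    rintro _ ⟨P, rfl⟩
    exact hm _ (Res_park P.2)
  have : FiniteDimensional ℂ (Submodule.span ℂ (Set.range g)) := FiniteDimensional.span_of_finite ℂ (Set.finite_range g)
  have h3 := Submodule.finrank_mono h2
  rw [finrank_span_eq_card hli] at h3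
  have h4 := finrank_range_le_card (R := ℂ) g
  have h5 : Fintype.card {P : PP n // P ≠ P0} < Fintype.card (PP n) :=
    Fintype.card_subtype_lt (x := P0) (by simp)
  have h6 : (Set.range g).finrank ℂ = Module.finrank ℂ (Submodule.span ℂ (Set.range g)) := rfl
  omega

end Park

theorem final (n : ℕ) (hn : 1 ≤ n) :
    LinearIndependent ℂ
      (fun P : {p : (Fin n → ℕ) × Equiv.Perm (Fin n) // IsParking p.1 p.2} =>
        Ideal.Quotient.mk (invIdeal n) (parkMonomial P.1.1 P.1.2)) ∧
    Submodule.span ℂ (Set.range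
      (fun P : {p : (Fin n → ℕ) × Equiv.Perm (Fin n) // IsParking p.1 p.2} =>
        Ideal.Quotient.mk (invIdeal n) (parkMonomial P.1.1 P.1.2))) = ⊤ := by
  haveI : NeZero n := ⟨by omega⟩
  set q : MvPolynomial (Fin n ⊕ Fin n) ℂ →ₗ[ℂ] (MvPolynomial (Fin n ⊕ Fin n) ℂ ⧸ invIdeal n) :=
    (Ideal.Quotient.mkₐ ℂ (invIdeal n)).toLinearMap with hq
  have hqa : ∀ p, q p = Ideal.Quotient.mk (invIdeal n) p := fun p => rfl
  have hset : {f | ∃ a σ, IsParking (n := n) a σ ∧ f = parkMonomial a σ} =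
      Set.range (fun P : PP n => parkMonomial P.1.1 P.1.2) := by
    ext f
    constructor
    · rintro ⟨a, σ, h, rfl⟩; exact ⟨⟨(a, σ), h⟩, rfl⟩
    · rintro ⟨P, rfl⟩; exact ⟨_, _, P.2, rfl⟩
  have hspan := fun p => span_top hn p
  rw [hset] at hspan
  constructor
  · rw [linearIndependent_iff_notMem_span]
    intro P0 hP0
    apply park_indep P0
    intro p
    set W := Submodule.span ℂ (Set.range (fun P : {P : PP n // P ≠ P0} => parkMonomial P.1.1.1 P.1.1.2)) with hW
    have e : (fun P : PP n => Ideal.Quotient.mk (invIdeal n) (parkMonomial P.1.1 P.1.2)) '' (Set.univ \ {P0}) =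
        q '' (Set.range (fun P : {P : PP n // P ≠ P0} => parkMonomial P.1.1.1 P.1.1.2)) := by
      ext f
      constructor
      · rintro ⟨P, hP, rfl⟩
        exact ⟨_, ⟨⟨P, fun e => hP.2 e⟩, rfl⟩, rfl⟩
      · rintro ⟨_, ⟨P, rfl⟩, rfl⟩
        exact ⟨P.1, ⟨trivial, P.2⟩, rfl⟩
    rw [e, ← Submodule.map_span, ← hW] at hP0
    obtain ⟨y, hy, hy2⟩ := hP0
    have h0 : parkMonomial P0.1.1 P0.1.2 ∈ (invIdeal n).restrictScalars ℂ ⊔ W := by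
      rw [hqa] at hy2
      have h1 := Ideal.Quotient.eq.1 hy2.symm
      rw [← sub_add_cancel (parkMonomial P0.1.1 P0.1.2) y]
      exact add_mem (Submodule.mem_sup_left h1) (Submodule.mem_sup_right hy)
    refine (sup_le le_sup_left (Submodule.span_le.2 ?_) : _ ≤ (invIdeal n).restrictScalars ℂ ⊔ W) (hspan p)
    rintro _ ⟨P, rfl⟩
    by_cases hP : P = P0
    · subst hP; exact h0
    · exact Submodule.mem_sup_right (Submodule.subset_span ⟨⟨P, hP⟩, rfl⟩)
  · rw [eq_top_iff]
    rintro x -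
    obtain ⟨p, rfl⟩ := Ideal.Quotient.mk_surjective x
    obtain ⟨f, hf, b, hb, rfl⟩ := Submodule.mem_sup.1 (hspan p)
    have h1 : Ideal.Quotient.mk (invIdeal n) f = 0 := Ideal.Quotient.eq_zero_iff_mem.2 hf
    rw [map_add, h1, zero_add]
    have e : Set.range (fun P : PP n => Ideal.Quotient.mk (invIdeal n) (parkMonomial P.1.1 P.1.2)) =
        q '' (Set.range (fun P : PP n => parkMonomial P.1.1 P.1.2)) := by
      rw [← Set.range_comp]; rfl
    rw [e, ← Submodule.map_span]
    exact ⟨b, hb, rfl⟩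

end PM

/-- The images in `DR_n` of the monomials `∏ i, x_{σ i}^{d_i(P)} y_{σ i}^{a_i}`,
as `P = (a, σ)` ranges over all parking functions of semilength `n`, form a
`ℂ`-vector-space basis of `DR_n`: they are linearly independent and span. -/
theorem parkMonomial_basis (n : ℕ) (hn : 1 ≤ n) :
    LinearIndependent ℂ
      (fun P : {p : (Fin n → ℕ) × Equiv.Perm (Fin n) // IsParking p.1 p.2} =>
        Ideal.Quotient.mk (invIdeal n) (parkMonomial P.1.1 P.1.2)) ∧
    Submodule.span ℂ (Set.range
      (fun P : {p : (Fin n → ℕ) × Equiv.Perm (Fin n) // IsParking p.1 p.2} =>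
        Ideal.Quotient.mk (invIdeal n) (parkMonomial P.1.1 P.1.2))) = ⊤ := by
  exact PM.final n hn
end

section
/- The map sending a Dyck path π of semilength n to the bivariate Vandermonde determinant Δ_{X(π)}(x,y) ∈ ℂ[x_1,…,x_n,y_1,…,y_n], where X(π) = ((d_1,a_1),…,(d_n,a_n)) is the tuple of (dinv, area) pairs of π, is injective; consequently the set { Δ_{X(π)} : π a Dyck path of semilength n } has cardinality equal to the n-th Catalan number. -/
open MvPolynomial

/-- The dinv sequence of a Dyck path encoded by its area sequence:
`d i = #{ j > i | a j = a i or a j = a i - 1 }`. -/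
def dinvSeq {n : ℕ} (a : Fin n → ℕ) (i : Fin n) : ℕ :=
  (Finset.univ.filter (fun j : Fin n => i < j ∧ (a j = a i ∨ a j + 1 = a i))).card

/-- The bivariate Vandermonde determinant `Δ_X(x,y) = det (x_i^{α_j} y_i^{β_j})`
for a tuple `X = ((α_1,β_1),…,(α_n,β_n))`, a polynomial in
`ℂ[x_1,…,x_n,y_1,…,y_n]` where `x i = X (Sum.inl i)` and `y i = X (Sum.inr i)`. -/
noncomputable def biVandermonde (n : ℕ) (E : Fin n → ℕ × ℕ) :
    MvPolynomial (Fin n ⊕ Fin n) ℂ :=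
  Matrix.det (Matrix.of fun i j : Fin n =>
    (X (Sum.inl i) : MvPolynomial (Fin n ⊕ Fin n) ℂ) ^ (E j).1 *
      (X (Sum.inr i) : MvPolynomial (Fin n ⊕ Fin n) ℂ) ^ (E j).2)


theorem dv_mono_eq {n : ℕ} (E : Fin n → ℕ × ℕ) :
    biVandermonde n E = ∑ σ : Equiv.Perm (Fin n), (Equiv.Perm.sign σ : ℤ) •
      monomial (Finsupp.equivFunOnFinite.symm
        (Sum.elim (fun i => (E (σ.symm i)).1) (fun i => (E (σ.symm i)).2))) (1:ℂ) := by
  unfold biVandermonde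
  rw [Matrix.det_apply]
  refine Finset.sum_congr rfl fun σ _ => ?_
  rw [Units.smul_def]
  congr 1
  rw [monomial_eq, Finsupp.prod_fintype _ _ (by simp)]
  simp only [Matrix.of_apply, Fintype.prod_sum_type, Finsupp.equivFunOnFinite_symm_apply_apply,
    Sum.elim_inl, Sum.elim_inr, map_one, one_mul]
  rw [Finset.prod_mul_distrib]
  congr 1
  · rw [← Equiv.prod_comp σ (fun i => (X (Sum.inl i) : MvPolynomial (Fin n ⊕ Fin n) ℂ) ^
      (E (σ.symm i)).1)]
    simp
  · rw [← Equiv.prod_comp σ (fun i => (X (Sum.inr i) : MvPolynomial (Fin n ⊕ Fin n) ℂ) ^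
      (E (σ.symm i)).2)]
    simp

theorem dv_range_sub {n : ℕ} (E F : Fin n → ℕ × ℕ) (hE : Function.Injective E)
    (h : biVandermonde n E = biVandermonde n F) : Set.range E = Set.range F := by
  have h1 := congrArg (coeff (Finsupp.equivFunOnFinite.symm
        (Sum.elim (fun i => (E i).1) (fun i => (E i).2)))) h
  rw [dv_mono_eq, dv_mono_eq, coeff_sum, coeff_sum] at h1
  have key : ∀ (G : Fin n → ℕ × ℕ) (σ : Equiv.Perm (Fin n)),
      Finsupp.equivFunOnFinite.symm
        (Sum.elim (fun i => (G (σ.symm i)).1) (fun i => (G (σ.symm i)).2)) =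
      Finsupp.equivFunOnFinite.symm
        (Sum.elim (fun i => (E i).1) (fun i => (E i).2)) ↔ ∀ i, G (σ.symm i) = E i := by
    intro G σ
    rw [Equiv.apply_eq_iff_eq]
    constructor
    · intro hh i
      exact Prod.ext (congrFun hh (Sum.inl i)) (congrFun hh (Sum.inr i))
    · intro hh
      funext x
      rcases x with i | i <;> simp [hh i]
  rw [Finset.sum_eq_single 1] at h1
  · have h2 : (∑ σ : Equiv.Perm (Fin n), coeff (Finsupp.equivFunOnFinite.symm
        (Sum.elim (fun i => (E i).1) (fun i => (E i).2))) ((Equiv.Perm.sign σ : ℤ) •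
      monomial (Finsupp.equivFunOnFinite.symm
        (Sum.elim (fun i => (F (σ.symm i)).1) (fun i => (F (σ.symm i)).2))) (1:ℂ))) ≠ 0 := by
      rw [← h1, coeff_smul, coeff_monomial, if_pos ((key E 1).2 (fun i => rfl))]
      simp
    obtain ⟨σ, -, hσ⟩ := Finset.exists_ne_zero_of_sum_ne_zero h2
    rw [coeff_smul, coeff_monomial] at hσ
    have h3 := (key F σ).1 (by by_contra hc; simp [hc] at hσ)
    have : E = F ∘ σ.symm := funext fun i => (h3 i).symm
    rw [this, Set.range_comp, σ.symm.surjective.range_eq, Set.image_univ]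
  · intro σ _ hσ
    rw [coeff_smul, coeff_monomial, if_neg, smul_zero]
    intro hc
    apply hσ
    ext i
    have := hE ((key E σ).1 hc (σ i))
    simp at this
    simp [← this]
  · simp

theorem dinv_pair_inj {n : ℕ} (a : Fin n → ℕ) :
    Function.Injective (fun i => (dinvSeq a i, a i)) := by
  have key : ∀ i j, i < j → a i = a j → dinvSeq a j < dinvSeq a i := by
    intro i j hij he
    apply Finset.card_lt_card
    rw [Finset.ssubset_iff_of_subset]
    · exact ⟨j, by simp [hij, he], by simp⟩
    · intro m
      simp only [Finset.mem_filter, Finset.mem_univ, true_and]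
      rintro ⟨h1, h2⟩
      exact ⟨hij.trans h1, he ▸ h2⟩
  intro i j h
  simp only [Prod.mk.injEq] at h
  rcases lt_trichotomy i j with h1 | h1 | h1
  · have := key i j h1 h.2; omega
  · exact h1
  · have := key j i h1 h.2.symm; omega

theorem dinv_castSucc {n : ℕ} (a : Fin (n+1) → ℕ) (i : Fin n) :
    dinvSeq a i.castSucc = dinvSeq (fun j : Fin n => a j.castSucc) i +
      if a (Fin.last n) = a i.castSucc ∨ a (Fin.last n) + 1 = a i.castSucc then 1 else 0 := by
  unfold dinvSeq
  rw [Finset.card_filter, Finset.card_filter, Fin.sum_univ_castSucc]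
  simp [Fin.castSucc_lt_last]

theorem dinv_last {n : ℕ} (a : Fin (n+1) → ℕ) : dinvSeq a (Fin.last n) = 0 := by
  unfold dinvSeq
  rw [Finset.card_eq_zero, Finset.filter_eq_empty_iff]
  intro x _ h
  exact absurd h.1 (not_lt.2 (Fin.le_last x))

theorem zero_mem {n : ℕ} (a : Fin (n+1) → ℕ) (ha : IsDyckArea a) (j : ℕ)
    (hj : j ≤ a (Fin.last n)) : ∃ i, dinvSeq a i = 0 ∧ a i = j := by
  have hne : (Finset.univ.filter (fun i => a i ≤ j)).Nonempty :=
    ⟨0, by simp [ha.1 0 rfl]⟩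
  set i := (Finset.univ.filter (fun i => a i ≤ j)).max' hne with hi
  have him : a i ≤ j := by
    have := Finset.max'_mem _ hne
    rw [← hi] at this
    simpa using this
  have hmax : ∀ m, i < m → j < a m := by
    intro m hm
    by_contra hc
    exact absurd (Finset.le_max' (Finset.univ.filter (fun i => a i ≤ j)) m (by simpa using hc))
      (not_le.2 hm)
  have hij : a i = j := by
    by_cases hl : i = Fin.last n
    · rw [hl] at him ⊢; omega
    · have hlt : (i : ℕ) < n := Fin.val_lt_last hl
      have h1 := hmax ⟨i + 1, by omega⟩ (by simp [Fin.lt_def])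
      have h2 := ha.2 i ⟨i + 1, by omega⟩ rfl
      omega
  refine ⟨i, ?_, hij⟩
  unfold dinvSeq
  rw [Finset.card_eq_zero, Finset.filter_eq_empty_iff]
  intro x _ h
  have := hmax x h.1
  omega

theorem last_le {n : ℕ} (a b : Fin (n+1) → ℕ) (hb : IsDyckArea b)
    (h : Set.range (fun i => (dinvSeq a i, a i)) = Set.range (fun i => (dinvSeq b i, b i))) :
    b (Fin.last n) ≤ a (Fin.last n) := by
  by_contra hc
  obtain ⟨i, h0, h1⟩ := zero_mem b hb (a (Fin.last n) + 1) (by omega)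
  have hm : (0, a (Fin.last n) + 1) ∈ Set.range (fun i => (dinvSeq a i, a i)) := by
    rw [h]; exact ⟨i, by simp [h0, h1]⟩
  obtain ⟨m, hm⟩ := hm
  simp only [Prod.mk.injEq] at hm
  induction m using Fin.lastCases with
  | last => omega
  | cast m =>
    rw [dinv_castSucc, if_pos (Or.inr hm.2.symm)] at hm
    omega

theorem init_range {n : ℕ} (a : Fin (n+1) → ℕ) (k : ℕ) (hk : a (Fin.last n) = k) (p : ℕ × ℕ) :
    p ∈ Set.range (fun i => (dinvSeq (fun j : Fin n => a j.castSucc) i, a i.castSucc)) ↔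
      (p.1 + (if k = p.2 ∨ k + 1 = p.2 then 1 else 0), p.2) ∈
        Set.range (fun i => (dinvSeq a i, a i)) := by
  obtain ⟨d, j⟩ := p
  subst hk
  simp only [Set.mem_range, Prod.mk.injEq]
  constructor
  · rintro ⟨i, h1, h2⟩
    refine ⟨i.castSucc, ?_, h2⟩
    rw [dinv_castSucc, h1, h2]
  · rintro ⟨i, h1, h2⟩
    induction i using Fin.lastCases with
    | last => rw [dinv_last] at h1; simp [h2] at h1
    | cast i =>
      refine ⟨i, ?_, h2⟩
      rw [dinv_castSucc, h2] at h1
      omega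

theorem dyck_recon : ∀ {n : ℕ} (a b : Fin n → ℕ), IsDyckArea a → IsDyckArea b →
    Set.range (fun i => (dinvSeq a i, a i)) = Set.range (fun i => (dinvSeq b i, b i)) → a = b := by
  intro n
  induction n with
  | zero => intro a b _ _ _; exact Subsingleton.elim _ _
  | succ n ih =>
    intro a b ha hb h
    have hl : a (Fin.last n) = b (Fin.last n) :=
      le_antisymm (last_le b a ha h.symm) (last_le a b hb h)
    have hi : ∀ c : Fin (n+1) → ℕ, IsDyckArea c → IsDyckArea (fun j : Fin n => c j.castSucc) :=
      fun c hc => ⟨fun i hi => hc.1 _ hi, fun i j hij => hc.2 _ _ hij⟩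
    have := ih _ _ (hi a ha) (hi b hb) (by
      ext p
      rw [init_range a _ hl, init_range b _ rfl, h])
    funext i
    induction i using Fin.lastCases with
    | last => exact hl
    | cast i => exact congrFun this i

def treeArea : BinaryTree Unit → List ℕ
  | .nil => []
  | .node _ l r => 0 :: ((treeArea l).map (· + 1) ++ treeArea r)

/-- list version of the area condition -/
def ListDyck (l : List ℕ) : Prop :=
  (∀ x ∈ l.head?, x = 0) ∧ l.IsChain (fun x y => y ≤ x + 1)

theorem treeArea_length (t : BinaryTree Unit) : (treeArea t).length = t.numNodes := by
  induction t with
  | nil => rfl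
  | node _ l r h1 h2 => simp [treeArea, BinaryTree.numNodes, h1, h2]

theorem treeArea_dyck (t : BinaryTree Unit) : ListDyck (treeArea t) := by
  induction t with
  | nil => simp [treeArea, ListDyck]
  | node _ l r h1 h2 =>
    obtain ⟨h1, h1'⟩ := h1
    obtain ⟨h2, h2'⟩ := h2
    refine ⟨by simp [treeArea], ?_⟩
    rw [treeArea, List.isChain_cons, List.isChain_append, List.isChain_map]
    refine ⟨?_, ?_, h2', ?_⟩
    · intro y hy
      rw [List.head?_append] at hy
      cases hl : treeArea l with
      | nil => simp [hl] at hy; have := h2 y hy; omega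
      | cons c t => 
        have := h1 c (by simp [hl])
        simp [hl] at hy; omega
    · simpa using h1'
    · intro x _ y hy
      have := h2 y hy
      omega

theorem split_unique (a b c d : List ℕ) (hb : ∀ x ∈ b.head?, x = 0) (hd : ∀ x ∈ d.head?, x = 0)
    (h : a.map (· + 1) ++ b = c.map (· + 1) ++ d) : a = c ∧ b = d := by
  induction a generalizing c with
  | nil =>
    cases c with
    | nil => simpa using h
    | cons y c =>
      simp at h
      have := hb (y+1) (by simp [h])
      omega
  | cons x a ih =>
    cases c with
    | nil =>
      simp at h
      have := hd (x+1) (by simp [← h])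
      omega
    | cons y c =>
      simp at h
      have := ih c h.2
      simp [h.1, this]

theorem treeArea_inj : Function.Injective treeArea := by
  intro s
  induction s with
  | nil => intro t h; cases t <;> simp [treeArea] at h ⊢
  | node _ l r h1 h2 =>
    intro t h
    cases t with
    | nil => simp [treeArea] at h
    | node _ l' r' =>
      simp only [treeArea, List.cons.injEq, true_and] at h
      have := split_unique _ _ _ _ (treeArea_dyck r).1 (treeArea_dyck r').1 h
      rw [h1 this.1, h2 this.2]

theorem split_exists (l : List ℕ) : ∃ a b : List ℕ, l = a.map (· + 1) ++ b ∧ ∀ x ∈ b.head?, x = 0 := by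
  induction l with
  | nil => exact ⟨[], [], by simp⟩
  | cons x l ih =>
    cases x with
    | zero => exact ⟨[], 0 :: l, by simp⟩
    | succ x =>
      obtain ⟨a, b, h1, h2⟩ := ih
      exact ⟨x :: a, b, by simp [h1], h2⟩

theorem treeArea_surj : ∀ (n : ℕ) (l : List ℕ), l.length = n → ListDyck l → ∃ t, treeArea t = l := by
  intro n
  induction n using Nat.strong_induction_on with
  | _ n ih =>
    intro l hl hd
    cases l with
    | nil => exact ⟨.nil, rfl⟩
    | cons x l =>
      obtain ⟨h0, hc⟩ := hd
      have hx : x = 0 := h0 x (by simp)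
      subst hx
      obtain ⟨a, b, rfl, hb⟩ := split_exists l
      rw [List.isChain_cons, List.isChain_append, List.isChain_map] at hc
      obtain ⟨c1, c2, c3, -⟩ := hc
      simp at hl
      obtain ⟨s, hs⟩ := ih a.length (by omega) a rfl ⟨by
        intro y hy
        have := c1 (y+1) (by
          cases a with
          | nil => simp at hy
          | cons z a => simpa using hy)
        omega, by simpa using c2⟩
      obtain ⟨t, ht⟩ := ih b.length (by omega) b rfl ⟨hb, c3⟩
      exact ⟨.node () s t, by simp [treeArea, hs, ht]⟩

theorem listDyck_ofFn {n : ℕ} (a : Fin n → ℕ) : ListDyck (List.ofFn a) ↔ IsDyckArea a := by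
  unfold ListDyck IsDyckArea
  rw [List.isChain_iff_getElem]
  refine and_congr ?_ ?_
  · cases n with
    | zero => simp
    | succ n =>
      simp only [List.ofFn_succ, List.head?_cons, Option.mem_def, Option.some.injEq, forall_eq']
      constructor
      · intro h i hi
        rwa [show i = 0 from Fin.ext hi]
      · intro h
        exact h 0 rfl
  · simp only [List.getElem_ofFn]
    constructor
    · intro h i j hij
      have := h i (by simp; omega)
      convert this using 2
      exact Fin.ext hij
    · intro h i hi
      exact h _ _ rfl

theorem dyck_card (n : ℕ) : Nat.card {a : Fin n → ℕ // IsDyckArea a} = catalan n := by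
  have hinj : Function.Injective (fun a : {a : Fin n → ℕ // IsDyckArea a} => List.ofFn a.1) :=
    fun a b h => Subtype.ext (List.ofFn_injective h)
  rw [← Nat.card_range_of_injective hinj]
  have : Set.range (fun a : {a : Fin n → ℕ // IsDyckArea a} => List.ofFn a.1) =
      treeArea '' (BinaryTree.treesOfNumNodesEq n : Set (BinaryTree Unit)) := by
    ext l
    simp only [Set.mem_range, Set.mem_image, Finset.mem_coe, BinaryTree.mem_treesOfNumNodesEq]
    constructor
    · rintro ⟨a, rfl⟩
      obtain ⟨t, ht⟩ := treeArea_surj n (List.ofFn a.1) (by simp) ((listDyck_ofFn _).2 a.2)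
      exact ⟨t, by rw [← treeArea_length, ht]; simp, ht⟩
    · rintro ⟨t, rfl, rfl⟩
      rw [← treeArea_length]
      exact ⟨⟨fun i => (treeArea t)[i], (listDyck_ofFn _).1 (by
        simpa using treeArea_dyck t)⟩, by simp⟩
  rw [this, Nat.card_coe_set_eq, Set.ncard_image_of_injective _ treeArea_inj, Set.ncard_coe_finset,
    BinaryTree.treesOfNumNodesEq_card_eq_catalan]

/-- The map `π ↦ Δ_{X(π)}` from Dyck paths of semilength `n` to bivariate
Vandermonde determinants is injective, and the resulting set of polynomials
has cardinality the `n`-th Catalan number. -/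
theorem biVandermonde_dyck_injective_card (n : ℕ) :
    Function.Injective (fun π : {a : Fin n → ℕ // IsDyckArea a} =>
      biVandermonde n (fun i => (dinvSeq π.1 i, π.1 i))) ∧
    Nat.card (Set.range (fun π : {a : Fin n → ℕ // IsDyckArea a} =>
      biVandermonde n (fun i => (dinvSeq π.1 i, π.1 i)))) = catalan n := by
  have hinj : Function.Injective (fun π : {a : Fin n → ℕ // IsDyckArea a} =>
      biVandermonde n (fun i => (dinvSeq π.1 i, π.1 i))) := fun a b h =>
    Subtype.ext (dyck_recon a.1 b.1 a.2 b.2 (dv_range_sub _ _ (dinv_pair_inj a.1) h))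
  exact ⟨hinj, by rw [Nat.card_range_of_injective hinj, dyck_card]⟩
end

section
/- For n ≥ 1, the family of bivariate Vandermonde determinants (Δ_{X(π)})_π, indexed by the Dyck paths π of semilength n with X(π) = ((d_1,a_1),…,(d_n,a_n)) the tuple of (dinv, area) pairs of π, is linearly independent over ℂ in the polynomial ring ℂ[x_1,…,x_n,y_1,…,y_n]. -/
open MvPolynomial

theorem dyck_hit {n : ℕ} {a : Fin n → ℕ} (ha : IsDyckArea a) (p : Fin n) (v : ℕ) (hp : a p < v) :
    ∀ m : ℕ, ∀ q : Fin n, (q : ℕ) = p + m → v ≤ a q → ∃ r : Fin n, p ≤ r ∧ r < q ∧ a r + 1 = v := by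
  intro m
  induction m with
  | zero =>
    intro q hq hv
    have : q = p := Fin.ext (by simpa using hq)
    subst this
    omega
  | succ m ih =>
    intro q hq hv
    have hlt : (p : ℕ) + m < n := by have := q.2; omega
    have hs := ha.2 ⟨p + m, hlt⟩ q (by simp; omega)
    by_cases h : v ≤ a ⟨p + m, hlt⟩
    · obtain ⟨r, h1, h2, h3⟩ := ih ⟨p + m, hlt⟩ rfl h
      refine ⟨r, h1, ?_, h3⟩
      rw [Fin.lt_def] at h2 ⊢
      simp at h2
      omega
    · refine ⟨⟨p + m, hlt⟩, ?_, ?_, by omega⟩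
      · rw [Fin.le_def]; simp
      · rw [Fin.lt_def]; simp; omega

/-- number of letters in `{l-1,l}` at positions at most `i` -/
def cntLe {n : ℕ} (a : Fin n → ℕ) (l : ℕ) (i : Fin n) : ℕ :=
  (Finset.univ.filter (fun j : Fin n => j ≤ i ∧ (a j = l ∨ a j + 1 = l))).card

theorem cntLe_add {n : ℕ} (a : Fin n → ℕ) (i : Fin n) :
    cntLe a (a i) i + dinvSeq a i =
      (Finset.univ.filter (fun j : Fin n => a j = a i ∨ a j + 1 = a i)).card := by
  unfold cntLe dinvSeq
  rw [← Finset.card_union_of_disjoint]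
  · congr 1
    ext j
    simp only [Finset.mem_union, Finset.mem_filter, Finset.mem_univ, true_and]
    have := le_or_gt j i
    tauto
  · rw [Finset.disjoint_left]
    intro j
    simp only [Finset.mem_filter, Finset.mem_univ, true_and]
    rintro ⟨h, -⟩ ⟨h', -⟩
    exact absurd h' (not_lt.mpr h)

theorem dyck_aux {n : ℕ} {a b : Fin n → ℕ} (ha : IsDyckArea a)
    (σ : Equiv.Perm (Fin n)) (h1 : ∀ i, a i = b (σ i)) (h2 : ∀ i, dinvSeq a i = dinvSeq b (σ i))
    (p : Fin n) (hp : ∀ i < p, a i = b i) : ¬ a p < b p := by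
  intro hlt
  obtain ⟨q, rfl⟩ : ∃ q, p = σ q := ⟨σ.symm p, by simp⟩
  set p := σ q with hpq
  have hal : a q = b p := h1 q
  have hd : dinvSeq a q = dinvSeq b p := h2 q
  have hN : (Finset.univ.filter (fun j : Fin n => a j = a q ∨ a j + 1 = a q)).card =
      (Finset.univ.filter (fun j : Fin n => b j = b p ∨ b j + 1 = b p)).card := by
    apply Finset.card_bij (fun i _ => σ i)
    · intro i hi
      simpa [h1] using hi
    · intro i _ j _ h
      exact σ.injective h
    · intro i hi
      refine ⟨σ.symm i, ?_, by simp⟩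
      simpa [h1] using hi
  have e1 := cntLe_add a q
  have e2 := cntLe_add b p
  have hc : cntLe a (b p) q = cntLe b (b p) p := by rw [hal] at *; omega
  have hb : cntLe b (b p) p =
      (Finset.univ.filter (fun j : Fin n => j < p ∧ (a j = b p ∨ a j + 1 = b p))).card + 1 := by
    rw [← Finset.card_insert_of_notMem (a := p) (by simp)]
    unfold cntLe
    congr 1
    ext j
    simp only [Finset.mem_insert, Finset.mem_filter, Finset.mem_univ, true_and]
    rcases lt_trichotomy j p with h | h | h
    · rw [hp j h]; simp [h, h.le, h.ne]
    · simp [h]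
    · simp [h.not_ge, h.not_gt, h.ne']
  rcases lt_trichotomy q p with h | h | h
  · have : cntLe a (b p) q ≤
      (Finset.univ.filter (fun j : Fin n => j < p ∧ (a j = b p ∨ a j + 1 = b p))).card := by
      apply Finset.card_le_card
      intro j
      simp only [Finset.mem_filter, Finset.mem_univ, true_and]
      rintro ⟨h3, h4⟩
      exact ⟨h3.trans_lt h, h4⟩
    omega
  · rw [h] at hal; omega
  · obtain ⟨r, hr1, hr2, hr3⟩ := dyck_hit ha p (b p) hlt (q - p) q
      (by rw [Fin.lt_def] at h; omega) hal.ge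
    have : (Finset.univ.filter (fun j : Fin n => j < p ∧ (a j = b p ∨ a j + 1 = b p))).card + 1 + 1
        ≤ cntLe a (b p) q := by
      rw [← Finset.card_insert_of_notMem (a := r) (by simp [hr1.not_gt]),
        ← Finset.card_insert_of_notMem (a := q) (by simp [hr2.ne', h.not_gt])]
      apply Finset.card_le_card
      intro j
      simp only [Finset.mem_insert, Finset.mem_filter, Finset.mem_univ, true_and]
      rintro (rfl | rfl | ⟨h3, h4⟩)
      · exact ⟨le_rfl, Or.inl hal⟩
      · exact ⟨hr2.le, Or.inr hr3⟩
      · exact ⟨(h3.trans h).le, h4⟩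
    omega

theorem dyck_inj {n : ℕ} {a b : Fin n → ℕ} (ha : IsDyckArea a) (hb : IsDyckArea b)
    (σ : Equiv.Perm (Fin n)) (h1 : ∀ i, a i = b (σ i)) (h2 : ∀ i, dinvSeq a i = dinvSeq b (σ i)) :
    a = b := by
  have key : ∀ m : ℕ, ∀ p : Fin n, (p : ℕ) = m → a p = b p := by
    intro m
    induction m using Nat.strong_induction_on with
    | _ m ih =>
      intro p hp
      have hpre : ∀ i < p, a i = b i := fun i hi => ih i (by rw [← hp]; exact hi) i rfl
      have t1 := dyck_aux ha σ h1 h2 p hpre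
      have t2 := dyck_aux hb σ.symm (fun i => by simp [h1]) (fun i => by simp [h2]) p
        (fun i hi => (hpre i hi).symm)
      omega
  exact funext fun p => key p p rfl

theorem dinv_lt {n : ℕ} (a : Fin n → ℕ) {i j : Fin n} (hij : i < j) (h : a i = a j) :
    dinvSeq a j < dinvSeq a i := by
  unfold dinvSeq
  apply Finset.card_lt_card
  rw [Finset.ssubset_iff_of_subset]
  · exact ⟨j, by simp [hij, h], by simp⟩
  · intro k
    simp only [Finset.mem_filter, Finset.mem_univ, true_and, h]
    rintro ⟨h1, h2⟩
    exact ⟨hij.trans h1, h2⟩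

theorem pair_inj {n : ℕ} (a : Fin n → ℕ) {i j : Fin n} (h : a i = a j)
    (hd : dinvSeq a i = dinvSeq a j) : i = j := by
  rcases lt_trichotomy i j with h1 | h1 | h1
  · have := dinv_lt a h1 h; omega
  · exact h1
  · have := dinv_lt a h1 h.symm; omega

/-- exponent of the monomial `∏ x_i^{α_i} y_i^{β_i}` -/
noncomputable def expo {n : ℕ} (E : Fin n → ℕ × ℕ) : (Fin n ⊕ Fin n) →₀ ℕ :=
  Finsupp.equivFunOnFinite.symm (Sum.elim (fun i => (E i).1) (fun i => (E i).2))

theorem expo_inj {n : ℕ} {E F : Fin n → ℕ × ℕ} (h : expo E = expo F) : E = F := by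
  have h' := Finsupp.equivFunOnFinite.symm.injective h
  funext i
  have h1 := congrFun h' (Sum.inl i)
  have h2 := congrFun h' (Sum.inr i)
  exact Prod.ext h1 h2

theorem prod_eq_monomial {n : ℕ} (E : Fin n → ℕ × ℕ) :
    ∏ i, ((X (Sum.inl i) : MvPolynomial (Fin n ⊕ Fin n) ℂ) ^ (E i).1 *
      (X (Sum.inr i) : MvPolynomial (Fin n ⊕ Fin n) ℂ) ^ (E i).2) = monomial (expo E) 1 := by
  rw [monomial_eq, Finsupp.prod_fintype _ _ (by simp), Fintype.prod_sum_type,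
    Finset.prod_mul_distrib]
  simp [expo]

theorem coeff_biVandermonde {n : ℕ} (E : Fin n → ℕ × ℕ) (m : (Fin n ⊕ Fin n) →₀ ℕ) :
    coeff m (biVandermonde n E) =
      ∑ σ : Equiv.Perm (Fin n), ((Equiv.Perm.sign σ : ℤ) : ℂ) *
        (if expo (E ∘ σ) = m then 1 else 0) := by
  unfold biVandermonde
  rw [← Matrix.det_transpose, Matrix.det_apply', coeff_sum]
  refine Finset.sum_congr rfl fun σ _ => ?_
  have := prod_eq_monomial (E ∘ σ)
  simp only [Function.comp] at this
  simp only [Matrix.transpose_apply, Matrix.of_apply, this]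
  rw [← map_intCast (C : ℂ →+* MvPolynomial (Fin n ⊕ Fin n) ℂ), coeff_C_mul, coeff_monomial]

/-- The family of bivariate Vandermonde determinants `Δ_{X(π)}`, indexed by
Dyck paths `π` of semilength `n`, is linearly independent over `ℂ` in
`ℂ[x_1,…,x_n,y_1,…,y_n]`. -/
theorem biVandermonde_dyck_linearIndependent (n : ℕ) (hn : 1 ≤ n) :
    LinearIndependent ℂ (fun π : {a : Fin n → ℕ // IsDyckArea a} =>
      biVandermonde n (fun i => (dinvSeq π.1 i, π.1 i))) := by
  classical
  rw [linearIndependent_iff']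
  intro s g hs π hπ
  have hc := congrArg (coeff (expo (fun i => (dinvSeq π.1 i, π.1 i)))) hs
  rw [coeff_sum, coeff_zero, Finset.sum_eq_single π] at hc
  · rw [coeff_smul, coeff_biVandermonde, Finset.sum_eq_single 1] at hc
    · simpa [Function.comp_def] using hc
    · intro σ _ hσ
      rw [if_neg, mul_zero]
      intro h
      have h' := expo_inj h
      apply hσ
      ext1 i
      have hi := congrFun h' i
      simp only [Function.comp, Prod.mk.injEq] at hi
      exact pair_inj π.1 hi.2 hi.1
    · simp
  · intro ρ _ hρ
    rw [coeff_smul, coeff_biVandermonde, Finset.sum_eq_zero, smul_zero]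
    intro σ _
    rw [if_neg, mul_zero]
    intro h
    have h' := expo_inj h
    apply hρ
    apply Subtype.ext
    refine (dyck_inj π.2 ρ.2 σ (fun i => ?_) (fun i => ?_)).symm
    · exact (congrArg Prod.snd (congrFun h' i)).symm
    · exact (congrArg Prod.fst (congrFun h' i)).symm
  · intro h
    exact absurd hπ h
end
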